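/- Let (v,u,θ) be a classical solution of the one-dimensional compressible Navier–Stokes system on ℝ whose initial data are (M,m)-bounded for some M, m > 0 and which is K-volume-bounded for some K ≥ 1. Then lim_{t→∞} ( ‖u_x(·,t)‖_{L²(ℝ)} + ‖θ_x(·,t)‖_{L²(ℝ)} ) = 0. -/

import Mathlib

/-!
The proof is an energy method: every gradient is first shown to be square integrable over
space-time, and then its spatial norm is shown to have increments dominated by an integrable
function of time. A nonnegative integrable function with this property tends to zero
(`decay_of_increment`). The volume bound `K⁻¹ ≤ v ≤ K` is used throughout.

* *Entropy.* The identity for `u²/2 + R (v - 1 - log v) + c_v (θ - 1 - log θ)` bounds `‖u‖`,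
  `‖v - 1‖` and the entropy of `θ` for all times, and makes `V = ∫ (θ_x/θ)²` integrable in time
  (`basic_energy`). By the fundamental theorem of calculus applied to a function growing like `√θ`,
  `θ ≤ C V` wherever `θ ≥ 4` (`θ_sup`).
* *Viscous dissipation.* Replacing the multiplier `1/θ` by `1/θ + c ((1 - 4/θ)₊)²` keeps the
  conduction term dissipative, bounds the coefficient of `u_x²` from below, and leaves an error at
  most `C V ent(θ)`; hence `∫∫ u_x² < ∞` (`ux_integrable`).
* *Temperature in `L²`.* With `ω = c_v θ + u²/2`, a truncated quadratic functional
  `∫ Ph((ω - 8 c_v)₊) + (A/4) u⁴` satisfies a differential inequality with error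
  `C V (1 + J) + C ‖u_x‖²`, and is therefore bounded (`J_bdd`). This gives `sup ‖θ - 1‖ < ∞` and
  `∫∫ θ_x² < ∞` (`θ_L2_bdd`, `θx_integrable`).
* *Volume gradient.* With `z = μ log v` one has `z_t = μ u_x / v`, so that `½‖z_x‖² - ⟨u, z_x⟩` is
  dissipated by the pressure at the rate `∫ θ v_x²`. Hence `sup ‖v_x‖ < ∞` and
  `∫∫ θ v_x² < ∞` (`vx_bdd`).
* *Gradients.* The evolution of `‖u_x‖²` and `‖θ_x‖²` is obtained by testing with `u_xx` and `θ_xx`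
  (`grad_identity`); Agmon's inequality absorbs the top order terms, and the remainder is integrable
  in time by the previous steps (`ux_decay`, `θx_decay`).

The solution is only differentiable in time pointwise, with second derivatives in `L²` at almost
every time. Integrated identities are therefore derived from the fundamental theorem of calculus at
fixed `x` followed by Fubini, and those involving time derivatives of `v_x`, `u_x` or `θ_x` from
difference quotients in `x`. The structure `GasFlow` records a solution in the form used there.
-/

open MeasureTheory Filter Set

noncomputable section

/-- Partial derivative in the spatial variable. -/
def pdx (f : ℝ → ℝ → ℝ) (x t : ℝ) : ℝ := deriv (fun y => f y t) x

/-- Partial derivative in the time variable. -/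
def pdt (f : ℝ → ℝ → ℝ) (x t : ℝ) : ℝ := deriv (fun s => f x s) t

/-- The `L²(ℝ)` norm, valued in `ℝ≥0∞`. -/
def L2 (f : ℝ → ℝ) : ENNReal := eLpNorm f 2 volume

/-- The `H¹(ℝ)` norm, valued in `ℝ≥0∞`. -/
def H1 (f : ℝ → ℝ) : ENNReal := L2 f + L2 (deriv f)

/-- The `H²(ℝ)` norm, valued in `ℝ≥0∞`. -/
def H2 (f : ℝ → ℝ) : ENNReal := L2 f + L2 (deriv f) + L2 (deriv (deriv f))

/-- A classical solution of the 1-D compressible Navier–Stokes system in Lagrangian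
coordinates on `ℝ`, together with the regularity and far-field conditions. -/
structure IsClassicalSolution (μ κ R cv : ℝ) (v u θ : ℝ → ℝ → ℝ) : Prop where
  v_pos : ∀ x t : ℝ, 0 ≤ t → 0 < v x t
  θ_pos : ∀ x t : ℝ, 0 ≤ t → 0 < θ x t
  smooth_x_v : ∀ t : ℝ, 0 ≤ t → ContDiff ℝ 2 (fun x => v x t)
  smooth_x_u : ∀ t : ℝ, 0 ≤ t → ContDiff ℝ 2 (fun x => u x t)
  smooth_x_θ : ∀ t : ℝ, 0 ≤ t → ContDiff ℝ 2 (fun x => θ x t)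
  smooth_t_v : ∀ x t : ℝ, 0 ≤ t → DifferentiableAt ℝ (fun s => v x s) t
  smooth_t_u : ∀ x t : ℝ, 0 ≤ t → DifferentiableAt ℝ (fun s => u x s) t
  smooth_t_θ : ∀ x t : ℝ, 0 ≤ t → DifferentiableAt ℝ (fun s => θ x s) t
  eq_mass : ∀ x t : ℝ, 0 ≤ t → pdt v x t = pdx u x t
  eq_momentum : ∀ x t : ℝ, 0 ≤ t →
    pdt u x t + pdx (fun y s => R * θ y s / v y s) x t
      = μ * pdx (fun y s => pdx u y s / v y s) x t
  eq_energy : ∀ x t : ℝ, 0 ≤ t →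
    cv * pdt θ x t + (R * θ x t / v x t) * pdx u x t
      = κ * pdx (fun y s => pdx θ y s / v y s) x t + μ * (pdx u x t) ^ 2 / v x t
  reg_H1 : ∀ T : ℝ, 0 ≤ T → ∃ B : ℝ, ∀ t ∈ Icc (0 : ℝ) T,
    H1 (fun x => v x t - 1) + H1 (fun x => u x t) + H1 (fun x => θ x t - 1)
      ≤ ENNReal.ofReal B
  reg_H2 : ∀ T : ℝ, 0 < T →
    (∫⁻ t in Icc (0 : ℝ) T,
      (H2 (fun x => u x t) ^ 2 + H2 (fun x => θ x t - 1) ^ 2)) < ⊤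
  farfield_v : ∀ t : ℝ, 0 ≤ t → Tendsto (fun x => v x t) (cocompact ℝ) (nhds 1)
  farfield_u : ∀ t : ℝ, 0 ≤ t → Tendsto (fun x => u x t) (cocompact ℝ) (nhds 0)
  farfield_θ : ∀ t : ℝ, 0 ≤ t → Tendsto (fun x => θ x t) (cocompact ℝ) (nhds 1)

/-- The initial data of `(v, u, θ)` are `(M, m)`-bounded. -/
def InitBounded (M m : ℝ) (v u θ : ℝ → ℝ → ℝ) : Prop :=
  H1 (fun x => v x 0 - 1) + H1 (fun x => u x 0) + H1 (fun x => θ x 0 - 1)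
      ≤ ENNReal.ofReal M
    ∧ (∀ x : ℝ, m ≤ v x 0) ∧ (∀ x : ℝ, m ≤ θ x 0)

/-- The solution is `K`-volume-bounded. -/
def VolBounded (K : ℝ) (v : ℝ → ℝ → ℝ) : Prop :=
  ∀ x t : ℝ, 0 ≤ t → K⁻¹ ≤ v x t ∧ v x t ≤ K

end

/-! ### One-variable inequalities and Lebesgue-integral tools -/

/-- Cauchy–Schwarz in `L²`, without square roots. -/
lemma sq_integral_mul_le {α : Type*} [MeasurableSpace α] {ν : Measure α} {f g : α → ℝ}
    (hf : MemLp f 2 ν) (hg : MemLp g 2 ν) :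
    (∫ x, f x * g x ∂ν) ^ 2 ≤ (∫ x, f x ^ 2 ∂ν) * ∫ x, g x ^ 2 ∂ν := by
  have hfg : Integrable (fun x => f x * g x) ν := hf.integrable_mul hg
  have h : ∀ s : ℝ, 0 ≤ (∫ x, f x ^ 2 ∂ν) * (s * s) + (2 * ∫ x, f x * g x ∂ν) * s
      + ∫ x, g x ^ 2 ∂ν := by
    intro s
    have h1 : ∫ x, (s * f x + g x) ^ 2 ∂ν = (∫ x, f x ^ 2 ∂ν) * (s * s)
        + (2 * ∫ x, f x * g x ∂ν) * s + ∫ x, g x ^ 2 ∂ν := by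
      have : ∀ x, (s * f x + g x) ^ 2 = (s * s) * f x ^ 2 + (2 * s) * (f x * g x) + g x ^ 2 := by
        intro x; ring
      simp_rw [this]
      rw [integral_add, integral_add, integral_const_mul, integral_const_mul]
      · ring
      · exact hf.integrable_sq.const_mul _
      · exact hfg.const_mul _
      · exact (hf.integrable_sq.const_mul _).add (hfg.const_mul _)
      · exact hg.integrable_sq
    rw [← h1]
    exact integral_nonneg fun x => sq_nonneg _
  have := discrim_le_zero h
  unfold discrim at this
  nlinarith

lemma integrable_mul_of_memLp {α : Type*} [MeasurableSpace α] {ν : Measure α} {f g : α → ℝ}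
    (hf : MemLp f 2 ν) (hg : MemLp g 2 ν) : Integrable (fun x => f x * g x) ν :=
  hf.integrable_mul hg

/-- Multiplication by a bounded function preserves `L²`. -/
lemma memLp_bdd_mul {α : Type*} [MeasurableSpace α] {ν : Measure α} {b f : α → ℝ}
    (hf : MemLp f 2 ν) (hb : AEStronglyMeasurable b ν) {C : ℝ} (h : ∀ᵐ x ∂ν, |b x| ≤ C) :
    MemLp (fun x => b x * f x) 2 ν := by
  refine hf.of_le_mul (c := C) (hb.mul hf.1) ?_
  filter_upwards [h] with x hx
  rw [Real.norm_eq_abs, Real.norm_eq_abs, abs_mul]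
  gcongr

/-- An a.e. convergent sequence in `L²` whose norms do not exceed that of the limit
converges strongly. This follows from Fatou's lemma and the parallelogram law. -/
lemma tendsto_integral_sq_sub {α : Type*} [MeasurableSpace α] {ν : Measure α}
    {f : ℕ → α → ℝ} {g : α → ℝ} (hf : ∀ n, MemLp (f n) 2 ν) (hg : MemLp g 2 ν)
    (hlim : ∀ᵐ x ∂ν, Tendsto (fun n => f n x) atTop (nhds (g x)))
    (hle : ∀ n, ∫ x, f n x ^ 2 ∂ν ≤ ∫ x, g x ^ 2 ∂ν) :
    Tendsto (fun n => ∫ x, (f n x - g x) ^ 2 ∂ν) atTop (nhds 0) := by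
  set I := ∫ x, g x ^ 2 ∂ν with hI
  have hs : ∀ n, ∫ x, (f n x - g x) ^ 2 ∂ν ≤ 4 * I - ∫ x, (f n x + g x) ^ 2 ∂ν := by
    intro n
    have h1 : ∫ x, (f n x - g x) ^ 2 ∂ν + ∫ x, (f n x + g x) ^ 2 ∂ν
        = 2 * ∫ x, f n x ^ 2 ∂ν + 2 * I := by
      have i1 : Integrable (fun x => (f n x - g x) ^ 2) ν := ((hf n).sub hg).integrable_sq
      have i2 : Integrable (fun x => (f n x + g x) ^ 2) ν := ((hf n).add hg).integrable_sq
      rw [hI, ← integral_add i1 i2, ← integral_const_mul, ← integral_const_mul,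
        ← integral_add ((hf n).integrable_sq.const_mul _) (hg.integrable_sq.const_mul _)]
      congr 1; ext x; ring
    linarith [hle n]
  have hfat : ENNReal.ofReal (4 * I)
      ≤ liminf (fun n => ENNReal.ofReal (∫ x, (f n x + g x) ^ 2 ∂ν)) atTop := by
    have h1 := lintegral_liminf_le' (μ := ν) (u := atTop)
      (f := fun n x => ENNReal.ofReal ((f n x + g x) ^ 2))
      (fun n => ((((hf n).1.aemeasurable.add hg.1.aemeasurable).pow_const 2).ennreal_ofReal))
    have h2 : ∫⁻ x, liminf (fun n => ENNReal.ofReal ((f n x + g x) ^ 2)) atTop ∂ν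
        = ∫⁻ x, ENNReal.ofReal (4 * g x ^ 2) ∂ν := by
      refine lintegral_congr_ae ?_
      filter_upwards [hlim] with x hx
      refine Tendsto.liminf_eq ?_
      refine ENNReal.tendsto_ofReal ?_
      have := (hx.add_const (g x)).pow 2
      convert this using 2
      ring
    rw [h2, ← ofReal_integral_eq_lintegral_ofReal (hg.integrable_sq.const_mul _)
      (ae_of_all _ fun x => by positivity), integral_const_mul] at h1
    refine h1.trans (le_of_eq ?_)
    congr 1; ext n
    have i2 : Integrable (fun x => (f n x + g x) ^ 2) ν := ((hf n).add hg).integrable_sq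
    rw [← ofReal_integral_eq_lintegral_ofReal i2 (ae_of_all _ fun x => by positivity)]
  rw [Metric.tendsto_atTop]
  intro ε hε
  have hnn : ∀ n, 0 ≤ ∫ x, (f n x - g x) ^ 2 ∂ν := fun n => integral_nonneg fun x => sq_nonneg _
  have hnn' : ∀ n, 0 ≤ ∫ x, (f n x + g x) ^ 2 ∂ν := fun n => integral_nonneg fun x => sq_nonneg _
  by_cases h4 : 4 * I < ε
  · refine ⟨0, fun n _ => ?_⟩
    rw [Real.dist_eq, sub_zero, abs_of_nonneg (hnn n)]
    linarith [hs n, hnn' n]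
  · have hlt : ENNReal.ofReal (4 * I - ε)
        < liminf (fun n => ENNReal.ofReal (∫ x, (f n x + g x) ^ 2 ∂ν)) atTop := by
      refine lt_of_lt_of_le ?_ hfat
      rw [ENNReal.ofReal_lt_ofReal_iff (by linarith)]
      linarith
    obtain ⟨N, hN⟩ := eventually_atTop.1 (eventually_lt_of_lt_liminf hlt)
    refine ⟨N, fun n hn => ?_⟩
    rw [Real.dist_eq, sub_zero, abs_of_nonneg (hnn n)]
    have := (ENNReal.ofReal_lt_ofReal_iff_of_nonneg (by linarith)).1 (hN n hn)
    linarith [hs n]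

/-- Products of strongly convergent sequences in `L²` have convergent integrals. -/
lemma tendsto_integral_mul {α : Type*} [MeasurableSpace α] {ν : Measure α}
    {f g : ℕ → α → ℝ} {F G : α → ℝ} (hf : ∀ n, MemLp (f n) 2 ν) (hF : MemLp F 2 ν)
    (hg : ∀ n, MemLp (g n) 2 ν) (hG : MemLp G 2 ν)
    (h1 : Tendsto (fun n => ∫ x, (f n x - F x) ^ 2 ∂ν) atTop (nhds 0))
    (h2 : Tendsto (fun n => ∫ x, (g n x - G x) ^ 2 ∂ν) atTop (nhds 0)) :
    Tendsto (fun n => ∫ x, f n x * g n x ∂ν) atTop (nhds (∫ x, F x * G x ∂ν)) := by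
  have key : ∀ {a : ℕ → α → ℝ} {b : α → ℝ}, (∀ n, MemLp (a n) 2 ν) → MemLp b 2 ν →
      Tendsto (fun n => ∫ x, a n x ^ 2 ∂ν) atTop (nhds 0) →
      Tendsto (fun n => ∫ x, a n x * b x ∂ν) atTop (nhds 0) := by
    intro a b ha hb h
    rw [tendsto_zero_iff_abs_tendsto_zero]
    have h3 : Tendsto (fun n => Real.sqrt ((∫ x, a n x ^ 2 ∂ν) * ∫ x, b x ^ 2 ∂ν)) atTop
        (nhds 0) := by
      have := (h.mul_const (∫ x, b x ^ 2 ∂ν)).sqrt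
      simpa using this
    refine squeeze_zero (fun n => abs_nonneg _) (fun n => ?_) h3
    exact Real.abs_le_sqrt (sq_integral_mul_le (ha n) hb)
  have e1 := key (fun n => (hf n).sub hF) hG (by simpa using h1)
  have e2 := key (fun n => (hg n).sub hG) hF (by simpa using h2)
  have e3 : Tendsto (fun n => ∫ x, (f n x - F x) * (g n x - G x) ∂ν) atTop (nhds 0) := by
    rw [tendsto_zero_iff_abs_tendsto_zero]
    have h3 : Tendsto (fun n => Real.sqrt ((∫ x, (f n x - F x) ^ 2 ∂ν)
        * ∫ x, (g n x - G x) ^ 2 ∂ν)) atTop (nhds 0) := by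
      have := (h1.mul h2).sqrt
      simpa using this
    refine squeeze_zero (fun n => abs_nonneg _) (fun n => ?_) h3
    exact Real.abs_le_sqrt (sq_integral_mul_le ((hf n).sub hF) ((hg n).sub hG))
  have e4 := ((e1.add e2).add e3).add_const (∫ x, F x * G x ∂ν)
  simp only [add_zero, zero_add] at e4
  refine e4.congr fun n => ?_
  have i1 := integrable_mul_of_memLp ((hf n).sub hF) hG
  have i2 := integrable_mul_of_memLp ((hg n).sub hG) hF
  have i3 := integrable_mul_of_memLp ((hf n).sub hF) ((hg n).sub hG)
  have i4 := integrable_mul_of_memLp hF hG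
  simp only [Pi.sub_apply] at i1 i2 i3 ⊢
  have i5 := i1.fun_add i2
  have i6 := i5.fun_add i3
  rw [← integral_add i1 i2, ← integral_add i5 i3, ← integral_add i6 i4]
  congr 1; ext x
  ring

/-- A function that is integrable together with its derivative is bounded by the
total variation of its derivative. -/
lemma abs_le_integral_deriv {g g' : ℝ → ℝ} (hd : ∀ x, HasDerivAt g (g' x) x)
    (hg : Integrable g) (hg' : Integrable g') (x : ℝ) : |g x| ≤ ∫ y, |g' y| := by
  have ht := tendsto_zero_of_hasDerivAt_of_integrableOn_Iic (a := x)
    (fun y _ => hd y) hg'.integrableOn hg.integrableOn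
  have h := integral_Iic_of_hasDerivAt_of_tendsto (a := x)
    (hd x).continuousAt.continuousWithinAt (fun y _ => hd y) hg'.integrableOn ht
  rw [sub_zero] at h
  rw [← h]
  refine (abs_integral_le_integral_abs).trans ?_
  exact setIntegral_le_integral hg'.abs (ae_of_all _ fun y => abs_nonneg _)

/-- One-dimensional Sobolev (Agmon) inequality. -/
lemma agmon {f f' : ℝ → ℝ} (hd : ∀ x, HasDerivAt f (f' x) x)
    (hf : MemLp f 2) (hf' : MemLp f' 2) (x : ℝ) :
    f x ^ 4 ≤ 4 * (∫ y, f y ^ 2) * ∫ y, f' y ^ 2 := by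
  have h1 := abs_le_integral_deriv (g := fun y => f y ^ 2) (g' := fun y => 2 * (f y * f' y))
    (fun y => by
      refine ((hd y).fun_pow 2).congr_deriv ?_
      norm_num; ring) hf.integrable_sq ((integrable_mul_of_memLp hf hf').const_mul 2) x
  have h2 : (∫ y, |f y| * |f' y|) ^ 2 ≤ (∫ y, f y ^ 2) * ∫ y, f' y ^ 2 := by
    simpa only [Pi.abs_apply, sq_abs] using sq_integral_mul_le hf.abs hf'.abs
  have h3 : ∫ y, |2 * (f y * f' y)| = 2 * ∫ y, |f y| * |f' y| := by
    rw [← integral_const_mul]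
    congr 1; ext y
    rw [abs_mul, abs_mul, abs_two]
  rw [h3, abs_of_nonneg (sq_nonneg _)] at h1
  calc f x ^ 4 = (f x ^ 2) ^ 2 := by ring
    _ ≤ (2 * ∫ y, |f y| * |f' y|) ^ 2 := by gcongr
    _ ≤ _ := by nlinarith

/-- Additive form of `agmon` with a free small parameter. -/
lemma sq_le_of_agmon {f f' : ℝ → ℝ} (hd : ∀ x, HasDerivAt f (f' x) x)
    (hf : MemLp f 2) (hf' : MemLp f' 2) {ε : ℝ} (hε : 0 < ε) (x : ℝ) :
    f x ^ 2 ≤ ε * (∫ y, f' y ^ 2) + ε⁻¹ * ∫ y, f y ^ 2 := by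
  have h := agmon hd hf hf' x
  have ha : 0 ≤ ∫ y, f y ^ 2 := integral_nonneg fun y => sq_nonneg _
  have hb : 0 ≤ ∫ y, f' y ^ 2 := integral_nonneg fun y => sq_nonneg _
  set A := ∫ y, f y ^ 2
  set B := ∫ y, f' y ^ 2
  refine abs_le_of_sq_le_sq' (a := f x ^ 2) ?_ (by positivity) |>.2
  have e : ε * ε⁻¹ = 1 := mul_inv_cancel₀ hε.ne'
  have : (ε * B + ε⁻¹ * A) ^ 2 = (ε * B - ε⁻¹ * A) ^ 2 + 4 * (ε * ε⁻¹) * (A * B) := by ring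
  rw [this, e]
  nlinarith [sq_nonneg (ε * B - ε⁻¹ * A)]

/-- Forward difference quotient. -/
noncomputable def dq (h : ℝ) (f : ℝ → ℝ) (x : ℝ) : ℝ := (f (x + h) - f x) / h

lemma sq_intervalIntegral_le {g : ℝ → ℝ} (hg : Continuous g) {h : ℝ} (hh : 0 < h) :
    (∫ r in (0 : ℝ)..h, g r) ^ 2 ≤ h * ∫ r in (0 : ℝ)..h, g r ^ 2 := by
  set c := (∫ r in (0 : ℝ)..h, g r) / h with hc
  have h1 : 0 ≤ ∫ r in (0 : ℝ)..h, (g r - c) ^ 2 :=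
    intervalIntegral.integral_nonneg hh.le fun r _ => sq_nonneg _
  have h2 : ∫ r in (0 : ℝ)..h, (g r - c) ^ 2
      = (∫ r in (0 : ℝ)..h, g r ^ 2) - 2 * c * (∫ r in (0 : ℝ)..h, g r) + h * c ^ 2 := by
    have : ∀ r, (g r - c) ^ 2 = g r ^ 2 - 2 * c * g r + c ^ 2 := fun r => by ring
    simp_rw [this]
    rw [intervalIntegral.integral_add, intervalIntegral.integral_sub,
      intervalIntegral.integral_const_mul, intervalIntegral.integral_const]
    · simp
    all_goals exact Continuous.intervalIntegrable (by fun_prop) _ _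
  have h3 : (∫ r in (0 : ℝ)..h, g r) = c * h := by rw [hc]; field_simp
  rw [h2, h3] at h1
  rw [h3]
  nlinarith

lemma dq_memLp {f f' : ℝ → ℝ} (hd : ∀ x, HasDerivAt f (f' x) x) (hc : Continuous f')
    (hf' : MemLp f' 2) {h : ℝ} (hh : 0 < h) :
    MemLp (dq h f) 2 ∧ ∫ x, dq h f x ^ 2 ≤ ∫ x, f' x ^ 2 := by
  have hfc : Continuous f := continuous_iff_continuousAt.2 fun x => (hd x).continuousAt
  have hdc : Continuous (dq h f) := by unfold dq; fun_prop
  have hprod : Integrable (Function.uncurry fun r x : ℝ => f' (x + r) ^ 2)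
      ((volume.restrict (Ioc 0 h)).prod volume) := by
    rw [integrable_prod_iff (by
      refine Continuous.aestronglyMeasurable ?_
      unfold Function.uncurry; fun_prop)]
    refine ⟨ae_of_all _ fun r => ?_, ?_⟩
    · exact hf'.integrable_sq.comp_add_right r
    · have : ∀ r : ℝ, ∫ x, ‖Function.uncurry (fun r x : ℝ => f' (x + r) ^ 2) (r, x)‖
          = ∫ x, f' x ^ 2 := by
        intro r
        rw [← integral_add_right_eq_self (fun x => f' x ^ 2) r]
        congr 1; ext x
        simp [Function.uncurry]
      simp_rw [this]
      exact integrable_const _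
  have hFi : Integrable (fun x => h⁻¹ * ∫ r in Ioc 0 h, f' (x + r) ^ 2) :=
    hprod.integral_prod_right.const_mul _
  have hpt : ∀ x, dq h f x ^ 2 ≤ h⁻¹ * ∫ r in Ioc 0 h, f' (x + r) ^ 2 := by
    intro x
    have e : f (x + h) - f x = ∫ r in (0 : ℝ)..h, f' (x + r) := by
      have := intervalIntegral.integral_eq_sub_of_hasDerivAt (a := x) (b := x + h)
        (fun y _ => hd y) (hc.intervalIntegrable _ _)
      rw [← this, intervalIntegral.integral_comp_add_left (fun y => f' y) x]
      simp
    have := sq_intervalIntegral_le (g := fun r => f' (x + r)) (by fun_prop) hh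
    rw [← intervalIntegral.integral_of_le hh.le]
    unfold dq
    rw [div_pow, e, div_le_iff₀ (by positivity)]
    calc _ ≤ _ := this
      _ = _ := by field_simp
  have hsq : Integrable fun x => dq h f x ^ 2 := by
    refine hFi.mono' (by exact (hdc.pow 2).aestronglyMeasurable) (ae_of_all _ fun x => ?_)
    rw [Real.norm_eq_abs, abs_of_nonneg (sq_nonneg _)]
    exact hpt x
  refine ⟨(memLp_two_iff_integrable_sq hdc.aestronglyMeasurable).2 hsq, ?_⟩
  refine (integral_mono hsq hFi hpt).trans (le_of_eq ?_)
  rw [integral_const_mul, ← integral_integral_swap hprod]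
  have : ∀ r : ℝ, ∫ x, f' (x + r) ^ 2 = ∫ x, f' x ^ 2 := fun r =>
    integral_add_right_eq_self (fun x => f' x ^ 2) r
  simp_rw [this]
  simp [hh.le]
  field_simp

lemma dq_tendsto {f : ℝ → ℝ} {f' x : ℝ} (hd : HasDerivAt f f' x) :
    Tendsto (fun n : ℕ => dq (1 / ((n : ℝ) + 1)) f x) atTop (nhds f') := by
  have h := hasDerivAt_iff_tendsto_slope_zero.1 hd
  have h2 : Tendsto (fun n : ℕ => 1 / ((n : ℝ) + 1)) atTop (nhdsWithin 0 {0}ᶜ) := by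
    refine tendsto_nhdsWithin_iff.2 ⟨tendsto_one_div_add_atTop_nhds_zero_nat, ?_⟩
    refine Eventually.of_forall fun n => ?_
    have : (0 : ℝ) < 1 / ((n : ℝ) + 1) := by positivity
    exact this.ne'
  refine (h.comp h2).congr fun n => ?_
  simp [dq, div_eq_inv_mul]

/-- Integration in `x` of the fundamental theorem of calculus in `t`. -/
lemma time_ftc {F Ft : ℝ → ℝ → ℝ} {a b : ℝ} (hab : a ≤ b)
    (hc : ∀ x, Continuous fun t => F t x)
    (hd : ∀ x, ∀ t ∈ Ioo a b, HasDerivAt (fun s => F s x) (Ft t x) t)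
    (hFi : Integrable (Function.uncurry Ft) ((volume.restrict (Ioc a b)).prod volume))
    (ha : Integrable (F a)) (hb : Integrable (F b)) :
    (∫ x, F b x) - ∫ x, F a x = ∫ t in a..b, ∫ x, Ft t x := by
  rw [intervalIntegral.integral_of_le hab, integral_integral_swap hFi, ← integral_sub hb ha]
  refine integral_congr_ae ?_
  filter_upwards [hFi.prod_left_ae] with x hx
  rw [← intervalIntegral.integral_of_le hab]
  refine (intervalIntegral.integral_eq_sub_of_hasDerivAt_of_le hab (hc x).continuousOn
    (hd x) ?_).symm
  rw [intervalIntegrable_iff_integrableOn_Ioc_of_le hab]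
  exact hx

/-- The integral of a nonnegative integrable function over late time intervals is small. -/
lemma tail_small {G : ℝ → ℝ} (hG : IntegrableOn G (Ioi 0)) (h0 : ∀ t, 0 ≤ G t) {ε : ℝ}
    (hε : 0 < ε) : ∃ T, 0 ≤ T ∧ ∀ a b, T ≤ a → a ≤ b → ∫ t in a..b, G t ≤ ε := by
  have ht := intervalIntegral_tendsto_integral_Ioi 0 hG tendsto_id
  obtain ⟨T, hT⟩ := (Metric.tendsto_atTop.1 ht) ε hε
  refine ⟨max T 0, le_max_right _ _, fun a b ha hab => ?_⟩
  have ha0 : 0 ≤ a := (le_max_right _ _).trans ha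
  have h1 := hT a ((le_max_left _ _).trans ha)
  rw [Real.dist_eq, abs_lt] at h1
  have hi : ∀ c, 0 ≤ c → IntervalIntegrable G volume 0 c := fun c hc => by
    rw [intervalIntegrable_iff_integrableOn_Ioc_of_le hc]
    exact hG.mono_set Ioc_subset_Ioi_self
  have h2 : ∫ t in (0 : ℝ)..b, G t ≤ ∫ t in Ioi 0, G t := by
    rw [intervalIntegral.integral_of_le (ha0.trans hab)]
    exact setIntegral_mono_set hG (ae_of_all _ h0) (Ioc_subset_Ioi_self.eventuallyLE)
  have h3 := intervalIntegral.integral_interval_sub_left (hi b (ha0.trans hab)) (hi a ha0)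
  simp only [id] at h1
  linarith [h1.1]

/-- An integrable nonnegative quantity whose increments are controlled by an integrable
function tends to zero. -/
lemma decay_of_increment {Y G : ℝ → ℝ} (hY0 : ∀ t, 0 ≤ Y t) (hY : IntegrableOn Y (Ioi 0))
    (hG : IntegrableOn G (Ioi 0)) (h0 : ∀ t, 0 ≤ G t)
    (h : ∀ a b, 0 ≤ a → a ≤ b → Y b ≤ Y a + ∫ t in a..b, G t) :
    Tendsto Y atTop (nhds 0) := by
  rw [Metric.tendsto_atTop]
  intro ε hε
  obtain ⟨T, hT0, hT⟩ := tail_small hG h0 (show 0 < ε / 3 by positivity)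
  obtain ⟨T', hT0', hT'⟩ := tail_small hY hY0 (show 0 < ε / 3 by positivity)
  set c := max T T' with hc
  have hc0 : 0 ≤ c := hT0.trans (le_max_left _ _)
  obtain ⟨a, hca, ha⟩ : ∃ a, c ≤ a ∧ Y a ≤ ε / 3 := by
    by_contra! hcon
    have h1 := hT' c (c + 2) (le_max_right _ _) (by linarith)
    have h2 : ∫ t in c..(c + 2), (ε / 3) ≤ ∫ t in c..(c + 2), Y t := by
      refine intervalIntegral.integral_mono_on (by linarith) (by simp) ?_ ?_
      · rw [intervalIntegrable_iff_integrableOn_Ioc_of_le (by linarith)]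
        exact hY.mono_set fun t ht => lt_of_le_of_lt hc0 ht.1
      · exact fun t ht => (hcon t ht.1).le
    simp at h2
    linarith
  refine ⟨a, fun b hb => ?_⟩
  rw [Real.dist_eq, sub_zero, abs_of_nonneg (hY0 b)]
  have h1 := h a b (hc0.trans hca) hb
  have h2 := hT a b ((le_max_left _ _).trans hca) hb
  linarith

/-! ### The relative entropy density `y - 1 - log y` -/

/-- The convex function `y - 1 - log y`, vanishing to second order at `1`. -/
noncomputable def ent (y : ℝ) : ℝ := y - 1 - Real.log y

lemma ent_nonneg {y : ℝ} (hy : 0 < y) : 0 ≤ ent y := by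
  have := Real.log_le_sub_one_of_pos hy
  unfold ent; linarith

lemma sq_sqrt_sub_one_le {y : ℝ} (hy : 0 < y) : (√y - 1) ^ 2 ≤ ent y := by
  have h1 := Real.log_le_sub_one_of_pos (Real.sqrt_pos.2 hy)
  rw [Real.log_sqrt hy.le] at h1
  have h2 := Real.sq_sqrt hy.le
  unfold ent; nlinarith

lemma sq_sub_one_le_ent {y : ℝ} (hy : 0 < y) : (y - 1) ^ 2 ≤ 2 * (y + 1) * ent y := by
  have h1 := sq_sqrt_sub_one_le hy
  have h2 := Real.sq_sqrt hy.le
  have h3 : (y - 1) ^ 2 = (√y + 1) ^ 2 * (√y - 1) ^ 2 := by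
    rw [← mul_pow]; congr 1; nlinarith
  have h4 : (√y + 1) ^ 2 ≤ 2 * (y + 1) := by nlinarith [sq_nonneg (√y - 1)]
  rw [h3]
  exact mul_le_mul h4 h1 (sq_nonneg _) (by positivity)

lemma ent_le {y : ℝ} (hy : 0 < y) : ent y ≤ (y - 1) ^ 2 / y := by
  have h := Real.one_sub_inv_le_log_of_pos hy
  have : (y - 1) ^ 2 / y = y - 1 - (1 - y⁻¹) := by field_simp
  rw [this]; unfold ent; linarith

lemma le_ent_of_four_le {y : ℝ} (hy : 4 ≤ y) : y ≤ 5 * ent y := by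
  have h := sq_sub_one_le_ent (show 0 < y by linarith)
  nlinarith

/-- A function comparable to `√y` for large `y` with `y |d psi/dy| ≤ √(ent y) / 2`; it gives the
pointwise bound of large temperatures by the entropy production. -/
noncomputable def psi (y : ℝ) : ℝ := √y - 1 - Real.log y / 2

lemma hasDerivAt_psi {y : ℝ} (hy : 0 < y) : HasDerivAt psi ((√y - 1) / (2 * y)) y := by
  have h := ((Real.hasDerivAt_sqrt hy.ne').sub_const 1).sub ((Real.hasDerivAt_log hy.ne').div_const 2)
  refine h.congr_deriv ?_
  have h2 := Real.mul_self_sqrt hy.le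
  have h3 := Real.sqrt_pos.2 hy
  field_simp
  nlinarith

lemma psi_nonneg {y : ℝ} (hy : 0 < y) : 0 ≤ psi y := by
  have h1 := Real.log_le_sub_one_of_pos (Real.sqrt_pos.2 hy)
  rw [Real.log_sqrt hy.le] at h1
  unfold psi; linarith

lemma psi_le {y : ℝ} (hy : 0 < y) : psi y ≤ ent y := by
  have h1 := Real.log_le_sub_one_of_pos (Real.sqrt_pos.2 hy)
  rw [Real.log_sqrt hy.le] at h1
  have h2 := sq_sqrt_sub_one_le hy
  have h3 := Real.sq_sqrt hy.le
  unfold psi; unfold ent at *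
  nlinarith [sq_nonneg (√y - 1)]

lemma le_psi_sq {y : ℝ} (hy : 4 ≤ y) : y ≤ 45 * psi y ^ 2 := by
  have hy0 : 0 < y := by linarith
  have hr : 2 ≤ √y := Real.le_sqrt_of_sq_le (by linarith)
  have h1 := Real.log_le_sub_one_of_pos (show 0 < √y / 2 by linarith)
  rw [Real.log_div (by linarith) (by norm_num), Real.log_sqrt hy0.le] at h1
  have h2 := Real.log_two_lt_d9
  have h3 : 0.15 * √y ≤ psi y := by unfold psi; linarith
  have h4 := Real.sq_sqrt hy0.le
  nlinarith

/-! ### Solutions in time-first form -/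

/-- Lebesgue measure on the space-time strip `(0,T] × ℝ`, time being the first coordinate. -/
noncomputable abbrev strip (T : ℝ) : Measure (ℝ × ℝ) := (volume.restrict (Ioc 0 T)).prod volume

/-- A solution of the system written with the time variable first and with its derivatives named,
together with all regularity used below. The functions are defined for all real times; they are
to be thought of as constant for negative times, and the equations hold for positive times. -/
structure GasFlow where
  μ : ℝ
  κ : ℝ
  R : ℝ
  cv : ℝ
  K : ℝ
  v : ℝ → ℝ → ℝ
  u : ℝ → ℝ → ℝ
  θ : ℝ → ℝ → ℝ
  vx : ℝ → ℝ → ℝ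
  ux : ℝ → ℝ → ℝ
  θx : ℝ → ℝ → ℝ
  uxx : ℝ → ℝ → ℝ
  θxx : ℝ → ℝ → ℝ
  hμ : 0 < μ
  hκ : 0 < κ
  hR : 0 < R
  hcv : 0 < cv
  hK : 1 ≤ K
  v_lb : ∀ t x, K⁻¹ ≤ v t x
  v_ub : ∀ t x, v t x ≤ K
  θ_pos : ∀ t x, 0 < θ t x
  θ_lb : ∀ t, ∃ c, 0 < c ∧ ∀ x, c ≤ θ t x
  dv : ∀ t x, HasDerivAt (v t) (vx t x) x
  du : ∀ t x, HasDerivAt (u t) (ux t x) x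
  dθ : ∀ t x, HasDerivAt (θ t) (θx t x) x
  dux : ∀ t x, HasDerivAt (ux t) (uxx t x) x
  dθx : ∀ t x, HasDerivAt (θx t) (θxx t x) x
  cvx : ∀ t, Continuous (vx t)
  cuxx : ∀ t, Continuous (uxx t)
  cθxx : ∀ t, Continuous (θxx t)
  ctv : ∀ x, Continuous fun t => v t x
  ctu : ∀ x, Continuous fun t => u t x
  ctθ : ∀ x, Continuous fun t => θ t x
  tv : ∀ x t, 0 < t → HasDerivAt (fun s => v s x) (ux t x) t
  tu : ∀ x t, 0 < t → HasDerivAt (fun s => u s x)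
    (μ * (uxx t x / v t x - ux t x * vx t x / v t x ^ 2)
      - R * (θx t x / v t x - θ t x * vx t x / v t x ^ 2)) t
  tθ : ∀ x t, 0 < t → HasDerivAt (fun s => θ s x)
    ((κ * (θxx t x / v t x - θx t x * vx t x / v t x ^ 2)
      + μ * ux t x ^ 2 / v t x - R * θ t x / v t x * ux t x) / cv) t
  mv : Measurable (Function.uncurry v)
  mu : Measurable (Function.uncurry u)
  mθ : Measurable (Function.uncurry θ)
  mvx : Measurable (Function.uncurry vx)
  mux : Measurable (Function.uncurry ux)
  mθx : Measurable (Function.uncurry θx)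
  muxx : Measurable (Function.uncurry uxx)
  mθxx : Measurable (Function.uncurry θxx)
  lv : ∀ t, MemLp (fun x => v t x - 1) 2
  lu : ∀ t, MemLp (u t) 2
  lθ : ∀ t, MemLp (fun x => θ t x - 1) 2
  lvx : ∀ t, MemLp (vx t) 2
  lux : ∀ t, MemLp (ux t) 2
  lθx : ∀ t, MemLp (θx t) 2
  h1 : ∀ T, ∃ B, ∀ t ∈ Icc 0 T, (∫ x, (v t x - 1) ^ 2) ≤ B ∧ (∫ x, u t x ^ 2) ≤ B ∧
    (∫ x, (θ t x - 1) ^ 2) ≤ B ∧ (∫ x, vx t x ^ 2) ≤ B ∧ (∫ x, ux t x ^ 2) ≤ B ∧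
    (∫ x, θx t x ^ 2) ≤ B
  suxx : ∀ T, MemLp (Function.uncurry uxx) 2 (strip T)
  sθxx : ∀ T, MemLp (Function.uncurry θxx) 2 (strip T)

namespace GasFlow
variable (S : GasFlow)

section meas
variable {α : Type*} [MeasurableSpace α] {f g : α → ℝ}

@[fun_prop] lemma meas_v (hf : Measurable f) (hg : Measurable g) :
    Measurable fun a => S.v (f a) (g a) := S.mv.comp (hf.prodMk hg)
@[fun_prop] lemma meas_u (hf : Measurable f) (hg : Measurable g) :
    Measurable fun a => S.u (f a) (g a) := S.mu.comp (hf.prodMk hg)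
@[fun_prop] lemma meas_θ (hf : Measurable f) (hg : Measurable g) :
    Measurable fun a => S.θ (f a) (g a) := S.mθ.comp (hf.prodMk hg)
@[fun_prop] lemma meas_vx (hf : Measurable f) (hg : Measurable g) :
    Measurable fun a => S.vx (f a) (g a) := S.mvx.comp (hf.prodMk hg)
@[fun_prop] lemma meas_ux (hf : Measurable f) (hg : Measurable g) :
    Measurable fun a => S.ux (f a) (g a) := S.mux.comp (hf.prodMk hg)
@[fun_prop] lemma meas_θx (hf : Measurable f) (hg : Measurable g) :
    Measurable fun a => S.θx (f a) (g a) := S.mθx.comp (hf.prodMk hg)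
@[fun_prop] lemma meas_uxx (hf : Measurable f) (hg : Measurable g) :
    Measurable fun a => S.uxx (f a) (g a) := S.muxx.comp (hf.prodMk hg)
@[fun_prop] lemma meas_θxx (hf : Measurable f) (hg : Measurable g) :
    Measurable fun a => S.θxx (f a) (g a) := S.mθxx.comp (hf.prodMk hg)

end meas

/-- The time derivative of `u`, as given by the momentum equation. -/
noncomputable def ut (t x : ℝ) : ℝ :=
  S.μ * (S.uxx t x / S.v t x - S.ux t x * S.vx t x / S.v t x ^ 2)
    - S.R * (S.θx t x / S.v t x - S.θ t x * S.vx t x / S.v t x ^ 2)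

/-- The time derivative of `θ`, as given by the energy equation. -/
noncomputable def θt (t x : ℝ) : ℝ :=
  (S.κ * (S.θxx t x / S.v t x - S.θx t x * S.vx t x / S.v t x ^ 2)
    + S.μ * S.ux t x ^ 2 / S.v t x - S.R * S.θ t x / S.v t x * S.ux t x) / S.cv

@[fun_prop] lemma meas_ut {α : Type*} [MeasurableSpace α] {f g : α → ℝ}
    (hf : Measurable f) (hg : Measurable g) :
    Measurable fun a => S.ut (f a) (g a) := by unfold ut; fun_prop
@[fun_prop] lemma meas_θt {α : Type*} [MeasurableSpace α] {f g : α → ℝ}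
    (hf : Measurable f) (hg : Measurable g) :
    Measurable fun a => S.θt (f a) (g a) := by unfold θt; fun_prop

lemma K_pos : 0 < S.K := lt_of_lt_of_le one_pos S.hK
lemma v_pos (t x : ℝ) : 0 < S.v t x := lt_of_lt_of_le (inv_pos.2 S.K_pos) (S.v_lb t x)
lemma inv_v_le (t x : ℝ) : (S.v t x)⁻¹ ≤ S.K := inv_le_of_inv_le₀ S.K_pos (S.v_lb t x)
lemma le_inv_v (t x : ℝ) : S.K⁻¹ ≤ (S.v t x)⁻¹ := inv_anti₀ (S.v_pos t x) (S.v_ub t x)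
lemma abs_inv_v_le (t x : ℝ) : |(S.v t x)⁻¹| ≤ S.K := by
  rw [abs_of_pos (inv_pos.2 (S.v_pos t x))]; exact S.inv_v_le t x

/-- Joint `L²` integrability of a function whose slices have time-integrable energy. -/
lemma _root_.memLp_strip {T : ℝ} {f : ℝ → ℝ → ℝ} {G : ℝ → ℝ}
    (hm : Measurable (Function.uncurry f)) (hG : IntegrableOn G (Ioc 0 T))
    (hs : ∀ᵐ t ∂volume.restrict (Ioc 0 T), MemLp (f t) 2 ∧ ∫ x, f t x ^ 2 ≤ G t) :
    MemLp (Function.uncurry f) 2 (strip T) := by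
  rw [memLp_two_iff_integrable_sq hm.aestronglyMeasurable,
    integrable_prod_iff (hm.pow_const 2).aestronglyMeasurable]
  constructor
  · filter_upwards [hs] with t ht using ht.1.integrable_sq
  · refine hG.mono' ?_ ?_
    · exact ((hm.pow_const 2).norm.stronglyMeasurable.integral_prod_right').aestronglyMeasurable
    · filter_upwards [hs] with t ht
      rw [Real.norm_eq_abs, abs_of_nonneg (integral_nonneg fun x => norm_nonneg _)]
      refine le_trans (le_of_eq ?_) ht.2
      congr 1; ext x
      simp [Function.uncurry]

/-- At almost every time the second derivatives are square integrable in space. -/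
def Good (t : ℝ) : Prop := MemLp (S.uxx t) 2 ∧ MemLp (S.θxx t) 2

lemma ae_good (T : ℝ) : ∀ᵐ t ∂volume.restrict (Ioc 0 T), S.Good t := by
  filter_upwards [(S.suxx T).integrable_sq.prod_right_ae,
    (S.sθxx T).integrable_sq.prod_right_ae] with t h1 h2
  constructor
  · exact (memLp_two_iff_integrable_sq (S.cuxx t).aestronglyMeasurable).2 h1
  · exact (memLp_two_iff_integrable_sq (S.cθxx t).aestronglyMeasurable).2 h2

lemma memLp_strip_of_bdd {T B : ℝ} {f : ℝ → ℝ → ℝ}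
    (hm : Measurable (Function.uncurry f))
    (hs : ∀ t, MemLp (f t) 2) (hb : ∀ t ∈ Icc 0 T, ∫ x, f t x ^ 2 ≤ B) :
    MemLp (Function.uncurry f) 2 (strip T) := by
  refine memLp_strip (G := fun _ => B) hm ?_ ?_
  · exact integrableOn_const (by simp)
  · filter_upwards [ae_restrict_mem measurableSet_Ioc] with t ht
    exact ⟨hs t, hb t ⟨ht.1.le, ht.2⟩⟩

lemma strip_v (T : ℝ) : MemLp (fun p : ℝ × ℝ => S.v p.1 p.2 - 1) 2 (strip T) := by
  obtain ⟨B, hB⟩ := S.h1 T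
  exact memLp_strip_of_bdd (f := fun t x => S.v t x - 1) (by unfold Function.uncurry; fun_prop)
    S.lv fun t ht => (hB t ht).1
lemma strip_u (T : ℝ) : MemLp (fun p : ℝ × ℝ => S.u p.1 p.2) 2 (strip T) := by
  obtain ⟨B, hB⟩ := S.h1 T
  exact memLp_strip_of_bdd S.mu S.lu fun t ht => (hB t ht).2.1
lemma strip_θ (T : ℝ) : MemLp (fun p : ℝ × ℝ => S.θ p.1 p.2 - 1) 2 (strip T) := by
  obtain ⟨B, hB⟩ := S.h1 T
  exact memLp_strip_of_bdd (f := fun t x => S.θ t x - 1) (by unfold Function.uncurry; fun_prop)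
    S.lθ fun t ht => (hB t ht).2.2.1
lemma strip_vx (T : ℝ) : MemLp (fun p : ℝ × ℝ => S.vx p.1 p.2) 2 (strip T) := by
  obtain ⟨B, hB⟩ := S.h1 T
  exact memLp_strip_of_bdd S.mvx S.lvx fun t ht => (hB t ht).2.2.2.1
lemma strip_ux (T : ℝ) : MemLp (fun p : ℝ × ℝ => S.ux p.1 p.2) 2 (strip T) := by
  obtain ⟨B, hB⟩ := S.h1 T
  exact memLp_strip_of_bdd S.mux S.lux fun t ht => (hB t ht).2.2.2.2.1
lemma strip_θx (T : ℝ) : MemLp (fun p : ℝ × ℝ => S.θx p.1 p.2) 2 (strip T) := by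
  obtain ⟨B, hB⟩ := S.h1 T
  exact memLp_strip_of_bdd S.mθx S.lθx fun t ht => (hB t ht).2.2.2.2.2

/-- Product of an `H¹` function with an `L²` function. -/
lemma _root_.memLp_mul_of_deriv {f f' g : ℝ → ℝ} (hd : ∀ x, HasDerivAt f (f' x) x)
    (hf : MemLp f 2) (hf' : MemLp f' 2) (hg : MemLp g 2) :
    MemLp (fun x => f x * g x) 2 ∧
      ∫ x, (f x * g x) ^ 2 ≤ ((∫ x, f' x ^ 2) + ∫ x, f x ^ 2) * ∫ x, g x ^ 2 := by
  have hb : ∀ x, f x ^ 2 ≤ (∫ x, f' x ^ 2) + ∫ x, f x ^ 2 := fun x => by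
    simpa using sq_le_of_agmon hd hf hf' one_pos x
  have hm : MemLp (fun x => f x * g x) 2 := by
    refine memLp_bdd_mul hg hf.1 (C := √((∫ x, f' x ^ 2) + ∫ x, f x ^ 2)) (ae_of_all _ fun x => ?_)
    exact Real.abs_le_sqrt (hb x)
  refine ⟨hm, ?_⟩
  rw [← integral_const_mul]
  refine integral_mono hm.integrable_sq (hg.integrable_sq.const_mul _) fun x => ?_
  simp only
  rw [mul_pow]
  exact mul_le_mul_of_nonneg_right (hb x) (sq_nonneg _)

lemma strip_mul {T B : ℝ} {f f' g : ℝ → ℝ → ℝ} (hd : ∀ t x, HasDerivAt (f t) (f' t x) x)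
    (hf : ∀ t, MemLp (f t) 2) (hg : ∀ t, MemLp (g t) 2)
    (hf' : ∀ᵐ t ∂volume.restrict (Ioc 0 T), MemLp (f' t) 2)
    (hf's : MemLp (Function.uncurry f') 2 (strip T))
    (mf : Measurable (Function.uncurry f)) (mg : Measurable (Function.uncurry g))
    (hfB : ∀ t ∈ Icc 0 T, ∫ x, f t x ^ 2 ≤ B) (hgB : ∀ t ∈ Icc 0 T, ∫ x, g t x ^ 2 ≤ B) :
    MemLp (fun p : ℝ × ℝ => f p.1 p.2 * g p.1 p.2) 2 (strip T) := by
  refine memLp_strip (f := fun t x => f t x * g t x)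
    (G := fun t => ((∫ x, f' t x ^ 2) + B) * B) (mf.mul mg) ?_ ?_
  · have h1 : Integrable (fun t => ∫ x, f' t x ^ 2) (volume.restrict (Ioc 0 T)) :=
      hf's.integrable_sq.integral_prod_left
    exact (h1.add (integrable_const B)).mul_const B
  · filter_upwards [ae_restrict_mem measurableSet_Ioc, hf'] with t ht h2
    have ht' : t ∈ Icc 0 T := ⟨ht.1.le, ht.2⟩
    obtain ⟨h3, h4⟩ := memLp_mul_of_deriv (hd t) (hf t) h2 (hg t)
    refine ⟨h3, h4.trans ?_⟩
    have i1 : 0 ≤ ∫ x, f' t x ^ 2 := integral_nonneg fun x => sq_nonneg _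
    have i2 : 0 ≤ ∫ x, f t x ^ 2 := integral_nonneg fun x => sq_nonneg _
    have i3 : 0 ≤ ∫ x, g t x ^ 2 := integral_nonneg fun x => sq_nonneg _
    have := hfB t ht'
    have := hgB t ht'
    gcongr
    linarith

lemma strip_ux_vx (T : ℝ) :
    MemLp (fun p : ℝ × ℝ => S.ux p.1 p.2 * S.vx p.1 p.2) 2 (strip T) := by
  obtain ⟨B, hB⟩ := S.h1 T
  exact strip_mul S.dux S.lux S.lvx ((S.ae_good T).mono fun t h => h.1) (S.suxx T) S.mux S.mvx
    (fun t ht => (hB t ht).2.2.2.2.1) (fun t ht => (hB t ht).2.2.2.1)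
lemma strip_θx_vx (T : ℝ) :
    MemLp (fun p : ℝ × ℝ => S.θx p.1 p.2 * S.vx p.1 p.2) 2 (strip T) := by
  obtain ⟨B, hB⟩ := S.h1 T
  exact strip_mul S.dθx S.lθx S.lvx ((S.ae_good T).mono fun t h => h.2) (S.sθxx T) S.mθx S.mvx
    (fun t ht => (hB t ht).2.2.2.2.2) (fun t ht => (hB t ht).2.2.2.1)
lemma strip_ux_ux (T : ℝ) :
    MemLp (fun p : ℝ × ℝ => S.ux p.1 p.2 * S.ux p.1 p.2) 2 (strip T) := by
  obtain ⟨B, hB⟩ := S.h1 T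
  exact strip_mul S.dux S.lux S.lux ((S.ae_good T).mono fun t h => h.1) (S.suxx T) S.mux S.mux
    (fun t ht => (hB t ht).2.2.2.2.1) (fun t ht => (hB t ht).2.2.2.2.1)

lemma bdd_upper (T : ℝ) : ∃ B, 1 ≤ B ∧ ∀ t ∈ Icc 0 T, ∀ x, |S.u t x| ≤ B ∧ S.θ t x ≤ B := by
  obtain ⟨B, hB⟩ := S.h1 T
  refine ⟨√(B + B) + 1, by linarith [Real.sqrt_nonneg (B + B)], fun t ht x => ?_⟩
  obtain ⟨b1, b2, b3, b4, b5, b6⟩ := hB t ht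
  have h1 := sq_le_of_agmon (S.du t) (S.lu t) (S.lux t) one_pos x
  have h2 := sq_le_of_agmon (fun x => (S.dθ t x).sub_const 1) (S.lθ t) (S.lθx t) one_pos x
  simp only [one_mul, inv_one] at h1 h2
  have h3 : |S.u t x| ≤ √(B + B) := Real.abs_le_sqrt (by linarith)
  have h4 : |S.θ t x - 1| ≤ √(B + B) := Real.abs_le_sqrt (by linarith)
  exact ⟨by linarith, by linarith [(abs_le.1 h4).2]⟩

/-- `L²` membership of the momentum right-hand side, over an arbitrary measure. -/
lemma ut_memLp_aux {α : Type*} [MeasurableSpace α] {ν : Measure α} {f g : α → ℝ} {B : ℝ}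
    (hf : Measurable f) (hg : Measurable g)
    (hθ : ∀ᵐ a ∂ν, S.θ (f a) (g a) ≤ B)
    (h1 : MemLp (fun a => S.uxx (f a) (g a)) 2 ν)
    (h2 : MemLp (fun a => S.ux (f a) (g a) * S.vx (f a) (g a)) 2 ν)
    (h3 : MemLp (fun a => S.θx (f a) (g a)) 2 ν) (h4 : MemLp (fun a => S.vx (f a) (g a)) 2 ν) :
    MemLp (fun a => S.ut (f a) (g a)) 2 ν := by
  have mb : AEStronglyMeasurable (fun a => (S.v (f a) (g a))⁻¹) ν :=
    (by fun_prop : Measurable fun a => (S.v (f a) (g a))⁻¹).aestronglyMeasurable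
  have hb : ∀ᵐ a ∂ν, |(S.v (f a) (g a))⁻¹| ≤ S.K := ae_of_all _ fun a => S.abs_inv_v_le _ _
  have mθ : AEStronglyMeasurable (fun a => S.θ (f a) (g a)) ν :=
    (by fun_prop : Measurable fun a => S.θ (f a) (g a)).aestronglyMeasurable
  have hθ' : ∀ᵐ a ∂ν, |S.θ (f a) (g a)| ≤ B := by
    filter_upwards [hθ] with a ha
    rwa [abs_of_pos (S.θ_pos _ _)]
  have e1 := memLp_bdd_mul h1 mb hb
  have e2 := memLp_bdd_mul (memLp_bdd_mul h2 mb hb) mb hb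
  have e3 := memLp_bdd_mul h3 mb hb
  have e4 := memLp_bdd_mul (memLp_bdd_mul (memLp_bdd_mul h4 mb hb) mb hb) mθ hθ'
  refine (((e1.sub e2).const_mul S.μ).sub ((e3.sub e4).const_mul S.R)).congr_norm
    (by fun_prop : Measurable _).aestronglyMeasurable (ae_of_all _ fun a => ?_)
  congr 1
  simp only [ut, Pi.sub_apply]
  have := S.v_pos (f a) (g a)
  field_simp

lemma θt_memLp_aux {α : Type*} [MeasurableSpace α] {ν : Measure α} {f g : α → ℝ} {B : ℝ}
    (hf : Measurable f) (hg : Measurable g)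
    (hθ : ∀ᵐ a ∂ν, S.θ (f a) (g a) ≤ B)
    (h1 : MemLp (fun a => S.θxx (f a) (g a)) 2 ν)
    (h2 : MemLp (fun a => S.θx (f a) (g a) * S.vx (f a) (g a)) 2 ν)
    (h3 : MemLp (fun a => S.ux (f a) (g a) * S.ux (f a) (g a)) 2 ν)
    (h4 : MemLp (fun a => S.ux (f a) (g a)) 2 ν) :
    MemLp (fun a => S.θt (f a) (g a)) 2 ν := by
  have mb : AEStronglyMeasurable (fun a => (S.v (f a) (g a))⁻¹) ν :=
    (by fun_prop : Measurable fun a => (S.v (f a) (g a))⁻¹).aestronglyMeasurable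
  have hb : ∀ᵐ a ∂ν, |(S.v (f a) (g a))⁻¹| ≤ S.K := ae_of_all _ fun a => S.abs_inv_v_le _ _
  have mθ : AEStronglyMeasurable (fun a => S.θ (f a) (g a)) ν :=
    (by fun_prop : Measurable fun a => S.θ (f a) (g a)).aestronglyMeasurable
  have hθ' : ∀ᵐ a ∂ν, |S.θ (f a) (g a)| ≤ B := by
    filter_upwards [hθ] with a ha
    rwa [abs_of_pos (S.θ_pos _ _)]
  have e1 := memLp_bdd_mul h1 mb hb
  have e2 := memLp_bdd_mul (memLp_bdd_mul h2 mb hb) mb hb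
  have e3 := memLp_bdd_mul h3 mb hb
  have e4 := memLp_bdd_mul (memLp_bdd_mul h4 mb hb) mθ hθ'
  refine (((((e1.sub e2).const_mul S.κ).add (e3.const_mul S.μ)).sub
    (e4.const_mul S.R)).const_mul S.cv⁻¹).congr_norm
    (by fun_prop : Measurable _).aestronglyMeasurable (ae_of_all _ fun a => ?_)
  congr 1
  simp only [θt, Pi.sub_apply, Pi.add_apply]
  have := S.v_pos (f a) (g a)
  have := S.hcv
  field_simp

lemma ae_strip {T : ℝ} {P : ℝ → ℝ → Prop} (h : ∀ t ∈ Icc 0 T, ∀ x, P t x) :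
    ∀ᵐ p ∂strip T, P p.1 p.2 := by
  have h1 : ∀ᵐ t ∂volume.restrict (Ioc 0 T), t ∈ Icc 0 T :=
    (ae_restrict_mem measurableSet_Ioc).mono fun t ht => ⟨ht.1.le, ht.2⟩
  have h2 : ∀ᵐ p ∂strip T, p.1 ∈ Icc 0 T := Measure.quasiMeasurePreserving_fst.ae h1
  exact h2.mono fun p hp => h _ hp _

lemma strip_ut (T : ℝ) : MemLp (fun p : ℝ × ℝ => S.ut p.1 p.2) 2 (strip T) := by
  obtain ⟨B, -, hB⟩ := S.bdd_upper T
  exact S.ut_memLp_aux measurable_fst measurable_snd (ae_strip fun t ht x => (hB t ht x).2)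
    (S.suxx T) (S.strip_ux_vx T) (S.strip_θx T) (S.strip_vx T)
lemma strip_θt (T : ℝ) : MemLp (fun p : ℝ × ℝ => S.θt p.1 p.2) 2 (strip T) := by
  obtain ⟨B, -, hB⟩ := S.bdd_upper T
  exact S.θt_memLp_aux measurable_fst measurable_snd (ae_strip fun t ht x => (hB t ht x).2)
    (S.sθxx T) (S.strip_θx_vx T) (S.strip_ux_ux T) (S.strip_ux T)

variable {S} in
lemma Good.lut {t : ℝ} (h : S.Good t) (ht : 0 ≤ t) : MemLp (S.ut t) 2 := by
  obtain ⟨B, -, hB⟩ := S.bdd_upper t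
  exact S.ut_memLp_aux (f := fun _ => t) (g := id) measurable_const measurable_id
    (ae_of_all _ fun x => (hB t ⟨ht, le_rfl⟩ x).2) h.1
    (memLp_mul_of_deriv (S.dux t) (S.lux t) h.1 (S.lvx t)).1 (S.lθx t) (S.lvx t)
variable {S} in
lemma Good.lθt {t : ℝ} (h : S.Good t) (ht : 0 ≤ t) : MemLp (S.θt t) 2 := by
  obtain ⟨B, -, hB⟩ := S.bdd_upper t
  exact S.θt_memLp_aux (f := fun _ => t) (g := id) measurable_const measurable_id
    (ae_of_all _ fun x => (hB t ⟨ht, le_rfl⟩ x).2) h.2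
    (memLp_mul_of_deriv (S.dθx t) (S.lθx t) h.2 (S.lvx t)).1
    (memLp_mul_of_deriv (S.dux t) (S.lux t) h.1 (S.lux t)).1 (S.lux t)

end GasFlow

/-! ### Local-in-time bounds for the temperature -/

/-- Lebesgue measure on the space-time slab `(a,b] × ℝ`. -/
noncomputable abbrev slab (a b : ℝ) : Measure (ℝ × ℝ) := (volume.restrict (Ioc a b)).prod volume

lemma slab_le {a b : ℝ} (ha : 0 ≤ a) : slab a b ≤ strip b := by
  have h : ∀ a b : ℝ, slab a b = (volume.prod volume).restrict (Ioc a b ×ˢ univ) := fun a b => by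
    rw [← Measure.prod_restrict, Measure.restrict_univ]
  unfold strip
  rw [h a b, show (volume.restrict (Ioc 0 b)).prod volume = slab 0 b from rfl, h 0 b]
  exact Measure.restrict_mono (prod_mono (Ioc_subset_Ioc_left ha) subset_rfl) le_rfl

lemma memLp_bdd_mul' {α : Type*} [MeasurableSpace α] {ν : Measure α} {b f : α → ℝ}
    (hf : MemLp f 2 ν) (hb : Measurable b) {C : ℝ} (h : ∀ x, |b x| ≤ C) :
    MemLp (fun x => b x * f x) 2 ν :=
  memLp_bdd_mul hf hb.aestronglyMeasurable (ae_of_all _ h)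

namespace GasFlow
variable (S : GasFlow)

lemma ae_good_slab {a b : ℝ} (ha : 0 ≤ a) :
    ∀ᵐ t ∂volume.restrict (Ioc a b), t ∈ Ioc a b ∧ S.Good t := by
  have h : ∀ᵐ t ∂volume.restrict (Ioc a b), S.Good t :=
    (Measure.absolutelyContinuous_of_le
      (Measure.restrict_mono (Ioc_subset_Ioc_left ha) le_rfl)) (S.ae_good b)
  filter_upwards [ae_restrict_mem measurableSet_Ioc, h] with t h1 h2 using ⟨h1, h2⟩

/-- Integrated form of a differential inequality for a spatial integral: only times at which the
second derivatives are square integrable matter. -/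
lemma increment_le {F Ft : ℝ → ℝ → ℝ} {D : ℝ → ℝ} {a b : ℝ} (ha0 : 0 ≤ a) (hab : a ≤ b)
    (hc : ∀ x, Continuous fun t => F t x)
    (hd : ∀ x, ∀ t, 0 < t → HasDerivAt (fun s => F s x) (Ft t x) t)
    (hFi : Integrable (Function.uncurry Ft) (strip b))
    (ha : Integrable (F a)) (hb : Integrable (F b))
    (hD : IntegrableOn D (Ioc a b))
    (hle : ∀ t ∈ Ioc a b, S.Good t → Integrable (Ft t) → ∫ x, Ft t x ≤ D t) :
    (∫ x, F b x) ≤ (∫ x, F a x) + ∫ t in a..b, D t := by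
  have hFi' := hFi.mono_measure (slab_le (b := b) ha0)
  have h := time_ftc hab hc (fun x t ht => hd x t (ha0.trans_lt ht.1)) hFi' ha hb
  have h2 : ∫ t in a..b, ∫ x, Ft t x ≤ ∫ t in a..b, D t := by
    rw [intervalIntegral.integral_of_le hab, intervalIntegral.integral_of_le hab]
    refine integral_mono_ae hFi'.integral_prod_left hD ?_
    filter_upwards [S.ae_good_slab ha0, hFi'.prod_right_ae] with t ht hi using hle t ht.1 ht.2 hi
  linarith

lemma θ_L2_increment {a b B : ℝ} (ha : 0 ≤ a) (hab : a ≤ b)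
    (hB : ∀ t ∈ Icc 0 b, ∫ x, (S.θ t x - 1) ^ 2 ≤ B) (r : ℝ) (hr : r = a ∨ r = b) :
    (∫ x, (S.θ b x - S.θ r x) ^ 2) - ∫ x, (S.θ a x - S.θ r x) ^ 2
      ≤ ∫ t in a..b, (4 * B + ∫ x, S.θt t x ^ 2) ∧
    (∫ x, (S.θ a x - S.θ r x) ^ 2) - ∫ x, (S.θ b x - S.θ r x) ^ 2
      ≤ ∫ t in a..b, (4 * B + ∫ x, S.θt t x ^ 2) := by
  have hb : 0 ≤ b := ha.trans hab
  have hrI : r ∈ Icc 0 b := by 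
    rcases hr with rfl | rfl
    exacts [⟨ha, hab⟩, ⟨hb, le_rfl⟩]
  have hi : ∀ t, MemLp (fun x => S.θ t x - S.θ r x) 2 := fun t => by
    refine ((S.lθ t).sub (S.lθ r)).ae_eq (ae_of_all _ fun x => ?_)
    simp
  have hc : ∀ x, Continuous fun t => (S.θ t x - S.θ r x) ^ 2 := fun x =>
    ((S.ctθ x).sub continuous_const).pow 2
  have hd : ∀ x, ∀ t, 0 < t → HasDerivAt (fun s => (S.θ s x - S.θ r x) ^ 2)
      (2 * (S.θ t x - S.θ r x) * S.θt t x) t := fun x t ht => by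
    refine (((S.tθ x t ht).sub_const (S.θ r x)).fun_pow 2).congr_deriv ?_
    simp [θt]
  have hst : MemLp (fun p : ℝ × ℝ => S.θ p.1 p.2 - S.θ r p.2) 2 (strip b) := by
    refine memLp_strip (f := fun t x => S.θ t x - S.θ r x) (G := fun t => 4 * B)
      (by unfold Function.uncurry; fun_prop) (integrableOn_const (by simp)) ?_
    filter_upwards [ae_restrict_mem measurableSet_Ioc] with t ht
    refine ⟨hi t, ?_⟩
    have h1 := hB t ⟨ht.1.le, ht.2⟩
    have h2 := hB r hrI
    calc ∫ x, (S.θ t x - S.θ r x) ^ 2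
        ≤ ∫ x, (2 * (S.θ t x - 1) ^ 2 + 2 * (S.θ r x - 1) ^ 2) :=
          integral_mono (hi t).integrable_sq
            (((S.lθ t).integrable_sq.const_mul 2).fun_add ((S.lθ r).integrable_sq.const_mul 2))
            fun x => by simp only; nlinarith [sq_nonneg ((S.θ t x - 1) + (S.θ r x - 1))]
      _ ≤ 4 * B := by
          rw [integral_add ((S.lθ t).integrable_sq.const_mul 2)
            ((S.lθ r).integrable_sq.const_mul 2), integral_const_mul, integral_const_mul]
          linarith
  have hFi : Integrable (Function.uncurry fun t x => 2 * (S.θ t x - S.θ r x) * S.θt t x)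
      (strip b) := by
    refine ((integrable_mul_of_memLp hst (S.strip_θt b)).const_mul 2).congr (ae_of_all _ fun p => ?_)
    simp [Function.uncurry]; ring
  have hD : IntegrableOn (fun t => 4 * B + ∫ x, S.θt t x ^ 2) (Ioc a b) := by
    have h1 : IntegrableOn (fun t => ∫ x, S.θt t x ^ 2) (Ioc 0 b) :=
      (S.strip_θt b).integrable_sq.integral_prod_left
    exact (integrable_const _).add (h1.mono_set (Ioc_subset_Ioc_left ha))
  have key : ∀ t ∈ Ioc a b, S.Good t →
      |∫ x, 2 * (S.θ t x - S.θ r x) * S.θt t x| ≤ 4 * B + ∫ x, S.θt t x ^ 2 := by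
    intro t ht hg
    have ht0 : 0 ≤ t := ha.trans ht.1.le
    have h1 := hB t ⟨ht0, ht.2⟩
    have h2 := hB r hrI
    have l := hg.lθt ht0
    refine abs_integral_le_integral_abs.trans ?_
    calc ∫ x, |2 * (S.θ t x - S.θ r x) * S.θt t x|
        ≤ ∫ x, (2 * (S.θ t x - 1) ^ 2 + 2 * (S.θ r x - 1) ^ 2 + S.θt t x ^ 2) := by
          refine integral_mono_of_nonneg (ae_of_all _ fun x => abs_nonneg _)
            ((((S.lθ t).integrable_sq.const_mul 2).fun_add
              ((S.lθ r).integrable_sq.const_mul 2)).fun_add l.integrable_sq)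
            (ae_of_all _ fun x => abs_le.2 ⟨?_, ?_⟩)
          · simp only
            nlinarith [sq_nonneg ((S.θ t x - 1) + (S.θ r x - 1)),
              sq_nonneg (S.θ t x - S.θ r x + S.θt t x)]
          · simp only
            nlinarith [sq_nonneg ((S.θ t x - 1) + (S.θ r x - 1)),
              sq_nonneg (S.θ t x - S.θ r x - S.θt t x)]
      _ ≤ 4 * B + ∫ x, S.θt t x ^ 2 := by
          rw [integral_add (((S.lθ t).integrable_sq.const_mul 2).fun_add
              ((S.lθ r).integrable_sq.const_mul 2)) l.integrable_sq,
            integral_add ((S.lθ t).integrable_sq.const_mul 2)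
            ((S.lθ r).integrable_sq.const_mul 2), integral_const_mul, integral_const_mul]
          linarith
  constructor
  · have := S.increment_le ha hab hc hd hFi (hi a).integrable_sq (hi b).integrable_sq hD
      fun t ht hg _ => (abs_le.1 (key t ht hg)).2
    linarith
  · have := S.increment_le (F := fun t x => -(S.θ t x - S.θ r x) ^ 2)
      (Ft := fun t x => -(2 * (S.θ t x - S.θ r x) * S.θt t x)) ha hab (fun x => (hc x).neg)
      (fun x t ht => (hd x t ht).neg) hFi.neg (hi a).integrable_sq.neg (hi b).integrable_sq.neg hD
      fun t ht hg _ => by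
        rw [integral_neg]; linarith [(abs_le.1 (key t ht hg)).1]
    rw [integral_neg, integral_neg] at this
    linarith

/-- The temperature is bounded away from zero on compact time intervals: it is continuous in time
with values in `L²`, hence, by Agmon's inequality, uniformly in space. -/
lemma θ_lower (T : ℝ) : ∃ c, 0 < c ∧ ∀ t ∈ Icc 0 T, ∀ x, c ≤ S.θ t x := by
  obtain ⟨B, hB⟩ := S.h1 T
  have hBθ : ∀ t ∈ Icc 0 T, ∫ x, (S.θ t x - 1) ^ 2 ≤ B := fun t ht => (hB t ht).2.2.1
  have hBθx : ∀ t ∈ Icc 0 T, ∫ x, S.θx t x ^ 2 ≤ B := fun t ht => (hB t ht).2.2.2.2.2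
  set g : ℝ → ℝ := fun t => 4 * B + ∫ x, S.θt t x ^ 2 with hg
  have hgI : ∀ a b, 0 ≤ a → b ≤ T → IntegrableOn g (Ioc a b) := fun a b ha hb => by
    have h1 : IntegrableOn (fun t => ∫ x, S.θt t x ^ 2) (Ioc 0 T) :=
      (S.strip_θt T).integrable_sq.integral_prod_left
    exact (integrable_const _).add (h1.mono_set (Ioc_subset_Ioc ha hb))
  refine IsCompact.induction_on (p := fun s => ∃ c, 0 < c ∧ ∀ t ∈ s, ∀ x, c ≤ S.θ t x)
    (isCompact_Icc (a := (0 : ℝ)) (b := T)) ⟨1, one_pos, by simp⟩ ?_ ?_ ?_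
  · rintro s t hst ⟨c, hc, h⟩
    exact ⟨c, hc, fun r hr => h r (hst hr)⟩
  · rintro s t ⟨c, hc, h⟩ ⟨d, hd, h'⟩
    refine ⟨min c d, lt_min hc hd, ?_⟩
    rintro r (hr | hr) x
    · exact (min_le_left _ _).trans (h r hr x)
    · exact (min_le_right _ _).trans (h' r hr x)
  · intro s hs
    obtain ⟨c, hc, hcs⟩ := S.θ_lb s
    have hT : 0 ≤ T := hs.1.trans hs.2
    have hcont : ContinuousOn (fun t => ∫ r in (0 : ℝ)..t, g r) (Icc 0 T) := by
      have h3 : IntegrableOn g (uIcc 0 T) volume := by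
        rw [uIcc_of_le hT, integrableOn_Icc_iff_integrableOn_Ioc]; exact hgI 0 T le_rfl le_rfl
      have := intervalIntegral.continuousOn_primitive_interval h3
      rwa [uIcc_of_le hT] at this
    have hB0 : 0 ≤ B := (integral_nonneg fun x => sq_nonneg _).trans (hBθ s hs)
    have hε : 0 < (c / 2) ^ 4 / (16 * B + 1) := by positivity
    have hev := Metric.tendsto_nhds.1 (hcont s hs) _ hε
    refine ⟨{t | dist (∫ r in (0 : ℝ)..t, g r) (∫ r in (0 : ℝ)..s, g r)
      < (c / 2) ^ 4 / (16 * B + 1)} ∩ Icc 0 T, inter_mem hev self_mem_nhdsWithin, c / 2,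
      by positivity, ?_⟩
    rintro t ⟨ht1, ht⟩ x
    have hsq : ∫ x, (S.θ t x - S.θ s x) ^ 2 < (c / 2) ^ 4 / (16 * B + 1) := by
      refine lt_of_le_of_lt ?_ ht1
      have hii : ∀ t ∈ Icc 0 T, IntervalIntegrable g volume 0 t := fun t ht =>
        (intervalIntegrable_iff_integrableOn_Ioc_of_le ht.1).2 (hgI 0 t le_rfl ht.2)
      rw [Real.dist_eq, intervalIntegral.integral_interval_sub_left (hii t ht) (hii s hs)]
      rcases le_total s t with hst | hst
      · have := (S.θ_L2_increment hs.1 hst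
          (fun r hr => hBθ r ⟨hr.1, hr.2.trans ht.2⟩) s (Or.inl rfl)).1
        simp only [sub_self, ne_eq, OfNat.ofNat_ne_zero, not_false_eq_true, zero_pow,
          integral_zero, sub_zero] at this
        exact this.trans (le_abs_self _)
      · have := (S.θ_L2_increment ht.1 hst
          (fun r hr => hBθ r ⟨hr.1, hr.2.trans hs.2⟩) s (Or.inr rfl)).2
        simp only [sub_self, ne_eq, OfNat.ofNat_ne_zero, not_false_eq_true, zero_pow,
          integral_zero, sub_zero] at this
        rw [intervalIntegral.integral_symm, abs_neg]
        exact this.trans (le_abs_self _)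
    have hm : MemLp (fun x => S.θ t x - S.θ s x) 2 := by
      refine ((S.lθ t).sub (S.lθ s)).ae_eq (ae_of_all _ fun x => ?_)
      simp
    have hmx : MemLp (fun x => S.θx t x - S.θx s x) 2 := (S.lθx t).sub (S.lθx s)
    have hx4 : ∫ x, (S.θx t x - S.θx s x) ^ 2 ≤ 4 * B := by
      have i1 := (S.lθx t).integrable_sq.const_mul 2
      have i2 := (S.lθx s).integrable_sq.const_mul 2
      calc ∫ x, (S.θx t x - S.θx s x) ^ 2
          ≤ ∫ x, (2 * S.θx t x ^ 2 + 2 * S.θx s x ^ 2) :=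
            integral_mono hmx.integrable_sq (i1.fun_add i2)
              fun x => by simp only; nlinarith [sq_nonneg (S.θx t x + S.θx s x)]
        _ ≤ 4 * B := by
            rw [integral_add i1 i2, integral_const_mul, integral_const_mul]
            linarith [hBθx t ht, hBθx s hs]
    have h4 := agmon (fun x => (S.dθ t x).sub (S.dθ s x)) hm hmx x
    simp only [Pi.sub_apply] at h4
    have h5 : (S.θ t x - S.θ s x) ^ 4 ≤ (c / 2) ^ 4 := by
      have hi0 : 0 ≤ ∫ x, (S.θ t x - S.θ s x) ^ 2 := integral_nonneg fun x => sq_nonneg _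
      have h6 : (∫ x, (S.θ t x - S.θ s x) ^ 2) * (16 * B + 1) ≤ (c / 2) ^ 4 :=
        (le_div_iff₀ (by positivity)).1 hsq.le
      nlinarith
    have h7 : |S.θ t x - S.θ s x| ≤ c / 2 := by
      have : |S.θ t x - S.θ s x| ^ 4 ≤ (c / 2) ^ 4 := by
        rw [Even.pow_abs (by decide)]; exact h5
      exact (pow_le_pow_iff_left₀ (abs_nonneg _) (by positivity) (by norm_num)).1 this
    linarith [hcs x, (abs_le.1 h7).1]

lemma bdd (T : ℝ) : ∃ B, 1 ≤ B ∧ ∀ t ∈ Icc 0 T, ∀ x,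
    |S.u t x| ≤ B ∧ S.θ t x ≤ B ∧ B⁻¹ ≤ S.θ t x := by
  obtain ⟨B, hB1, hB⟩ := S.bdd_upper T
  obtain ⟨c, hc, h⟩ := S.θ_lower T
  refine ⟨max B c⁻¹, hB1.trans (le_max_left _ _), fun t ht x => ⟨?_, ?_, ?_⟩⟩
  · exact (hB t ht x).1.trans (le_max_left _ _)
  · exact (hB t ht x).2.trans (le_max_left _ _)
  · exact (inv_le_of_inv_le₀ hc (le_max_right _ _)).trans (h t ht x)

/-! ### Effective stress and heat flux -/

/-- The effective viscous stress, normalised to vanish at the far field; `a_x = u_t`. -/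
noncomputable def a (t x : ℝ) : ℝ := S.μ * S.ux t x / S.v t x - S.R * S.θ t x / S.v t x + S.R

/-- The heat flux. -/
noncomputable def q (t x : ℝ) : ℝ := S.κ * S.θx t x / S.v t x

/-- The spatial derivative of the heat flux. -/
noncomputable def qx (t x : ℝ) : ℝ :=
  S.κ * (S.θxx t x / S.v t x - S.θx t x * S.vx t x / S.v t x ^ 2)

@[fun_prop] lemma meas_a {α : Type*} [MeasurableSpace α] {f g : α → ℝ}
    (hf : Measurable f) (hg : Measurable g) :
    Measurable fun y => S.a (f y) (g y) := by unfold a; fun_prop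
@[fun_prop] lemma meas_q {α : Type*} [MeasurableSpace α] {f g : α → ℝ}
    (hf : Measurable f) (hg : Measurable g) :
    Measurable fun y => S.q (f y) (g y) := by unfold q; fun_prop

lemma da (t x : ℝ) : HasDerivAt (S.a t) (S.ut t x) x := by
  have hv := (S.v_pos t x).ne'
  refine (((((S.dux t x).const_mul S.μ).div (S.dv t x) hv).sub
    (((S.dθ t x).const_mul S.R).div (S.dv t x) hv)).add_const S.R).congr_deriv ?_
  unfold ut; field_simp

lemma dqf (t x : ℝ) : HasDerivAt (S.q t) (S.qx t x) x := by
  have hv := (S.v_pos t x).ne'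
  refine (((S.dθx t x).const_mul S.κ).div (S.dv t x) hv).congr_deriv ?_
  unfold qx; field_simp

lemma cv_θt (t x : ℝ) : S.cv * S.θt t x = S.qx t x + S.ux t x * (S.a t x - S.R) := by
  have hv := (S.v_pos t x).ne'
  have := S.hcv.ne'
  unfold θt qx a; field_simp; ring

lemma la (t : ℝ) : MemLp (S.a t) 2 := by
  have mb : Measurable (fun x => (S.v t x)⁻¹) := by fun_prop
  have e1 := memLp_bdd_mul' (S.lux t) mb fun x => S.abs_inv_v_le t x
  have e2 := memLp_bdd_mul' ((S.lv t).sub (S.lθ t)) mb fun x => S.abs_inv_v_le t x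
  refine ((e1.const_mul S.μ).add (e2.const_mul S.R)).ae_eq (ae_of_all _ fun x => ?_)
  have := (S.v_pos t x).ne'
  simp only [Pi.add_apply, Pi.sub_apply, a]
  field_simp; ring

lemma lq (t : ℝ) : MemLp (S.q t) 2 := by
  have mb : Measurable (fun x => (S.v t x)⁻¹) := by fun_prop
  have e1 := memLp_bdd_mul' (S.lθx t) mb fun x => S.abs_inv_v_le t x
  refine (e1.const_mul S.κ).ae_eq (ae_of_all _ fun x => ?_)
  simp only [q]; ring

variable {S} in
lemma Good.lqx {t : ℝ} (h : S.Good t) : MemLp (S.qx t) 2 := by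
  have mb : Measurable (fun x => (S.v t x)⁻¹) := by fun_prop
  have hb : ∀ x, |(S.v t x)⁻¹| ≤ S.K := fun x => S.abs_inv_v_le t x
  have e1 := memLp_bdd_mul' h.2 mb hb
  have e2 := memLp_bdd_mul' (memLp_bdd_mul'
    (memLp_mul_of_deriv (S.dθx t) (S.lθx t) h.2 (S.lvx t)).1 mb hb) mb hb
  refine ((e1.sub e2).const_mul S.κ).ae_eq (ae_of_all _ fun x => ?_)
  have := (S.v_pos t x).ne'
  simp only [Pi.sub_apply, qx]
  field_simp

end GasFlow

/-! ### Generalised entropies -/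

/-- Composition with the positive part preserves differentiability when the derivative vanishes
at the origin. -/
lemma hasDerivAt_posPart {f f' : ℝ → ℝ} (hd : ∀ r, 0 ≤ r → HasDerivAt f (f' r) r) (h0 : f' 0 = 0)
    (w : ℝ) : HasDerivAt (fun w => f (max w 0)) (f' (max w 0)) w := by
  rcases lt_trichotomy w 0 with hw | hw | hw
  · rw [max_eq_right hw.le, h0]
    refine (hasDerivAt_const w (f 0)).congr_of_eventuallyEq ?_
    filter_upwards [Iio_mem_nhds hw] with y hy
    rw [max_eq_right (le_of_lt hy)]
  · subst hw
    rw [max_self, h0]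
    have h1 : HasDerivWithinAt (fun w => f (max w 0)) 0 (Iic 0) 0 := by
      refine (hasDerivWithinAt_const (0 : ℝ) (Iic 0) (f 0)).congr (fun y hy => ?_) (by simp)
      rw [max_eq_right hy]
    have h2 : HasDerivWithinAt (fun w => f (max w 0)) 0 (Ici 0) 0 := by
      have := (hd 0 le_rfl).hasDerivWithinAt (s := Ici 0)
      rw [h0] at this
      refine this.congr (fun y hy => ?_) (by simp)
      rw [max_eq_left hy]
    have := h1.union h2
    rwa [Iic_union_Ici, hasDerivWithinAt_univ] at this
  · rw [max_eq_left hw.le]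
    refine (hd w hw.le).congr_of_eventuallyEq ?_
    filter_upwards [Ioi_mem_nhds hw] with y hy
    rw [max_eq_left (le_of_lt hy)]

/-- The weight `1/y + c ((1 - 4/y)₊)²`, written through `s = (y - 4)₊`. -/
noncomputable def wt (c y : ℝ) : ℝ :=
  1 / y + c * (max (y - 4) 0 / (max (y - 4) 0 + 4)) ^ 2

/-- The derivative of `wt c`. -/
noncomputable def wt' (c y : ℝ) : ℝ :=
  -1 / y ^ 2 + c * (8 * max (y - 4) 0 / (max (y - 4) 0 + 4) ^ 3)

/-- The antiderivative of `s² / (s + 4)²` vanishing at `0`. -/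
noncomputable def qent (s : ℝ) : ℝ := s + 4 - 8 * Real.log ((s + 4) / 4) - 16 / (s + 4)

/-- The antiderivative of `1 - wt c` vanishing at `1`. -/
noncomputable def gent (c y : ℝ) : ℝ := ent y - c * qent (max (y - 4) 0)

lemma hasDerivAt_ent {y : ℝ} (hy : 0 < y) : HasDerivAt ent (1 - 1 / y) y := by
  refine (((hasDerivAt_id y).sub_const 1).sub (Real.hasDerivAt_log hy.ne')).congr_deriv ?_
  simp

lemma hasDerivAt_wt (c : ℝ) {y : ℝ} (hy : 0 < y) : HasDerivAt (wt c) (wt' c y) y := by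
  have h1 : ∀ r : ℝ, 0 ≤ r → HasDerivAt (fun s : ℝ => (s / (s + 4)) ^ 2)
      (8 * r / (r + 4) ^ 3) r := fun r hr => by
    have hr4 : r + 4 ≠ 0 := by positivity
    refine (((hasDerivAt_id r).div ((hasDerivAt_id r).add_const 4) hr4).fun_pow 2).congr_deriv ?_
    simp; field_simp; ring
  have h2 := (hasDerivAt_posPart h1 (by simp) (y - 4)).comp_sub_const y 4
  have h3 := (hasDerivAt_inv hy.ne')
  refine (h3.add (h2.const_mul c)).congr_deriv ?_ |>.congr_of_eventuallyEq ?_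
  · unfold wt'; ring
  · exact Eventually.of_forall fun z => by simp [wt]

lemma hasDerivAt_gent (c : ℝ) {y : ℝ} (hy : 0 < y) : HasDerivAt (gent c) (1 - wt c y) y := by
  have h1 : ∀ r : ℝ, 0 ≤ r → HasDerivAt qent ((r / (r + 4)) ^ 2) r := fun r hr => by
    have hr4 : r + 4 ≠ 0 := by positivity
    have e1 := (hasDerivAt_id r).add_const (4 : ℝ)
    have e2 := ((e1.div_const 4).log (by positivity)).const_mul 8
    have e3 := (hasDerivAt_const r (16 : ℝ)).div e1 hr4
    refine ((e1.sub e2).sub e3).congr_deriv ?_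
    simp; field_simp; ring
  have h2 := (hasDerivAt_posPart h1 (by simp) (y - 4)).comp_sub_const y 4
  refine ((hasDerivAt_ent hy).sub (h2.const_mul c)).congr_deriv ?_
  unfold wt; ring

lemma abs_qent_le {s : ℝ} (hs : 0 ≤ s) : |qent s| ≤ s := by
  have h4 : 0 < s + 4 := by positivity
  have h1 := Real.log_le_sub_one_of_pos (show 0 < (s + 4) / 4 by positivity)
  have h2 := Real.one_sub_inv_le_log_of_pos (show 0 < (s + 4) / 4 by positivity)
  have e : ((s + 4) / 4)⁻¹ = 16 / (s + 4) / 4 := by field_simp; norm_num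
  have h3 : 16 / (s + 4) ≤ 4 := by rw [div_le_iff₀ h4]; linarith
  rw [e] at h2
  unfold qent
  rw [abs_le]; constructor <;> linarith

lemma gent_ge {c y : ℝ} (hc : 0 ≤ c) (hc' : c ≤ 1 / 8) (hy : 0 < y) : 0 ≤ gent c y := by
  have h := ent_nonneg hy
  have h1 := (abs_le.1 (abs_qent_le (le_max_right (y - 4) 0))).2
  unfold gent
  rcases le_total y 4 with h4 | h4
  · rw [max_eq_right (by linarith)] at *
    nlinarith
  · have := le_ent_of_four_le h4
    rw [max_eq_left (by linarith)] at *
    nlinarith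

lemma gent_le {c y : ℝ} (hc : 0 ≤ c) (hc' : c ≤ 1 / 8) (hy : 0 < y) :
    gent c y ≤ ent y + (y - 1) ^ 2 := by
  have h1 := (abs_le.1 (abs_qent_le (le_max_right (y - 4) 0))).1
  unfold gent
  rcases le_total y 4 with h4 | h4
  · rw [max_eq_right (by linarith)] at *
    nlinarith
  · rw [max_eq_left (by linarith)] at *
    nlinarith

lemma abs_one_sub_wt_le {c y B : ℝ} (hc : 0 ≤ c) (hc' : c ≤ 1 / 8) (hB : 0 < B)
    (hy : B⁻¹ ≤ y) : |1 - wt c y| ≤ (B + 1) * |y - 1| := by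
  have hy0 : 0 < y := (inv_pos.2 hB).trans_le hy
  have hs := le_max_right (y - 4) 0
  have h1 : max (y - 4) 0 / (max (y - 4) 0 + 4) ≤ 1 := by
    rw [div_le_one (by positivity)]; linarith
  have h1' : max (y - 4) 0 / (max (y - 4) 0 + 4) ≤ max (y - 4) 0 :=
    div_le_self hs (by linarith)
  have h1'' : 0 ≤ max (y - 4) 0 / (max (y - 4) 0 + 4) := by positivity
  have h2 : max (y - 4) 0 ≤ |y - 1| := max_le ((by linarith : y - 4 ≤ y - 1).trans (le_abs_self _))
    (abs_nonneg _)
  have e : 1 - wt c y = y⁻¹ * (y - 1) - c * (max (y - 4) 0 / (max (y - 4) 0 + 4)) ^ 2 := by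
    unfold wt; field_simp; ring
  have h3 : y⁻¹ ≤ B := inv_le_of_inv_le₀ hB hy
  rw [e]
  refine (abs_sub _ _).trans ?_
  rw [abs_mul, abs_of_pos (inv_pos.2 hy0),
    abs_of_nonneg (a := c * (max (y - 4) 0 / (max (y - 4) 0 + 4)) ^ 2) (by positivity)]
  have h4 : y⁻¹ * |y - 1| ≤ B * |y - 1| := by gcongr
  have h5 : c * (max (y - 4) 0 / (max (y - 4) 0 + 4)) ^ 2 ≤ 1 * |y - 1| := by
    gcongr
    · linarith
    · nlinarith
  linarith

lemma wt'_le (c : ℝ) (hc' : c ≤ 1 / 8) {y : ℝ} (hy : 0 < y) : wt' c y ≤ 0 := by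
  unfold wt'
  rcases le_total y 4 with h4 | h4
  · rw [max_eq_right (by linarith)]
    simp; rw [neg_div]; simp; positivity
  · rw [max_eq_left (by linarith)]
    have : c * (8 * (y - 4) / (y - 4 + 4) ^ 3) ≤ 1 / 8 * (8 * (y - 4) / (y - 4 + 4) ^ 3) := by
      have : 0 ≤ y - 4 := by linarith
      gcongr
    refine (add_le_add_right this _).trans ?_
    have e : -1 / y ^ 2 + 1 / 8 * (8 * (y - 4) / (y - 4 + 4) ^ 3) = -(4 / y ^ 3) := by
      field_simp; ring
    rw [e]; simp; positivity

lemma abs_wt'_le {c y B : ℝ} (hc : 0 ≤ c) (hc' : c ≤ 1 / 8) (hB : 0 < B)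
    (hy : B⁻¹ ≤ y) : |wt' c y| ≤ B ^ 2 := by
  have hy0 : 0 < y := (inv_pos.2 hB).trans_le hy
  have h3 : y⁻¹ ≤ B := inv_le_of_inv_le₀ hB hy
  rw [abs_of_nonpos (wt'_le c hc' hy0)]
  have hs := le_max_right (y - 4) 0
  have : 0 ≤ c * (8 * max (y - 4) 0 / (max (y - 4) 0 + 4) ^ 3) := by positivity
  have e : -wt' c y = y⁻¹ ^ 2 - c * (8 * max (y - 4) 0 / (max (y - 4) 0 + 4) ^ 3) := by
    unfold wt'; field_simp; ring
  rw [e]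
  have : y⁻¹ ^ 2 ≤ B ^ 2 := by gcongr
  linarith

lemma mul_wt_sub_one {c y : ℝ} (hy : 0 < y) :
    y * wt c y - 1 = c * y * (max (y - 4) 0 / (max (y - 4) 0 + 4)) ^ 2 := by
  unfold wt; field_simp; ring

lemma le_wt {y : ℝ} (hy : 0 < y) : 1 / 32 ≤ wt (1 / 8) y := by
  have hs := le_max_right (y - 4) 0
  unfold wt
  rcases le_total y 8 with h | h
  · have : 1 / 8 ≤ 1 / y := one_div_le_one_div_of_le hy h
    have : 0 ≤ 1 / 8 * (max (y - 4) 0 / (max (y - 4) 0 + 4)) ^ 2 := by positivity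
    linarith
  · rw [max_eq_left (by linarith)]
    have h1 : 1 / 2 ≤ (y - 4) / (y - 4 + 4) := by
      rw [div_le_div_iff₀ (by norm_num) (by linarith)]; linarith
    have : 0 < 1 / y := by positivity
    nlinarith

@[fun_prop] lemma meas_wt (c : ℝ) : Measurable (wt c) := by unfold wt; fun_prop
@[fun_prop] lemma meas_wt' (c : ℝ) : Measurable (wt' c) := by unfold wt'; fun_prop
@[fun_prop] lemma meas_ent : Measurable ent := by unfold ent; fun_prop
@[fun_prop] lemma meas_gent (c : ℝ) : Measurable (gent c) := by unfold gent qent; fun_prop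

lemma integrable_bdd_mul_mul {α : Type*} [MeasurableSpace α] {ν : Measure α} {b f g : α → ℝ}
    (hf : MemLp f 2 ν) (hg : MemLp g 2 ν) (hb : Measurable b) {C : ℝ} (h : ∀ᵐ x ∂ν, |b x| ≤ C) :
    Integrable (fun x => b x * f x * g x) ν :=
  integrable_mul_of_memLp (memLp_bdd_mul hf hb.aestronglyMeasurable h) hg

namespace GasFlow
variable (S : GasFlow)

lemma ent_v_le (t x : ℝ) : ent (S.v t x) ≤ S.K * (S.v t x - 1) ^ 2 := by
  refine (ent_le (S.v_pos t x)).trans ?_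
  rw [div_eq_inv_mul]
  exact mul_le_mul_of_nonneg_right (S.inv_v_le t x) (sq_nonneg _)

lemma int_ent_v (t : ℝ) : Integrable fun x => ent (S.v t x) := by
  refine ((S.lv t).integrable_sq.const_mul S.K).mono'
    (by fun_prop : Measurable _).aestronglyMeasurable (ae_of_all _ fun x => ?_)
  rw [Real.norm_eq_abs, abs_of_nonneg (ent_nonneg (S.v_pos t x))]
  exact S.ent_v_le t x

lemma int_ent_θ (t : ℝ) : Integrable fun x => ent (S.θ t x) := by
  obtain ⟨c, hc, h⟩ := S.θ_lb t
  refine ((S.lθ t).integrable_sq.const_mul c⁻¹).mono'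
    (by fun_prop : Measurable _).aestronglyMeasurable (ae_of_all _ fun x => ?_)
  rw [Real.norm_eq_abs, abs_of_nonneg (ent_nonneg (S.θ_pos t x))]
  refine (ent_le (S.θ_pos t x)).trans ?_
  rw [div_eq_inv_mul]
  exact mul_le_mul_of_nonneg_right (inv_anti₀ hc (h x)) (sq_nonneg _)

lemma int_gent_θ {c : ℝ} (hc : 0 ≤ c) (hc' : c ≤ 1 / 8) (t : ℝ) :
    Integrable fun x => gent c (S.θ t x) := by
  refine ((S.int_ent_θ t).add (S.lθ t).integrable_sq).mono'
    (by fun_prop : Measurable _).aestronglyMeasurable (ae_of_all _ fun x => ?_)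
  rw [Real.norm_eq_abs, abs_of_nonneg (gent_ge hc hc' (S.θ_pos t x))]
  exact gent_le hc hc' (S.θ_pos t x)

/-- The generalised entropy density. -/
noncomputable def Efun (c t x : ℝ) : ℝ :=
  S.u t x ^ 2 / 2 + S.R * ent (S.v t x) + S.cv * gent c (S.θ t x)

/-- The time derivative of the generalised entropy density. -/
noncomputable def Et (c t x : ℝ) : ℝ :=
  S.u t x * S.ut t x + S.R * ((1 - 1 / S.v t x) * S.ux t x)
    + S.cv * ((1 - wt c (S.θ t x)) * S.θt t x)

/-- The entropy production density (up to sign). -/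
noncomputable def dens (c t x : ℝ) : ℝ :=
  -(S.μ * (wt c (S.θ t x) / S.v t x * S.ux t x * S.ux t x))
    + S.R * (1 / S.v t x * S.ux t x * (S.θ t x * wt c (S.θ t x) - 1))
    + S.κ * (wt' c (S.θ t x) / S.v t x * S.θx t x * S.θx t x)

lemma int_Efun {c : ℝ} (hc : 0 ≤ c) (hc' : c ≤ 1 / 8) (t : ℝ) : Integrable (S.Efun c t) :=
  (((S.lu t).integrable_sq.div_const 2).add ((S.int_ent_v t).const_mul S.R)).add
    ((S.int_gent_θ hc hc' t).const_mul S.cv)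

lemma int_Et {c : ℝ} (hc : 0 ≤ c) (hc' : c ≤ 1 / 8) (T : ℝ) :
    Integrable (Function.uncurry (S.Et c)) (strip T) := by
  obtain ⟨B, hB1, hB⟩ := S.bdd T
  have hB0 : 0 < B := by linarith
  have e1 := integrable_mul_of_memLp (S.strip_u T) (S.strip_ut T)
  have e2 : MemLp (fun p : ℝ × ℝ => 1 - 1 / S.v p.1 p.2) 2 (strip T) := by
    refine (S.strip_v T).of_le_mul (c := S.K) (by fun_prop : Measurable _).aestronglyMeasurable
      (ae_of_all _ fun p => ?_)
    have hv := S.v_pos p.1 p.2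
    rw [show 1 - 1 / S.v p.1 p.2 = (S.v p.1 p.2)⁻¹ * (S.v p.1 p.2 - 1) by field_simp, norm_mul]
    exact mul_le_mul_of_nonneg_right (S.abs_inv_v_le _ _) (norm_nonneg _)
  have e3 : MemLp (fun p : ℝ × ℝ => 1 - wt c (S.θ p.1 p.2)) 2 (strip T) := by
    refine (S.strip_θ T).of_le_mul (c := B + 1) (by fun_prop : Measurable _).aestronglyMeasurable ?_
    refine ae_strip (P := fun t x => ‖1 - wt c (S.θ t x)‖ ≤ (B + 1) * ‖S.θ t x - 1‖)
      fun t ht x => abs_one_sub_wt_le hc hc' hB0 (hB t ht x).2.2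
  exact (e1.add ((integrable_mul_of_memLp e2 (S.strip_ux T)).const_mul S.R)).add
    ((integrable_mul_of_memLp e3 (S.strip_θt T)).const_mul S.cv)

lemma bdd_slice {t : ℝ} (ht : 0 ≤ t) : ∃ B, 0 < B ∧ ∀ x,
    |S.u t x| ≤ B ∧ S.θ t x ≤ B ∧ B⁻¹ ≤ S.θ t x := by
  obtain ⟨B, hB1, hB⟩ := S.bdd t
  exact ⟨B, by linarith, hB t ⟨ht, le_rfl⟩⟩

lemma int_dens {c : ℝ} (hc : 0 ≤ c) (hc' : c ≤ 1 / 8) {t : ℝ} (ht : 0 ≤ t) :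
    Integrable (S.dens c t) := by
  obtain ⟨B, hB0, hB⟩ := S.bdd_slice ht
  have hlip : ∀ x, |1 - wt c (S.θ t x)| ≤ (B + 1) * |S.θ t x - 1| := fun x =>
    abs_one_sub_wt_le hc hc' hB0 (hB x).2.2
  have hθ1 : ∀ x, |S.θ t x - 1| ≤ B + 1 := fun x => by
    have := (hB x).2.1
    have := S.θ_pos t x
    rw [abs_le]; constructor <;> linarith
  have hwt : ∀ x, |wt c (S.θ t x)| ≤ (B + 1) * (B + 1) + 1 := fun x => by
    have h1 := (hlip x).trans (mul_le_mul_of_nonneg_left (hθ1 x) (by positivity))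
    rw [abs_le] at h1 ⊢
    constructor <;> linarith [h1.1, h1.2]
  have hinv : ∀ x, 0 < (S.v t x)⁻¹ := fun x => inv_pos.2 (S.v_pos t x)
  have e1 := integrable_bdd_mul_mul (S.lux t) (S.lux t)
    (b := fun x => wt c (S.θ t x) / S.v t x) (by fun_prop)
    (C := ((B + 1) * (B + 1) + 1) * S.K) (ae_of_all _ fun x => by
      rw [div_eq_mul_inv, abs_mul]
      exact mul_le_mul (hwt x) (S.abs_inv_v_le t x) (abs_nonneg _) (by positivity))
  have m2 : MemLp (fun x => S.θ t x * wt c (S.θ t x) - 1) 2 := by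
    refine (S.lθ t).of_le_mul (c := B * (B + 1) + 1)
      (by fun_prop : Measurable _).aestronglyMeasurable (ae_of_all _ fun x => ?_)
    have e : S.θ t x * wt c (S.θ t x) - 1
        = (S.θ t x - 1) - S.θ t x * (1 - wt c (S.θ t x)) := by ring
    rw [Real.norm_eq_abs, Real.norm_eq_abs, e]
    refine (abs_sub _ _).trans ?_
    rw [abs_mul, abs_of_pos (S.θ_pos t x)]
    have : S.θ t x * |1 - wt c (S.θ t x)| ≤ B * ((B + 1) * |S.θ t x - 1|) :=
      mul_le_mul (hB x).2.1 (hlip x) (abs_nonneg _) hB0.le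
    linarith
  have e2 := integrable_bdd_mul_mul (S.lux t) m2 (b := fun x => 1 / S.v t x) (by fun_prop)
    (C := S.K) (ae_of_all _ fun x => by rw [one_div]; exact S.abs_inv_v_le t x)
  have e3 := integrable_bdd_mul_mul (S.lθx t) (S.lθx t)
    (b := fun x => wt' c (S.θ t x) / S.v t x) (by fun_prop)
    (C := B ^ 2 * S.K) (ae_of_all _ fun x => by
      rw [div_eq_mul_inv, abs_mul]
      exact mul_le_mul (abs_wt'_le hc hc' hB0 (hB x).2.2) (S.abs_inv_v_le t x) (abs_nonneg _)
        (by positivity))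
  exact (((e1.const_mul S.μ).neg).add (e2.const_mul S.R)).add (e3.const_mul S.κ)

/-- The entropy flux identity, integrated in space. -/
lemma integral_Et {c : ℝ} (hc : 0 ≤ c) (hc' : c ≤ 1 / 8) {t : ℝ} (ht : 0 ≤ t)
    (hi : Integrable (S.Et c t)) : ∫ x, S.Et c t x = ∫ x, S.dens c t x := by
  obtain ⟨B, hB0, hB⟩ := S.bdd_slice ht
  have hd : ∀ x, HasDerivAt (fun x => S.u t x * S.a t x + (1 - wt c (S.θ t x)) * S.q t x)
      (S.Et c t x - S.dens c t x) x := fun x => by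
    refine (((S.du t x).mul (S.da t x)).add
      ((((hasDerivAt_wt c (S.θ_pos t x)).comp x (S.dθ t x)).const_sub 1).mul
        (S.dqf t x))).congr_deriv ?_
    have h1 := S.cv_θt t x
    have h2 : S.qx t x = S.cv * S.θt t x - S.ux t x * (S.a t x - S.R) := by linarith
    simp only [Function.comp]
    rw [h2]
    have := (S.v_pos t x).ne'
    unfold Et dens a q
    field_simp
    ring
  have m3 : MemLp (fun x => 1 - wt c (S.θ t x)) 2 :=
    (S.lθ t).of_le_mul (c := B + 1) (by fun_prop : Measurable _).aestronglyMeasurable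
      (ae_of_all _ fun x => abs_one_sub_wt_le hc hc' hB0 (hB x).2.2)
  have hP := (integrable_mul_of_memLp (S.lu t) (S.la t)).add
    (integrable_mul_of_memLp m3 (S.lq t))
  have hde := S.int_dens hc hc' ht
  have h0 := integral_eq_zero_of_hasDerivAt_of_integrable hd (hi.sub hde) hP
  rw [integral_sub hi hde] at h0
  linarith

lemma entropy_increment {c : ℝ} (hc : 0 ≤ c) (hc' : c ≤ 1 / 8) {D : ℝ → ℝ} {a b : ℝ}
    (ha : 0 ≤ a) (hab : a ≤ b) (hD : IntegrableOn D (Ioc a b))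
    (hle : ∀ t ∈ Ioc a b, ∫ x, S.dens c t x ≤ D t) :
    (∫ x, S.Efun c b x) ≤ (∫ x, S.Efun c a x) + ∫ t in a..b, D t := by
  have pos : ∀ x t, 0 < t → HasDerivAt (fun s => S.Efun c s x) (S.Et c t x) t := fun x t ht => by
    refine (((((S.tu x t ht).fun_pow 2).div_const 2).add
      (((hasDerivAt_ent (S.v_pos t x)).comp t (S.tv x t ht)).const_mul S.R)).add
      (((hasDerivAt_gent c (S.θ_pos t x)).comp t (S.tθ x t ht)).const_mul S.cv)).congr_deriv ?_
    simp only [Et, ut, θt]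
    ring
  have cont : ∀ x, Continuous fun t => S.Efun c t x := fun x => by
    have c1 : ∀ {f : ℝ → ℝ}, (∀ y, 0 < y → ContinuousAt f y) → ∀ {g : ℝ → ℝ}, Continuous g →
        (∀ t, 0 < g t) → Continuous fun t => f (g t) := fun hf g hg h =>
      continuous_iff_continuousAt.2 fun t => (hf _ (h t)).comp hg.continuousAt
    exact ((((S.ctu x).pow 2).div_const 2).add (continuous_const.mul
      (c1 (fun y hy => (hasDerivAt_ent hy).continuousAt) (S.ctv x) fun t => S.v_pos t x))).add
      (continuous_const.mul (c1 (fun y hy => (hasDerivAt_gent c hy).continuousAt) (S.ctθ x)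
        fun t => S.θ_pos t x))
  exact S.increment_le ha hab cont pos (S.int_Et hc hc' b) (S.int_Efun hc hc' a)
    (S.int_Efun hc hc' b) hD fun t ht _ hi => by
      rw [S.integral_Et hc hc' (ha.trans ht.1.le) hi]; exact hle t ht

/-! ### The basic energy bound and its consequences -/

/-- The entropy production due to heat conduction. -/
noncomputable def V (t : ℝ) : ℝ := ∫ x, ((S.θ t x)⁻¹ * S.θx t x) ^ 2

lemma V_nonneg (t : ℝ) : 0 ≤ S.V t := integral_nonneg fun x => sq_nonneg _

lemma lV {t : ℝ} (ht : 0 ≤ t) : MemLp (fun x => (S.θ t x)⁻¹ * S.θx t x) 2 := by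
  obtain ⟨B, hB0, hB⟩ := S.bdd_slice ht
  refine memLp_bdd_mul' (S.lθx t) (C := B) (by fun_prop) fun x => ?_
  rw [abs_of_pos (inv_pos.2 (S.θ_pos t x))]
  exact inv_le_of_inv_le₀ hB0 (hB x).2.2

lemma V_int (T : ℝ) : IntegrableOn S.V (Ioc 0 T) := by
  obtain ⟨B, hB1, hB⟩ := S.bdd T
  have : MemLp (fun p : ℝ × ℝ => (S.θ p.1 p.2)⁻¹ * S.θx p.1 p.2) 2 (strip T) := by
    refine memLp_bdd_mul (S.strip_θx T) (C := B)
      (by fun_prop : Measurable _).aestronglyMeasurable ?_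
    refine ae_strip (P := fun t x => |(S.θ t x)⁻¹| ≤ B) fun t ht x => ?_
    rw [abs_of_pos (inv_pos.2 (S.θ_pos t x))]
    exact inv_le_of_inv_le₀ (by linarith) (hB t ht x).2.2
  exact this.integrable_sq.integral_prod_left

/-- A nonnegative function with uniformly bounded primitives is integrable on the half line. -/
lemma _root_.integrableOn_Ioi_of_bdd {f : ℝ → ℝ} {C : ℝ} (hf : ∀ t, 0 ≤ f t)
    (hi : ∀ T, IntegrableOn f (Ioc 0 T)) (hb : ∀ T, 0 ≤ T → ∫ t in (0 : ℝ)..T, f t ≤ C) :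
    IntegrableOn f (Ioi 0) := by
  refine integrableOn_Ioi_of_intervalIntegral_norm_bounded (l := atTop) (b := fun T : ℝ => T) C 0
    hi tendsto_id ?_
  filter_upwards [eventually_ge_atTop 0] with T hT
  simpa [abs_of_nonneg (hf _)] using hb T hT

/-- The basic energy bound. -/
lemma basic_energy : ∃ C, 0 ≤ C ∧ (∀ t, 0 ≤ t → (∫ x, S.u t x ^ 2) ≤ C ∧
    (∫ x, (S.v t x - 1) ^ 2) ≤ C ∧ (∫ x, ent (S.θ t x)) ≤ C) ∧ IntegrableOn S.V (Ioi 0) := by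
  have hK := S.K_pos
  have hκ := S.hκ
  have hμ := S.hμ
  have hR := S.hR
  have hcv := S.hcv
  set E0 := ∫ x, S.Efun 0 0 x with hE0
  have hmain : ∀ T, 0 ≤ T → (∫ x, S.Efun 0 T x) + S.κ / S.K * ∫ t in (0 : ℝ)..T, S.V t ≤ E0 := by
    intro T hT
    have := S.entropy_increment (c := 0) le_rfl (by norm_num) (D := fun t => -(S.κ / S.K * S.V t))
      le_rfl hT ((S.V_int T).const_mul _).neg fun t ht => by
        unfold V
        rw [← integral_const_mul, ← integral_neg]
        refine integral_mono (S.int_dens le_rfl (by norm_num) ht.1.le)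
          ((S.lV ht.1.le).integrable_sq.const_mul _).neg fun x => ?_
        have hθ := S.θ_pos t x
        have hv := S.v_pos t x
        have h1 : S.dens 0 t x = -(S.μ * ((S.θ t x)⁻¹ * (S.v t x)⁻¹ * S.ux t x ^ 2))
            - S.κ * (S.v t x)⁻¹ * ((S.θ t x)⁻¹ * S.θx t x) ^ 2 := by
          simp only [dens, wt, wt']; field_simp; ring
        simp only
        rw [h1]
        have h2 : 0 ≤ S.μ * ((S.θ t x)⁻¹ * (S.v t x)⁻¹ * S.ux t x ^ 2) := by positivity
        have h3 : S.κ / S.K * ((S.θ t x)⁻¹ * S.θx t x) ^ 2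
            ≤ S.κ * (S.v t x)⁻¹ * ((S.θ t x)⁻¹ * S.θx t x) ^ 2 := by
          rw [div_eq_mul_inv]
          have := S.le_inv_v t x
          gcongr
        linarith
    rw [intervalIntegral.integral_neg, intervalIntegral.integral_const_mul] at this
    linarith
  have hE : ∀ t, (∫ x, S.Efun 0 t x) = (∫ x, S.u t x ^ 2) / 2 + S.R * (∫ x, ent (S.v t x))
      + S.cv * ∫ x, ent (S.θ t x) := fun t => by
    have h1 := (S.lu t).integrable_sq.div_const 2
    have h2 := (S.int_ent_v t).const_mul S.R
    have h3 := (S.int_ent_θ t).const_mul S.cv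
    unfold Efun
    simp only [gent, zero_mul, sub_zero]
    rw [integral_add (h1.fun_add h2) h3, integral_add h1 h2, integral_const_mul,
      integral_const_mul, integral_div]
  have n1 : ∀ t, 0 ≤ ∫ x, S.u t x ^ 2 := fun t => integral_nonneg fun x => sq_nonneg _
  have n2 : ∀ t, 0 ≤ ∫ x, ent (S.v t x) := fun t => integral_nonneg fun x => ent_nonneg (S.v_pos t x)
  have n3 : ∀ t, 0 ≤ ∫ x, ent (S.θ t x) := fun t => integral_nonneg fun x => ent_nonneg (S.θ_pos t x)
  have nV : ∀ T, 0 ≤ T → 0 ≤ ∫ t in (0 : ℝ)..T, S.V t := fun T hT =>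
    intervalIntegral.integral_nonneg hT fun t _ => S.V_nonneg t
  have hE0' : 0 ≤ E0 := by
    rw [hE0, hE]
    have := n1 0; have := n2 0; have := n3 0
    positivity
  have hEle : ∀ T, 0 ≤ T → (∫ x, S.Efun 0 T x) ≤ E0 := fun T hT => by
    have := hmain T hT
    have := mul_nonneg (div_pos hκ hK).le (nV T hT)
    linarith
  refine ⟨2 * E0 + 2 * (S.K + 1) * (E0 / S.R) + E0 / S.cv, by positivity, fun t ht => ?_, ?_⟩
  · have h := hEle t ht
    rw [hE] at h
    have m2 := mul_nonneg hR.le (n2 t)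
    have m3 := mul_nonneg hcv.le (n3 t)
    have p2 : 0 ≤ 2 * (S.K + 1) * (E0 / S.R) := by positivity
    have p3 : 0 ≤ E0 / S.cv := by positivity
    have m1 := n1 t
    refine ⟨by linarith, ?_, ?_⟩
    · have h4 : ∫ x, ent (S.v t x) ≤ E0 / S.R := by
        rw [le_div_iff₀ hR]; linarith
      have h5 : ∫ x, (S.v t x - 1) ^ 2 ≤ 2 * (S.K + 1) * ∫ x, ent (S.v t x) := by
        rw [← integral_const_mul]
        refine integral_mono (S.lv t).integrable_sq ((S.int_ent_v t).const_mul _) fun x => ?_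
        refine (sq_sub_one_le_ent (S.v_pos t x)).trans ?_
        have := S.v_ub t x
        have := ent_nonneg (S.v_pos t x)
        gcongr
      have h6 : 2 * (S.K + 1) * ∫ x, ent (S.v t x) ≤ 2 * (S.K + 1) * (E0 / S.R) := by gcongr
      linarith
    · have h4 : ∫ x, ent (S.θ t x) ≤ E0 / S.cv := by
        rw [le_div_iff₀ hcv]; linarith
      linarith
  · refine integrableOn_Ioi_of_bdd (C := E0 * (S.K / S.κ)) S.V_nonneg S.V_int fun T hT => ?_
    have h := hmain T hT
    have h' : 0 ≤ ∫ x, S.Efun 0 T x := by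
      rw [hE]
      have := n1 T; have := n2 T; have := n3 T
      positivity
    have h2 : S.κ / S.K * (∫ t in (0 : ℝ)..T, S.V t) ≤ E0 := by linarith
    calc (∫ t in (0 : ℝ)..T, S.V t) = S.κ / S.K * (∫ t in (0 : ℝ)..T, S.V t) * (S.K / S.κ) := by
          field_simp
      _ ≤ E0 * (S.K / S.κ) := by gcongr

/-- Large temperatures are controlled pointwise by the entropy production. -/
lemma θ_sup : ∃ C, 0 ≤ C ∧ ∀ t, 0 ≤ t → ∀ x, 4 ≤ S.θ t x → S.θ t x ≤ C * S.V t := by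
  obtain ⟨C, hC, hE, -⟩ := S.basic_energy
  refine ⟨12 * C, by positivity, fun t ht x hx => ?_⟩
  have hd : ∀ x, HasDerivAt (fun x => psi (S.θ t x))
      (2⁻¹ * ((√(S.θ t x) - 1) * ((S.θ t x)⁻¹ * S.θx t x))) x := fun x => by
    refine ((hasDerivAt_psi (S.θ_pos t x)).comp x (S.dθ t x)).congr_deriv ?_
    have := (S.θ_pos t x).ne'
    field_simp
  have m1 : MemLp (fun x => √(S.θ t x) - 1) 2 := by
    rw [memLp_two_iff_integrable_sq (by fun_prop : Measurable _).aestronglyMeasurable]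
    refine (S.int_ent_θ t).mono' (by fun_prop : Measurable _).aestronglyMeasurable
      (ae_of_all _ fun x => ?_)
    rw [Real.norm_eq_abs, abs_of_nonneg (sq_nonneg _)]
    exact sq_sqrt_sub_one_le (S.θ_pos t x)
  have i1 : Integrable fun x => psi (S.θ t x) := by
    refine (S.int_ent_θ t).mono' (by unfold psi; fun_prop : Measurable _).aestronglyMeasurable
      (ae_of_all _ fun x => ?_)
    rw [Real.norm_eq_abs, abs_of_nonneg (psi_nonneg (S.θ_pos t x))]
    exact psi_le (S.θ_pos t x)
  have i2 := (integrable_mul_of_memLp m1 (S.lV ht)).const_mul 2⁻¹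
  have h1 := abs_le_integral_deriv hd i1 i2 x
  have hab : ∀ {f : ℝ → ℝ}, MemLp f 2 → MemLp (fun x => |f x|) 2 := fun h => h.norm
  have h2 := sq_integral_mul_le (hab m1) (hab (S.lV ht))
  simp only [sq_abs] at h2
  have e : ∫ y, |2⁻¹ * ((√(S.θ t y) - 1) * ((S.θ t y)⁻¹ * S.θx t y))|
      = 2⁻¹ * ∫ y, |√(S.θ t y) - 1| * |(S.θ t y)⁻¹ * S.θx t y| := by
    rw [← integral_const_mul]
    congr 1; ext y
    rw [abs_mul, abs_mul, abs_of_pos (by norm_num : (0 : ℝ) < 2⁻¹)]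
  have h3 : (∫ y, (√(S.θ t y) - 1) ^ 2) ≤ C :=
    (integral_mono m1.integrable_sq (S.int_ent_θ t) fun y =>
      sq_sqrt_sub_one_le (S.θ_pos t y)).trans (hE t ht).2.2
  rw [e] at h1
  set J := ∫ y, |√(S.θ t y) - 1| * |(S.θ t y)⁻¹ * S.θx t y| with hJ
  have h4 : J ^ 2 ≤ C * S.V t := h2.trans (mul_le_mul_of_nonneg_right h3 (S.V_nonneg t))
  have h5 : psi (S.θ t x) ^ 2 ≤ (2⁻¹ * J) ^ 2 := by
    rw [← sq_abs]; exact pow_le_pow_left₀ (abs_nonneg _) h1 2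
  have := le_psi_sq hx
  nlinarith [mul_nonneg hC (S.V_nonneg t)]

lemma Z_int (T : ℝ) : IntegrableOn (fun t => ∫ x, S.ux t x ^ 2) (Ioc 0 T) :=
  (S.strip_ux T).integrable_sq.integral_prod_left

/-- The viscous dissipation is integrable in time. -/
lemma ux_integrable : IntegrableOn (fun t => ∫ x, S.ux t x ^ 2) (Ioi 0) := by
  obtain ⟨C, hC, hE, hV⟩ := S.basic_energy
  obtain ⟨A, hA, hsup⟩ := S.θ_sup
  have hK := S.K_pos
  have hκ := S.hκ
  have hμ := S.hμ
  have hR := S.hR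
  have hcv := S.hcv
  set δ := S.μ / (64 * S.K) with hδ
  have hδ0 : 0 < δ := by positivity
  set A' := (S.R * S.K / 8) ^ 2 / (4 * δ) * (A * 5) with hA'
  have hA'0 : 0 ≤ A' := by positivity
  have hpt : ∀ t, 0 ≤ t → ∀ x, S.dens (1 / 8) t x
      ≤ -(δ * S.ux t x ^ 2) + A' * S.V t * ent (S.θ t x) := fun t ht x => by
    have hθ := S.θ_pos t x
    have hv := S.v_pos t x
    have hV0 := S.V_nonneg t
    have hent := ent_nonneg hθ
    have t1 : 2 * δ * S.ux t x ^ 2 ≤ S.μ * (wt (1 / 8) (S.θ t x) / S.v t x * S.ux t x * S.ux t x) := by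
      have h1 := le_wt hθ
      have h2 := S.le_inv_v t x
      have h3 : 1 / 32 * S.K⁻¹ ≤ wt (1 / 8) (S.θ t x) / S.v t x := by
        rw [div_eq_mul_inv]
        exact mul_le_mul h1 h2 (by positivity) (by linarith)
      have h4 : 2 * δ = S.μ * (1 / 32 * S.K⁻¹) := by rw [hδ]; field_simp; norm_num
      rw [h4, show S.μ * (wt (1 / 8) (S.θ t x) / S.v t x * S.ux t x * S.ux t x)
        = S.μ * (wt (1 / 8) (S.θ t x) / S.v t x) * S.ux t x ^ 2 by ring]
      gcongr
    have t3 : S.κ * (wt' (1 / 8) (S.θ t x) / S.v t x * S.θx t x * S.θx t x) ≤ 0 := by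
      have h1 := wt'_le (1 / 8) le_rfl hθ
      have h2 : 0 ≤ S.κ * ((S.v t x)⁻¹ * S.θx t x ^ 2) := by positivity
      have h3 : S.κ * (wt' (1 / 8) (S.θ t x) / S.v t x * S.θx t x * S.θx t x)
        = wt' (1 / 8) (S.θ t x) * (S.κ * ((S.v t x)⁻¹ * S.θx t x ^ 2)) := by ring
      rw [h3]
      exact mul_nonpos_of_nonpos_of_nonneg h1 h2
    have t2 : S.R * (1 / S.v t x * S.ux t x * (S.θ t x * wt (1 / 8) (S.θ t x) - 1))
        ≤ δ * S.ux t x ^ 2 + A' * S.V t * ent (S.θ t x) := by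
      rw [mul_wt_sub_one hθ]
      rcases le_total (S.θ t x) 4 with h4 | h4
      · rw [max_eq_right (by linarith)]
        have : 0 ≤ δ * S.ux t x ^ 2 + A' * S.V t * ent (S.θ t x) := by positivity
        simpa using this
      · have hm := le_max_right (S.θ t x - 4) 0
        set r := max (S.θ t x - 4) 0 / (max (S.θ t x - 4) 0 + 4) with hr
        have hr0 : 0 ≤ r := by positivity
        have hr1 : r ≤ 1 := by rw [hr, div_le_one (by positivity)]; linarith
        have hr2 : r ^ 2 ≤ 1 := by nlinarith
        set w := S.R * (1 / S.v t x) * (1 / 8 * S.θ t x * r ^ 2) with hw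
        have hw0 : 0 ≤ w := by positivity
        have hw1 : w ≤ S.R * S.K / 8 * S.θ t x := by
          have h1 : S.R * (1 / S.v t x) ≤ S.R * S.K := by
            rw [one_div]; exact mul_le_mul_of_nonneg_left (S.inv_v_le t x) hR.le
          have h2 : 1 / 8 * S.θ t x * r ^ 2 ≤ 1 / 8 * S.θ t x * 1 := by gcongr
          calc w ≤ S.R * S.K * (1 / 8 * S.θ t x * 1) := by rw [hw]; gcongr
            _ = _ := by ring
        have y : w * S.ux t x ≤ δ * S.ux t x ^ 2 + w ^ 2 / (4 * δ) := by
          rw [← sub_nonneg]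
          have : δ * S.ux t x ^ 2 + w ^ 2 / (4 * δ) - w * S.ux t x
            = (2 * δ * S.ux t x - w) ^ 2 / (4 * δ) := by field_simp; ring
          rw [this]; positivity
        have z : w ^ 2 / (4 * δ) ≤ A' * S.V t * ent (S.θ t x) := by
          have h1 : S.θ t x ^ 2 ≤ A * S.V t * (5 * ent (S.θ t x)) := by
            rw [sq]
            exact mul_le_mul (hsup t ht x h4) (le_ent_of_four_le h4) hθ.le
              (mul_nonneg hA hV0)
          calc w ^ 2 / (4 * δ) ≤ (S.R * S.K / 8 * S.θ t x) ^ 2 / (4 * δ) := by gcongr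
            _ = (S.R * S.K / 8) ^ 2 / (4 * δ) * S.θ t x ^ 2 := by ring
            _ ≤ (S.R * S.K / 8) ^ 2 / (4 * δ) * (A * S.V t * (5 * ent (S.θ t x))) := by gcongr
            _ = _ := by rw [hA']; ring
        calc S.R * (1 / S.v t x * S.ux t x * (1 / 8 * S.θ t x * r ^ 2)) = w * S.ux t x := by
              rw [hw]; ring
          _ ≤ _ := by linarith
    unfold dens
    linarith
  refine integrableOn_Ioi_of_bdd
    (C := δ⁻¹ * ((∫ x, S.Efun (1 / 8) 0 x) + A' * C * ∫ t in Ioi 0, S.V t))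
    (fun t => integral_nonneg fun x => sq_nonneg _) S.Z_int fun T hT => ?_
  have iV := (S.V_int T).const_mul (A' * C)
  have iZ := (S.Z_int T).const_mul δ
  have h := S.entropy_increment (c := 1 / 8) (by norm_num) le_rfl
    (D := fun t => A' * C * S.V t - δ * ∫ x, S.ux t x ^ 2) le_rfl hT (iV.sub iZ) fun t ht => by
      have hV0 := S.V_nonneg t
      have j1 : Integrable fun x => -(δ * S.ux t x ^ 2) :=
        ((S.lux t).integrable_sq.const_mul δ).neg
      have j2 := (S.int_ent_θ t).const_mul (A' * S.V t)
      refine (integral_mono (S.int_dens (by norm_num) le_rfl ht.1.le) (j1.add j2)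
        (hpt t ht.1.le)).trans ?_
      have : ∫ x, (-(δ * S.ux t x ^ 2) + A' * S.V t * ent (S.θ t x))
          = -(δ * ∫ x, S.ux t x ^ 2) + A' * S.V t * ∫ x, ent (S.θ t x) := by
        rw [integral_add j1 j2, integral_neg, integral_const_mul, integral_const_mul]
      refine this.le.trans ?_
      have : A' * S.V t * (∫ x, ent (S.θ t x)) ≤ A' * S.V t * C := by
        gcongr; exact (hE t ht.1.le).2.2
      linarith
  have iV' : IntervalIntegrable (fun t => A' * C * S.V t) volume 0 T :=
    (intervalIntegrable_iff_integrableOn_Ioc_of_le hT).2 iV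
  have iZ' : IntervalIntegrable (fun t => δ * ∫ x, S.ux t x ^ 2) volume 0 T :=
    (intervalIntegrable_iff_integrableOn_Ioc_of_le hT).2 iZ
  rw [intervalIntegral.integral_sub iV' iZ', intervalIntegral.integral_const_mul,
    intervalIntegral.integral_const_mul] at h
  have hV' : ∫ t in (0 : ℝ)..T, S.V t ≤ ∫ t in Ioi 0, S.V t := by
    rw [intervalIntegral.integral_of_le hT]
    exact setIntegral_mono_set hV (ae_of_all _ S.V_nonneg)
      (LE.le.eventuallyLE Ioc_subset_Ioi_self)
  have hpos : 0 ≤ ∫ x, S.Efun (1 / 8) T x := integral_nonneg fun x => by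
    have h1 := ent_nonneg (S.v_pos T x)
    have h2 := gent_ge (c := 1 / 8) (by norm_num) le_rfl (S.θ_pos T x)
    simp only [Efun, Pi.zero_apply]
    positivity
  have : A' * C * (∫ t in (0 : ℝ)..T, S.V t) ≤ A' * C * ∫ t in Ioi 0, S.V t := by gcongr
  rw [le_inv_mul_iff₀ hδ0]
  linarith

end GasFlow

/-! ### A truncated quadratic functional of the total energy -/

/-- A `C²` function vanishing to third order at the origin and growing quadratically. -/
noncomputable def Ph (s : ℝ) : ℝ := s ^ 3 / (1 + s)
/-- The derivative of `Ph`. -/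
noncomputable def Ph' (s : ℝ) : ℝ := 2 * s - 1 + 1 / (1 + s) ^ 2
/-- The second derivative of `Ph`. -/
noncomputable def Ph'' (s : ℝ) : ℝ := 2 - 2 / (1 + s) ^ 3

lemma hasDerivAt_Ph {s : ℝ} (hs : 0 ≤ s) : HasDerivAt Ph (Ph' s) s := by
  have h1 : 1 + s ≠ 0 := by positivity
  refine (((hasDerivAt_id s).fun_pow 3).div ((hasDerivAt_id s).const_add 1) h1).congr_deriv ?_
  simp [Ph']; field_simp; ring

lemma hasDerivAt_Ph' {s : ℝ} (hs : 0 ≤ s) : HasDerivAt Ph' (Ph'' s) s := by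
  have h1 : 1 + s ≠ 0 := by positivity
  refine ((((hasDerivAt_id s).const_mul 2).sub_const 1).add ((hasDerivAt_const s (1 : ℝ)).div
    (((hasDerivAt_id s).const_add 1).fun_pow 2) (by positivity))).congr_deriv ?_
  simp [Ph'']; field_simp; ring

lemma Ph_nonneg {s : ℝ} (hs : 0 ≤ s) : 0 ≤ Ph s := by unfold Ph; positivity
lemma Ph_le {s : ℝ} (hs : 0 ≤ s) : Ph s ≤ s ^ 2 := by
  unfold Ph
  rw [div_le_iff₀ (by positivity)]
  nlinarith [sq_nonneg s]
lemma abs_Ph'_le {s : ℝ} (hs : 0 ≤ s) : |Ph' s| ≤ 2 * s := by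
  have e : Ph' s = s ^ 2 * (2 * s + 3) / (1 + s) ^ 2 := by unfold Ph'; field_simp; ring
  rw [e, abs_of_nonneg (by positivity), div_le_iff₀ (by positivity)]
  nlinarith [sq_nonneg s]
lemma Ph''_nonneg {s : ℝ} (hs : 0 ≤ s) : 0 ≤ Ph'' s := by
  unfold Ph''
  have : 2 / (1 + s) ^ 3 ≤ 2 := div_le_self (by norm_num) (one_le_pow₀ (by linarith))
  linarith
lemma Ph''_le {s : ℝ} (hs : 0 ≤ s) : Ph'' s ≤ 2 := by
  unfold Ph''
  have : 0 ≤ 2 / (1 + s) ^ 3 := by positivity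
  linarith
lemma Ph''_zero : Ph'' 0 = 0 := by simp [Ph'']
lemma Ph''_mono {r s : ℝ} (hr : 0 ≤ r) (h : r ≤ s) : Ph'' r ≤ Ph'' s := by
  unfold Ph''
  have : 2 / (1 + s) ^ 3 ≤ 2 / (1 + r) ^ 3 := by gcongr
  linarith
lemma Ph''_pos {s : ℝ} (hs : 0 < s) : 0 < Ph'' s := by
  unfold Ph''
  have : 2 / (1 + s) ^ 3 < 2 := div_lt_self (by norm_num) (one_lt_pow₀ (by linarith) (by norm_num))
  linarith
/-- `Ph` dominates `s²` away from the origin. -/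
lemma sq_le_Ph {d s : ℝ} (hd : 0 < d) (h : d ≤ s) : s ^ 2 ≤ (1 + d) / d * Ph s := by
  have hs : 0 < s := hd.trans_le h
  unfold Ph
  rw [div_mul_div_comm, le_div_iff₀ (by positivity)]
  have : 0 ≤ s ^ 2 * (s - d) := mul_nonneg (sq_nonneg _) (by linarith)
  nlinarith

@[fun_prop] lemma meas_Ph : Measurable Ph := by unfold Ph; fun_prop
@[fun_prop] lemma meas_Ph' : Measurable Ph' := by unfold Ph'; fun_prop
@[fun_prop] lemma meas_Ph'' : Measurable Ph'' := by unfold Ph''; fun_prop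

namespace GasFlow
variable (S : GasFlow)

/-- The positive part of the excess of the total energy density over the level `8 c_v`. -/
noncomputable def sp (t x : ℝ) : ℝ := max (S.cv * S.θ t x + S.u t x ^ 2 / 2 - 8 * S.cv) 0

lemma sp_nonneg (t x : ℝ) : 0 ≤ S.sp t x := le_max_right _ _

@[fun_prop] lemma meas_sp {α : Type*} [MeasurableSpace α] {f g : α → ℝ}
    (hf : Measurable f) (hg : Measurable g) :
    Measurable fun y => S.sp (f y) (g y) := by unfold sp; fun_prop

/-- An auxiliary constant coming from completing squares in the energy dissipation. -/
noncomputable def C1 : ℝ :=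
  (S.cv * S.μ + S.κ) ^ 2 / (S.cv * S.κ) + S.cv * S.R ^ 2 / S.κ + S.R ^ 2 / (4 * S.μ)

/-- The weight of `u⁴`, large enough for its dissipation to absorb `u² u_x²`. -/
noncomputable def A : ℝ := 2 * S.K ^ 2 * S.C1 / S.μ + 1

lemma C1_nonneg : 0 ≤ S.C1 := by
  have := S.hμ; have := S.hκ; have := S.hR; have := S.hcv
  unfold C1; positivity
lemma A_pos : 0 < S.A := by
  have := S.hμ; have := S.C1_nonneg
  unfold A; positivity

lemma quad_bound (X Y w : ℝ) : -((S.cv * X + Y) * (S.κ * X + S.μ * Y - S.R * w))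
    ≤ -(S.cv * S.κ / 2 * X ^ 2) + S.C1 * (Y ^ 2 + w ^ 2) := by
  have hμ := S.hμ; have hκ := S.hκ; have hR := S.hR; have hcv := S.hcv
  have e : -(S.cv * S.κ / 2 * X ^ 2) + S.C1 * (Y ^ 2 + w ^ 2)
      + (S.cv * X + Y) * (S.κ * X + S.μ * Y - S.R * w)
      = (S.cv * S.κ * X / 2 + (S.cv * S.μ + S.κ) * Y) ^ 2 / (S.cv * S.κ)
        + S.cv / S.κ * (S.κ * X / 2 - S.R * w) ^ 2 + (2 * S.μ * Y - S.R * w) ^ 2 / (4 * S.μ)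
        + (S.cv * S.R ^ 2 / S.κ + S.R ^ 2 / (4 * S.μ)) * Y ^ 2
        + (S.cv * S.μ + S.κ) ^ 2 / (S.cv * S.κ) * w ^ 2 := by
    unfold C1; field_simp; ring
  have : 0 ≤ -(S.cv * S.κ / 2 * X ^ 2) + S.C1 * (Y ^ 2 + w ^ 2)
      + (S.cv * X + Y) * (S.κ * X + S.μ * Y - S.R * w) := by rw [e]; positivity
  linarith

/-- The density of the functional `∫ Ph((ω - 8 c_v)₊) + (A/4) u⁴`, `ω = c_v θ + u²/2`. -/
noncomputable def J (t x : ℝ) : ℝ := Ph (S.sp t x) + S.A / 4 * u S t x ^ 4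

/-- The time derivative of `J`. -/
noncomputable def Jt (t x : ℝ) : ℝ :=
  Ph' (S.sp t x) * (S.cv * S.θt t x + S.u t x * S.ut t x)
    + S.A * (S.u t x ^ 2 * S.u t x * S.ut t x)

/-- The production of `J`, after integration by parts. -/
noncomputable def densJ (t x : ℝ) : ℝ :=
  -(Ph'' (S.sp t x) * (S.cv * S.θx t x + S.u t x * S.ux t x)
      * (S.q t x + S.u t x * (S.a t x - S.R)))
    - 3 * S.A * (S.u t x ^ 2 * S.ux t x * S.a t x)

lemma abs_sp_le {t x B : ℝ} (h : |S.u t x| ≤ B) :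
    ‖S.sp t x‖ ≤ 1 * ‖S.cv * |S.θ t x - 1| + B * |S.u t x|‖ := by
  have hcv := S.hcv
  have h1 := le_abs_self (S.θ t x - 1)
  have h2 : S.u t x ^ 2 ≤ B * |S.u t x| := by
    rw [← sq_abs, sq]; exact mul_le_mul_of_nonneg_right h (abs_nonneg _)
  have h3 : 0 ≤ S.cv * |S.θ t x - 1| := by positivity
  have h4 : 0 ≤ B * |S.u t x| := (sq_nonneg _).trans h2
  rw [one_mul, Real.norm_eq_abs, Real.norm_eq_abs, abs_of_nonneg (S.sp_nonneg t x),
    abs_of_nonneg (by linarith)]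
  refine max_le ?_ (by linarith)
  have := mul_le_mul_of_nonneg_left h1 hcv.le
  linarith

lemma lsp {t : ℝ} (ht : 0 ≤ t) : MemLp (S.sp t) 2 := by
  obtain ⟨B, hB0, hB⟩ := S.bdd_slice ht
  exact (((S.lθ t).norm.const_mul S.cv).add ((S.lu t).norm.const_mul B)).of_le_mul
    (by fun_prop : Measurable fun x => S.sp t x).aestronglyMeasurable
    (ae_of_all _ fun x => S.abs_sp_le (hB x).1)

lemma strip_sp (T : ℝ) : MemLp (fun p : ℝ × ℝ => S.sp p.1 p.2) 2 (strip T) := by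
  obtain ⟨B, hB1, hB⟩ := S.bdd T
  exact (((S.strip_θ T).norm.const_mul S.cv).add ((S.strip_u T).norm.const_mul B)).of_le_mul
    (by fun_prop : Measurable _).aestronglyMeasurable
    (ae_strip (P := fun t x => ‖S.sp t x‖ ≤ 1 * ‖S.cv * |S.θ t x - 1| + B * |S.u t x|‖)
      fun t ht x => S.abs_sp_le (hB t ht x).1)

lemma abs_sq_le {t x B : ℝ} (h : |S.u t x| ≤ B) : |S.u t x ^ 2| ≤ B ^ 2 := by
  rw [abs_pow]; exact pow_le_pow_left₀ (abs_nonneg _) h 2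

lemma int_u4 {t : ℝ} (ht : 0 ≤ t) : Integrable fun x => S.u t x ^ 4 := by
  obtain ⟨B, hB0, hB⟩ := S.bdd_slice ht
  refine (integrable_bdd_mul_mul (S.lu t) (S.lu t) (b := fun x => S.u t x ^ 2) (by fun_prop)
    (ae_of_all _ fun x => S.abs_sq_le (hB x).1)).congr (ae_of_all _ fun x => ?_)
  simp only; ring

lemma int_Ph {t : ℝ} (ht : 0 ≤ t) : Integrable fun x => Ph (S.sp t x) := by
  refine (S.lsp ht).integrable_sq.mono' (by fun_prop : Measurable _).aestronglyMeasurable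
    (ae_of_all _ fun x => ?_)
  rw [Real.norm_eq_abs, abs_of_nonneg (Ph_nonneg (S.sp_nonneg t x))]
  exact Ph_le (S.sp_nonneg t x)

lemma int_J {t : ℝ} (ht : 0 ≤ t) : Integrable (S.J t) :=
  (S.int_Ph ht).add ((S.int_u4 ht).const_mul _)

lemma J_nonneg (t x : ℝ) : 0 ≤ S.J t x := by
  have := Ph_nonneg (S.sp_nonneg t x)
  have := S.A_pos
  unfold J; positivity

lemma int_Jt (T : ℝ) : Integrable (Function.uncurry S.Jt) (strip T) := by
  obtain ⟨B, hB1, hB⟩ := S.bdd T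
  have hu : ∀ᵐ p ∂strip T, |S.u p.1 p.2| ≤ B :=
    ae_strip (P := fun t x => |S.u t x| ≤ B) fun t ht x => (hB t ht x).1
  have e1 : MemLp (fun p : ℝ × ℝ => Ph' (S.sp p.1 p.2)) 2 (strip T) := by
    refine (S.strip_sp T).of_le_mul (c := 2) (by fun_prop : Measurable _).aestronglyMeasurable
      (ae_of_all _ fun p => ?_)
    rw [Real.norm_eq_abs, Real.norm_eq_abs, abs_of_nonneg (S.sp_nonneg p.1 p.2)]
    exact abs_Ph'_le (S.sp_nonneg p.1 p.2)
  have e2 := memLp_bdd_mul (S.strip_ut T)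
    (by fun_prop : Measurable fun p : ℝ × ℝ => S.u p.1 p.2).aestronglyMeasurable hu
  have e3 := integrable_mul_of_memLp e1 (((S.strip_θt T).const_mul S.cv).add e2)
  have e4 := integrable_bdd_mul_mul (S.strip_u T) (S.strip_ut T)
    (b := fun p : ℝ × ℝ => S.u p.1 p.2 ^ 2) (by fun_prop) (hu.mono fun p hp => S.abs_sq_le hp)
  exact e3.add (e4.const_mul S.A)

lemma lflux {t : ℝ} (ht : 0 ≤ t) : MemLp (fun x => S.q t x + S.u t x * (S.a t x - S.R)) 2 := by
  obtain ⟨B, hB0, hB⟩ := S.bdd_slice ht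
  have e := memLp_bdd_mul' (S.la t) (b := S.u t) (by fun_prop : Measurable fun x => S.u t x)
    fun x => (hB x).1
  refine (((S.lq t).add e).sub ((S.lu t).const_mul S.R)).ae_eq (ae_of_all _ fun x => ?_)
  simp only [Pi.add_apply, Pi.sub_apply]; ring

lemma lωx {t : ℝ} (ht : 0 ≤ t) : MemLp (fun x => S.cv * S.θx t x + S.u t x * S.ux t x) 2 := by
  obtain ⟨B, hB0, hB⟩ := S.bdd_slice ht
  exact ((S.lθx t).const_mul S.cv).add (memLp_bdd_mul' (S.lux t) (b := S.u t)
    (by fun_prop : Measurable fun x => S.u t x) fun x => (hB x).1)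

lemma abs_Ph''_sp_le (t x : ℝ) : |Ph'' (S.sp t x)| ≤ 2 := by
  rw [abs_of_nonneg (Ph''_nonneg (S.sp_nonneg t x))]; exact Ph''_le (S.sp_nonneg t x)

lemma int_densJ {t : ℝ} (ht : 0 ≤ t) : Integrable (S.densJ t) := by
  obtain ⟨B, hB0, hB⟩ := S.bdd_slice ht
  have e1 := integrable_bdd_mul_mul (S.lωx ht) (S.lflux ht) (b := fun x => Ph'' (S.sp t x))
    (by fun_prop) (ae_of_all _ (S.abs_Ph''_sp_le t))
  have e2 := integrable_bdd_mul_mul (S.lux t) (S.la t) (b := fun x => S.u t x ^ 2)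
    (by fun_prop) (ae_of_all _ fun x => S.abs_sq_le (hB x).1)
  exact e1.neg.sub (e2.const_mul (3 * S.A))

lemma integral_Jt {t : ℝ} (ht : 0 ≤ t) (hi : Integrable (S.Jt t)) :
    ∫ x, S.Jt t x = ∫ x, S.densJ t x := by
  obtain ⟨B, hB0, hB⟩ := S.bdd_slice ht
  have hω : ∀ x, HasDerivAt (fun x => S.cv * S.θ t x + S.u t x ^ 2 / 2 - 8 * S.cv)
      (S.cv * S.θx t x + S.u t x * S.ux t x) x := fun x => by
    refine ((((S.dθ t x).const_mul S.cv).add (((S.du t x).fun_pow 2).div_const 2)).sub_const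
      (8 * S.cv)).congr_deriv ?_
    simp; ring
  have hd : ∀ x, HasDerivAt (fun x => Ph' (S.sp t x) * (S.q t x + S.u t x * (S.a t x - S.R))
      + S.A * (S.u t x ^ 3 * S.a t x)) (S.Jt t x - S.densJ t x) x := fun x => by
    have h1 := (hasDerivAt_posPart (f := Ph') (f' := Ph'') (fun r hr => hasDerivAt_Ph' hr)
      Ph''_zero (S.cv * S.θ t x + S.u t x ^ 2 / 2 - 8 * S.cv)).comp x (hω x)
    refine ((h1.mul ((S.dqf t x).add ((S.du t x).mul ((S.da t x).sub_const S.R)))).add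
      ((((S.du t x).fun_pow 3).mul (S.da t x)).const_mul S.A)).congr_deriv ?_
    have h2 : S.qx t x = S.cv * S.θt t x - S.ux t x * (S.a t x - S.R) := by
      linarith [S.cv_θt t x]
    simp only [Function.comp, Pi.add_apply, Pi.mul_apply, h2, Jt, densJ, sp]
    ring
  have e1 : MemLp (fun x => Ph' (S.sp t x)) 2 := by
    refine (S.lsp ht).of_le_mul (c := 2) (by fun_prop : Measurable _).aestronglyMeasurable
      (ae_of_all _ fun x => ?_)
    rw [Real.norm_eq_abs, Real.norm_eq_abs, abs_of_nonneg (S.sp_nonneg t x)]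
    exact abs_Ph'_le (S.sp_nonneg t x)
  have e2 := integrable_bdd_mul_mul (S.lu t) (S.la t) (b := fun x => S.u t x ^ 2)
    (by fun_prop) (ae_of_all _ fun x => S.abs_sq_le (hB x).1)
  have hP : Integrable fun x => Ph' (S.sp t x) * (S.q t x + S.u t x * (S.a t x - S.R))
      + S.A * (S.u t x ^ 3 * S.a t x) := by
    refine ((integrable_mul_of_memLp e1 (S.lflux ht)).add (e2.const_mul S.A)).congr
      (ae_of_all _ fun x => ?_)
    simp only [Pi.add_apply]; ring
  have hde := S.int_densJ ht
  have h0 := integral_eq_zero_of_hasDerivAt_of_integrable hd (hi.sub hde) hP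
  rw [integral_sub hi hde] at h0
  linarith

lemma J_increment {D : ℝ → ℝ} {a b : ℝ}
    (ha : 0 ≤ a) (hab : a ≤ b) (hD : IntegrableOn D (Ioc a b))
    (hle : ∀ t ∈ Ioc a b, ∫ x, S.densJ t x ≤ D t) :
    (∫ x, S.J b x) ≤ (∫ x, S.J a x) + ∫ t in a..b, D t := by
  have pos : ∀ x t, 0 < t → HasDerivAt (fun s => S.J s x) (S.Jt t x) t := fun x t ht => by
    have hω : HasDerivAt (fun s => S.cv * S.θ s x + S.u s x ^ 2 / 2 - 8 * S.cv)
        (S.cv * S.θt t x + S.u t x * S.ut t x) t := by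
      refine ((((S.tθ x t ht).const_mul S.cv).add (((S.tu x t ht).fun_pow 2).div_const 2)).sub_const
        (8 * S.cv)).congr_deriv ?_
      simp only [θt, ut]; ring
    have h1 := (hasDerivAt_posPart (f := Ph) (f' := Ph') (fun r hr => hasDerivAt_Ph hr)
      (by simp [Ph']) (S.cv * S.θ t x + S.u t x ^ 2 / 2 - 8 * S.cv)).comp t hω
    refine (h1.add (((S.tu x t ht).fun_pow 4).const_mul (S.A / 4))).congr_deriv ?_
    simp only [Jt, ut, sp]; ring
  have cont : ∀ x, Continuous fun t => S.J t x := fun x => by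
    have c1 : Continuous fun t => S.sp t x := by
      have := S.ctθ x; have := S.ctu x
      unfold sp; fun_prop
    have c2 : Continuous fun t => Ph (S.sp t x) := by
      unfold Ph
      refine (c1.pow 3).div (continuous_const.add c1) fun t => ?_
      have := S.sp_nonneg t x
      positivity
    exact c2.add (continuous_const.mul ((S.ctu x).pow 4))
  exact S.increment_le ha hab cont pos (S.int_Jt b) (S.int_J ha) (S.int_J (ha.trans hab)) hD
    fun t ht _ hi => by
      rw [S.integral_Jt (ha.trans ht.1.le) hi]; exact hle t ht

/-- Large temperatures squared are controlled by `Ph` and the entropy. -/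
lemma θ_sq_le : ∃ C, 0 ≤ C ∧ ∀ t x, 4 ≤ S.θ t x →
    S.θ t x ^ 2 ≤ C * (Ph (S.sp t x) + ent (S.θ t x)) := by
  have hcv := S.hcv
  set C' := 4 / S.cv ^ 2 * ((1 + 8 * S.cv) / (8 * S.cv)) with hC'
  have hC'0 : 0 ≤ C' := by positivity
  refine ⟨C' + 80, by positivity, fun t x h4 => ?_⟩
  have hP := Ph_nonneg (S.sp_nonneg t x)
  have hE := ent_nonneg (S.θ_pos t x)
  rcases le_total (S.θ t x) 16 with h | h
  · have := le_ent_of_four_le h4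
    have : 0 ≤ C' * (Ph (S.sp t x) + ent (S.θ t x)) := by positivity
    nlinarith
  · have h1 : S.cv * S.θ t x / 2 ≤ S.sp t x := by
      refine le_trans ?_ (le_max_left _ _)
      nlinarith [sq_nonneg (S.u t x)]
    have h2 : 8 * S.cv ≤ S.sp t x := by nlinarith
    have h3 := sq_le_Ph (by positivity) h2
    have h5 : (S.cv * S.θ t x / 2) ^ 2 ≤ S.sp t x ^ 2 := by
      have := S.θ_pos t x
      gcongr
    have h6 : S.θ t x ^ 2 ≤ C' * Ph (S.sp t x) := by
      calc S.θ t x ^ 2 = 4 / S.cv ^ 2 * (S.cv * S.θ t x / 2) ^ 2 := by field_simp; ring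
        _ ≤ 4 / S.cv ^ 2 * ((1 + 8 * S.cv) / (8 * S.cv) * Ph (S.sp t x)) := by
            gcongr; exact h5.trans h3
        _ = _ := by rw [hC']; ring
    nlinarith [mul_nonneg hC'0 hE]

end GasFlow

namespace GasFlow
variable (S : GasFlow)

/-- The dissipation coefficient in the evolution of `J`. -/
noncomputable def c0 : ℝ := S.cv * S.κ / (2 * S.K)

lemma c0_pos : 0 < S.c0 := by
  have := S.hcv; have := S.hκ; have := S.K_pos
  unfold c0; positivity

set_option maxHeartbeats 1000000 in
/-- Pointwise bound for the production of `J`. The `u⁴` dissipation absorbs `u² u_x²`; the pressure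
terms carry a factor `θ²`, one factor of which is bounded by the entropy production `V` through
`θ_sup`. -/
lemma densJ_le : ∃ C, 0 ≤ C ∧ ∀ t, 0 ≤ t → ∀ x, S.densJ t x ≤
    -(S.c0 * (Ph'' (S.sp t x) * S.θx t x ^ 2))
      + C * (S.V t * (Ph (S.sp t x) + ent (S.θ t x) + S.u t x ^ 4) + S.ux t x ^ 2
        + S.u t x ^ 4 * (ent (S.θ t x) + (S.v t x - 1) ^ 2 + S.u t x ^ 2)) := by
  obtain ⟨Cs, hCs, hsup⟩ := S.θ_sup
  obtain ⟨C3, hC3, hsq⟩ := S.θ_sq_le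
  have hμ := S.hμ; have hκ := S.hκ; have hR := S.hR; have hcv := S.hcv; have hK := S.K_pos
  have hC1 := S.C1_nonneg
  have hA := S.A_pos
  set ε := S.A * S.μ * S.K⁻¹ with hε
  have hε0 : 0 < ε := by positivity
  have hεC : 2 * S.K * S.C1 ≤ ε := by
    have : ε = 2 * S.K * S.C1 + S.μ * S.K⁻¹ := by rw [hε]; unfold A; field_simp
    have : 0 ≤ S.μ * S.K⁻¹ := by positivity
    linarith
  set B := 3 * S.A * S.R * S.K * S.K with hB
  set b := 3 * S.A * S.R * S.K with hb
  set D1 := S.K * S.C1 / (2 * S.cv ^ 2) with hD1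
  set D2 := (2 * S.K * S.C1 + B ^ 2 / (4 * ε)) * (Cs * (C3 + 1)) with hD2
  have hb0 : 0 ≤ b := by positivity
  have hD10 : 0 ≤ D1 := by positivity
  have hD20 : 0 ≤ D2 := by positivity
  refine ⟨10 * b + D1 + D2, by positivity, fun t ht x => ?_⟩
  have hθ := S.θ_pos t x
  have hv := S.v_pos t x
  have hV0 := S.V_nonneg t
  have hent := ent_nonneg hθ
  have hPh := Ph_nonneg (S.sp_nonneg t x)
  have hφ0 := Ph''_nonneg (S.sp_nonneg t x)
  have hφ2 := Ph''_le (S.sp_nonneg t x)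
  have hs := hsup t ht x
  have hq := hsq t x
  have hsp : S.θ t x ≤ 4 → 0 < S.sp t x → 8 * S.cv ≤ S.u t x ^ 2 := fun h h' => by
    have : 0 < S.cv * S.θ t x + S.u t x ^ 2 / 2 - 8 * S.cv := by
      by_contra hn
      rw [sp, max_eq_right (not_lt.1 hn)] at h'
      exact lt_irrefl _ h'
    have := mul_le_mul_of_nonneg_left h hcv.le
    linarith
  have hφz : S.sp t x = 0 → Ph'' (S.sp t x) = 0 := fun h => by rw [h, Ph''_zero]
  have hspn := S.sp_nonneg t x
  have hp1 := S.inv_v_le t x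
  have hp2 := S.le_inv_v t x
  have hvK := S.v_ub t x
  have hK1 := S.hK
  have hqb := S.quad_bound (S.θx t x) (S.u t x * S.ux t x) (S.θ t x * S.u t x)
  have hent10 : S.θ t x ≤ 4 → (S.θ t x - 1) ^ 2 ≤ 10 * ent (S.θ t x) := fun h => by
    have := sq_sub_one_le_ent hθ
    have := mul_le_mul_of_nonneg_right h hent
    linarith
  have e : S.densJ t x = (S.v t x)⁻¹ * Ph'' (S.sp t x) *
      (-((S.cv * S.θx t x + S.u t x * S.ux t x) * (S.κ * S.θx t x + S.μ * (S.u t x * S.ux t x)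
        - S.R * (S.θ t x * S.u t x))))
      - 3 * S.A * S.μ * (S.v t x)⁻¹ * (S.u t x * S.ux t x) ^ 2
      + 3 * S.A * S.R * (S.v t x)⁻¹ * (S.u t x ^ 2 * S.ux t x * (S.θ t x - S.v t x)) := by
    unfold densJ a q; field_simp; ring
  rw [e]
  clear e
  generalize S.V t = V at *
  generalize Ph'' (S.sp t x) = φ at *
  generalize Ph (S.sp t x) = P at *
  generalize ent (S.θ t x) = E at *
  generalize S.sp t x = s at *
  generalize S.θx t x = X at *
  generalize S.ux t x = y at *
  generalize S.u t x = u at *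
  generalize S.θ t x = T at *
  have hpv : (S.v t x)⁻¹ * S.v t x = 1 := inv_mul_cancel₀ hv.ne'
  generalize S.v t x = v at *
  set p := v⁻¹ with hp
  have hp0 : 0 < p := by positivity
  have h1 : p * φ * (-((S.cv * X + u * y) * (S.κ * X + S.μ * (u * y) - S.R * (T * u))))
      ≤ -(S.c0 * (φ * X ^ 2)) + 2 * S.K * S.C1 * (u * y) ^ 2 + S.K * S.C1 * (φ * (T * u) ^ 2) := by
    have a1 := mul_le_mul_of_nonneg_left hqb (mul_nonneg hp0.le hφ0)
    have a2 : S.c0 * (φ * X ^ 2) ≤ p * φ * (S.cv * S.κ / 2 * X ^ 2) := by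
      calc S.c0 * (φ * X ^ 2) = S.K⁻¹ * φ * (S.cv * S.κ / 2 * X ^ 2) := by
            unfold c0; field_simp
        _ ≤ _ := by gcongr
    have a3 : p * φ * (S.C1 * (u * y) ^ 2) ≤ S.K * 2 * (S.C1 * (u * y) ^ 2) := by gcongr
    have a4 : p * φ * (S.C1 * (T * u) ^ 2) ≤ S.K * φ * (S.C1 * (T * u) ^ 2) := by gcongr
    linarith
  have h2 : 3 * ε * (u * y) ^ 2 ≤ 3 * S.A * S.μ * p * (u * y) ^ 2 := by
    have : 3 * ε ≤ 3 * S.A * S.μ * p := by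
      calc 3 * ε = 3 * S.A * S.μ * S.K⁻¹ := by rw [hε]; ring
        _ ≤ _ := by gcongr
    gcongr
  have h3 : 2 * S.K * S.C1 * (u * y) ^ 2 ≤ ε * (u * y) ^ 2 := by gcongr
  have hu6 : 0 ≤ u ^ 4 * u ^ 2 := by positivity
  have hQ : 0 ≤ V * (P + E + u ^ 4) := by positivity
  have hQ2 : 0 ≤ u ^ 4 * (E + (v - 1) ^ 2 + u ^ 2) := by positivity
  have hY : 0 ≤ ε * (u * y) ^ 2 := by positivity
  rcases le_total T 4 with h4 | h4
  · have h5 : 3 * S.A * S.R * p * (u ^ 2 * y * (T - v))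
        ≤ b * (y ^ 2 + u ^ 4 * (10 * E + (v - 1) ^ 2)) := by
      have a1 : u ^ 2 * y * (T - v) ≤ y ^ 2 + u ^ 4 * (10 * E + (v - 1) ^ 2) := by
        have b1 : u ^ 2 * y * (T - v) ≤ y ^ 2 / 2 + u ^ 4 * (T - v) ^ 2 / 2 := by
          linarith [sq_nonneg (y - u ^ 2 * (T - v))]
        have b2 : (T - v) ^ 2 ≤ 2 * (10 * E) + 2 * (v - 1) ^ 2 := by
          linarith [hent10 h4, sq_nonneg ((T - 1) + (v - 1))]
        have b3 := mul_le_mul_of_nonneg_left b2 (by positivity : 0 ≤ u ^ 4)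
        linarith [sq_nonneg y]
      have a2 : 0 ≤ y ^ 2 + u ^ 4 * (10 * E + (v - 1) ^ 2) := by positivity
      calc _ ≤ 3 * S.A * S.R * p * (y ^ 2 + u ^ 4 * (10 * E + (v - 1) ^ 2)) := by gcongr
        _ ≤ 3 * S.A * S.R * S.K * (y ^ 2 + u ^ 4 * (10 * E + (v - 1) ^ 2)) := by gcongr
        _ = _ := by rw [hb]
    have h6 : S.K * S.C1 * (φ * (T * u) ^ 2) ≤ D1 * (u ^ 4 * u ^ 2) := by
      rcases hspn.eq_or_lt with h0 | h0
      · rw [hφz h0.symm]; simpa using mul_nonneg hD10 hu6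
      · have a1 := hsp h4 h0
        have a2 : (8 * S.cv) ^ 2 ≤ (u ^ 2) ^ 2 := by gcongr
        have a3 : (T * u) ^ 2 ≤ 16 * u ^ 2 := by
          rw [mul_pow]
          have := pow_le_pow_left₀ hθ.le h4 2
          gcongr; linarith
        have a4 : 16 * u ^ 2 ≤ (u ^ 4 * u ^ 2) / (4 * S.cv ^ 2) := by
          rw [le_div_iff₀ (by positivity)]
          have := mul_le_mul_of_nonneg_right a2 (sq_nonneg u)
          linarith
        calc _ ≤ S.K * S.C1 * (2 * ((u ^ 4 * u ^ 2) / (4 * S.cv ^ 2))) := by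
              gcongr; exact a3.trans a4
          _ = _ := by rw [hD1]; field_simp; ring
    have c1 : 0 ≤ b * y ^ 2 := by positivity
    have c2 : 0 ≤ b * (u ^ 4 * (v - 1) ^ 2) := by positivity
    have c3 : 0 ≤ b * (u ^ 4 * u ^ 2) := by positivity
    have c4 : 0 ≤ D1 * (y ^ 2) := by positivity
    have c5 : 0 ≤ D1 * (u ^ 4 * E) := by positivity
    have c6 : 0 ≤ D1 * (u ^ 4 * (v - 1) ^ 2) := by positivity
    have c7 : 0 ≤ D2 * (V * (P + E + u ^ 4) + y ^ 2 + u ^ 4 * (E + (v - 1) ^ 2 + u ^ 2)) := by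
      positivity
    have c8 : 0 ≤ (10 * b + D1) * (V * (P + E + u ^ 4)) := by positivity
    linarith
  · have hw : (T * u) ^ 2 ≤ Cs * (C3 + 1) * (V * (P + E + u ^ 4)) := by
      have a1 : (T * u) ^ 2 = T * (T * u ^ 2) := by ring
      have a2 : T * u ^ 2 ≤ T ^ 2 + u ^ 4 := by
        linarith [sq_nonneg (T - u ^ 2), sq_nonneg T, sq_nonneg (u ^ 2)]
      have a3 : T ^ 2 + u ^ 4 ≤ (C3 + 1) * (P + E + u ^ 4) := by
        have := hq h4
        have : 0 ≤ C3 * u ^ 4 := by positivity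
        linarith
      calc (T * u) ^ 2 = T * (T * u ^ 2) := a1
        _ ≤ (Cs * V) * ((C3 + 1) * (P + E + u ^ 4)) :=
            mul_le_mul (hs h4) (a2.trans a3) (by positivity) (by positivity)
        _ = _ := by ring
    have h5 : 3 * S.A * S.R * p * (u ^ 2 * y * (T - v))
        ≤ ε * (u * y) ^ 2 + B ^ 2 / (4 * ε) * (T * u) ^ 2 := by
      have a0 : |T - v| ≤ S.K * T := by
        have k1 : S.K * 1 ≤ S.K * T := by gcongr; linarith
        have k2 : 1 * T ≤ S.K * T := by gcongr
        rw [abs_le]; constructor <;> linarith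
      have a1 : 3 * S.A * S.R * p * (u ^ 2 * y * (T - v)) ≤ B * (|u * y| * |T * u|) := by
        calc _ ≤ |3 * S.A * S.R * p * (u ^ 2 * y * (T - v))| := le_abs_self _
          _ = 3 * S.A * S.R * p * (|u| * |u * y| * |T - v|) := by
              rw [abs_mul, abs_of_nonneg (a := 3 * S.A * S.R * p) (by positivity), abs_mul,
                show u ^ 2 * y = u * (u * y) by ring, abs_mul u]
          _ ≤ 3 * S.A * S.R * S.K * (|u| * |u * y| * (S.K * T)) := by gcongr
          _ = _ := by rw [abs_mul T u, abs_of_pos hθ, hB]; ring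
      have a2 : B * (|u * y| * |T * u|) ≤ ε * |u * y| ^ 2 + B ^ 2 / (4 * ε) * |T * u| ^ 2 := by
        rw [← sub_nonneg]
        have : ε * |u * y| ^ 2 + B ^ 2 / (4 * ε) * |T * u| ^ 2 - B * (|u * y| * |T * u|)
          = (2 * ε * |u * y| - B * |T * u|) ^ 2 / (4 * ε) := by field_simp; ring
        rw [this]; positivity
      rw [sq_abs, sq_abs] at a2
      linarith
    have h6 : S.K * S.C1 * (φ * (T * u) ^ 2) ≤ 2 * S.K * S.C1 * (T * u) ^ 2 := by
      calc _ ≤ S.K * S.C1 * (2 * (T * u) ^ 2) := by gcongr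
        _ = _ := by ring
    have h7 : (2 * S.K * S.C1 + B ^ 2 / (4 * ε)) * (T * u) ^ 2 ≤ D2 * (V * (P + E + u ^ 4)) := by
      calc _ ≤ (2 * S.K * S.C1 + B ^ 2 / (4 * ε)) * (Cs * (C3 + 1) * (V * (P + E + u ^ 4))) := by
            gcongr
        _ = _ := by rw [hD2]; ring
    have c1 : 0 ≤ D2 * (y ^ 2 + u ^ 4 * (E + (v - 1) ^ 2 + u ^ 2)) := by positivity
    have c2 : 0 ≤ (10 * b + D1) * (V * (P + E + u ^ 4) + y ^ 2
      + u ^ 4 * (E + (v - 1) ^ 2 + u ^ 2)) := by positivity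
    linarith

end GasFlow

namespace GasFlow
variable (S : GasFlow)

/-- The weighted heat dissipation produced by `J`. -/
noncomputable def Q (t : ℝ) : ℝ := ∫ x, Ph'' (S.sp t x) * S.θx t x ^ 2

lemma Q_nonneg (t : ℝ) : 0 ≤ S.Q t := integral_nonneg fun x =>
  mul_nonneg (Ph''_nonneg (S.sp_nonneg t x)) (sq_nonneg _)

lemma int_Q (t : ℝ) : Integrable fun x => Ph'' (S.sp t x) * S.θx t x ^ 2 := by
  refine ((S.lθx t).integrable_sq.const_mul 2).mono' (by fun_prop : Measurable _).aestronglyMeasurable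
    (ae_of_all _ fun x => ?_)
  rw [norm_mul, Real.norm_eq_abs, Real.norm_eq_abs, abs_sq]
  exact mul_le_mul_of_nonneg_right (S.abs_Ph''_sp_le t x) (sq_nonneg _)

lemma Q_int (T : ℝ) : IntegrableOn S.Q (Ioc 0 T) := by
  have : Integrable (fun p : ℝ × ℝ => Ph'' (S.sp p.1 p.2) * S.θx p.1 p.2 ^ 2) (strip T) := by
    refine ((S.strip_θx T).integrable_sq.const_mul 2).mono'
      (by fun_prop : Measurable _).aestronglyMeasurable (ae_of_all _ fun x => ?_)
    rw [norm_mul, Real.norm_eq_abs, Real.norm_eq_abs, abs_sq]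
    exact mul_le_mul_of_nonneg_right (S.abs_Ph''_sp_le _ _) (sq_nonneg _)
  exact this.integral_prod_left

lemma X_int (T : ℝ) : IntegrableOn (fun t => ∫ x, S.θx t x ^ 2) (Ioc 0 T) :=
  (S.strip_θx T).integrable_sq.integral_prod_left

/-- `densJ_le` integrated in space. In the term `u⁴ (ent θ + (v - 1)² + u²)`, Agmon's inequality
bounds `u⁴` by `4 ‖u‖² ‖u_x‖²`, and the other factor is bounded in `L¹` by `basic_energy`. -/
lemma integral_densJ_le : ∃ C, 0 ≤ C ∧ ∀ t, 0 ≤ t → (∫ x, S.densJ t x) ≤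
    -(S.c0 * S.Q t) + C * (S.V t * (1 + ∫ x, S.J t x) + ∫ x, S.ux t x ^ 2) := by
  obtain ⟨C, hC, h⟩ := S.densJ_le
  obtain ⟨E, hE, hb, -⟩ := S.basic_energy
  have hA := S.A_pos
  refine ⟨C * (1 + 4 / S.A + E + 12 * E ^ 2), by positivity, fun t ht => ?_⟩
  obtain ⟨b1, b2, b3⟩ := hb t ht
  have hV := S.V_nonneg t
  have hZ0 : 0 ≤ ∫ x, S.ux t x ^ 2 := integral_nonneg fun x => sq_nonneg _
  have hJ0 : 0 ≤ ∫ x, S.J t x := integral_nonneg fun x => S.J_nonneg t x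
  have hu4 : ∀ x, S.u t x ^ 4 ≤ 4 * E * ∫ x, S.ux t x ^ 2 := fun x => by
    refine (agmon (S.du t) (S.lu t) (S.lux t) x).trans ?_
    gcongr
  set Z := ∫ x, S.ux t x ^ 2 with hZ
  have i1 := (S.int_Q t).const_mul (-S.c0)
  have i2 := ((S.int_J ht).const_mul (1 + 4 / S.A)).const_mul (C * S.V t)
  have i3 := (S.int_ent_θ t).const_mul (C * S.V t + C * (4 * E * Z))
  have i4 := (S.lux t).integrable_sq.const_mul C
  have i5 := (S.lv t).integrable_sq.const_mul (C * (4 * E * Z))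
  have i6 := (S.lu t).integrable_sq.const_mul (C * (4 * E * Z))
  have hpt : ∀ x, S.densJ t x ≤ -S.c0 * (Ph'' (S.sp t x) * S.θx t x ^ 2)
      + C * S.V t * ((1 + 4 / S.A) * S.J t x)
      + (C * S.V t + C * (4 * E * Z)) * ent (S.θ t x) + C * S.ux t x ^ 2
      + C * (4 * E * Z) * (S.v t x - 1) ^ 2 + C * (4 * E * Z) * S.u t x ^ 2 := fun x => by
    have hent := ent_nonneg (S.θ_pos t x)
    have hPh := Ph_nonneg (S.sp_nonneg t x)
    have e1 : Ph (S.sp t x) + S.u t x ^ 4 ≤ (1 + 4 / S.A) * S.J t x := by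
      have : (1 + 4 / S.A) * S.J t x = Ph (S.sp t x) + S.u t x ^ 4
        + (4 / S.A * Ph (S.sp t x) + S.A / 4 * S.u t x ^ 4) := by
        unfold J; field_simp; ring
      rw [this]
      have : 0 ≤ 4 / S.A * Ph (S.sp t x) + S.A / 4 * S.u t x ^ 4 := by positivity
      linarith
    have e2 : C * S.V t * (Ph (S.sp t x) + S.u t x ^ 4) ≤ C * S.V t * ((1 + 4 / S.A) * S.J t x) := by
      gcongr
    have e3 : C * (S.u t x ^ 4 * (ent (S.θ t x) + (S.v t x - 1) ^ 2 + S.u t x ^ 2))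
        ≤ C * ((4 * E * Z) * (ent (S.θ t x) + (S.v t x - 1) ^ 2 + S.u t x ^ 2)) := by
      gcongr; exact hu4 x
    have := h t ht x
    linarith
  have j1 : Integrable fun x => -S.c0 * (Ph'' (S.sp t x) * S.θx t x ^ 2)
      + C * S.V t * ((1 + 4 / S.A) * S.J t x) := i1.add i2
  have j2 : Integrable fun x => -S.c0 * (Ph'' (S.sp t x) * S.θx t x ^ 2)
      + C * S.V t * ((1 + 4 / S.A) * S.J t x)
      + (C * S.V t + C * (4 * E * Z)) * ent (S.θ t x) := j1.add i3
  have j3 : Integrable fun x => -S.c0 * (Ph'' (S.sp t x) * S.θx t x ^ 2)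
      + C * S.V t * ((1 + 4 / S.A) * S.J t x)
      + (C * S.V t + C * (4 * E * Z)) * ent (S.θ t x) + C * S.ux t x ^ 2 := j2.add i4
  have j4 : Integrable fun x => -S.c0 * (Ph'' (S.sp t x) * S.θx t x ^ 2)
      + C * S.V t * ((1 + 4 / S.A) * S.J t x)
      + (C * S.V t + C * (4 * E * Z)) * ent (S.θ t x) + C * S.ux t x ^ 2
      + C * (4 * E * Z) * (S.v t x - 1) ^ 2 := j3.add i5
  refine (integral_mono (S.int_densJ ht) (j4.add i6) hpt).trans ?_
  refine (integral_add j4 i6).le.trans ?_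
  rw [integral_add j3 i5, integral_add j2 i4, integral_add j1 i3, integral_add i1 i2]
  simp only [integral_const_mul]
  rw [← hZ, ← Q]
  have c1 : (C * S.V t + C * (4 * E * Z)) * (∫ x, ent (S.θ t x))
      ≤ (C * S.V t + C * (4 * E * Z)) * E := by gcongr
  have c2 : C * (4 * E * Z) * (∫ x, (S.v t x - 1) ^ 2) ≤ C * (4 * E * Z) * E := by gcongr
  have c3 : C * (4 * E * Z) * (∫ x, S.u t x ^ 2) ≤ C * (4 * E * Z) * E := by gcongr
  have c4 : 0 ≤ C * S.V t * (1 + 4 / S.A) := by positivity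
  have c5 : 0 ≤ C * S.V t * E * ∫ x, S.J t x := by positivity
  have c6 : 0 ≤ C * Z * (4 / S.A + E) := by positivity
  have c7 : 0 ≤ C * S.V t * (1 + ∫ x, S.J t x) * E ^ 2 := by positivity
  linarith

lemma J_loc_bdd (T : ℝ) : ∃ M, ∀ t ∈ Icc 0 T, ∫ x, S.J t x ≤ M := by
  obtain ⟨B, hB1, hB⟩ := S.bdd T
  obtain ⟨H, hH⟩ := S.h1 T
  have hA := S.A_pos
  have hcv := S.hcv
  refine ⟨2 * S.cv ^ 2 * H + (2 * B ^ 2 + S.A / 4 * B ^ 2) * H, fun t ht => ?_⟩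
  have i1 := (S.lθ t).integrable_sq.const_mul (2 * S.cv ^ 2)
  have i2 := (S.lu t).integrable_sq.const_mul (2 * B ^ 2 + S.A / 4 * B ^ 2)
  obtain ⟨-, h2, h3, -⟩ := hH t ht
  refine (integral_mono (S.int_J ht.1) (i1.add i2) fun x => ?_).trans ((integral_add i1 i2).le.trans ?_)
  · have hu := (hB t ht x).1
    have h1 := S.abs_sp_le hu
    have hB0 : 0 ≤ B := by linarith
    rw [one_mul, Real.norm_eq_abs, Real.norm_eq_abs, abs_of_nonneg (S.sp_nonneg t x),
      abs_of_nonneg (by positivity)] at h1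
    have h4 := pow_le_pow_left₀ (S.sp_nonneg t x) h1 2
    have h5 := Ph_le (S.sp_nonneg t x)
    have h6 : (S.cv * |S.θ t x - 1| + B * |S.u t x|) ^ 2
        ≤ 2 * S.cv ^ 2 * (S.θ t x - 1) ^ 2 + 2 * B ^ 2 * S.u t x ^ 2 := by
      have := sq_nonneg (S.cv * |S.θ t x - 1| - B * |S.u t x|)
      have e1 := sq_abs (S.θ t x - 1)
      have e2 := sq_abs (S.u t x)
      rw [← e1, ← e2]
      linarith
    have h7 : S.A / 4 * S.u t x ^ 4 ≤ S.A / 4 * (B ^ 2 * S.u t x ^ 2) := by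
      have : S.u t x ^ 2 ≤ B ^ 2 := by rw [← sq_abs]; gcongr
      calc S.A / 4 * S.u t x ^ 4 = S.A / 4 * (S.u t x ^ 2 * S.u t x ^ 2) := by ring
        _ ≤ _ := by gcongr
    simp only [J, Pi.add_apply]
    linarith
  · simp only [integral_const_mul]
    gcongr

/-- Uniform bound for `J`. Past a time `t0` after which `V` has small mass, the growth factor in
`integral_densJ_le` is absorbed by the supremum of `∫ J` itself; before `t0` the `H¹` bound on
compact time intervals suffices. -/
lemma J_bdd : ∃ M, 0 ≤ M ∧ (∀ t, 0 ≤ t → ∫ x, S.J t x ≤ M) ∧ IntegrableOn S.Q (Ioi 0) := by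
  obtain ⟨C, hC, hd⟩ := S.integral_densJ_le
  obtain ⟨-, -, -, hV⟩ := S.basic_energy
  have hZ := S.ux_integrable
  have hc0 := S.c0_pos
  have hZ0 : ∀ t, 0 ≤ ∫ x, S.ux t x ^ 2 := fun t => integral_nonneg fun x => sq_nonneg _
  have inc : ∀ a b M, 0 ≤ a → a ≤ b → (∀ t ∈ Icc a b, ∫ x, S.J t x ≤ M) →
      (∫ x, S.J b x) + S.c0 * (∫ t in a..b, S.Q t) ≤ (∫ x, S.J a x)
        + C * (1 + M) * (∫ t in a..b, S.V t) + C * ∫ t in Ioi 0, ∫ x, S.ux t x ^ 2 := by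
    intro a b M ha hab hM
    have hsub : Ioc a b ⊆ Ioc 0 b := Ioc_subset_Ioc_left ha
    have k1 := ((S.V_int b).mono_set hsub).const_mul (C * (1 + M))
    have k2 := ((S.Z_int b).mono_set hsub).const_mul C
    have k3 := ((S.Q_int b).mono_set hsub).const_mul S.c0
    have h := S.J_increment (D := fun t => C * (1 + M) * S.V t + C * (∫ x, S.ux t x ^ 2)
      - S.c0 * S.Q t) ha hab ((k1.add k2).sub k3) fun t ht => by
        refine (hd t (ha.trans ht.1.le)).trans ?_
        have := hM t ⟨ht.1.le, ht.2⟩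
        have hV0 := S.V_nonneg t
        have : C * (S.V t * (1 + ∫ x, S.J t x)) ≤ C * (S.V t * (1 + M)) := by gcongr
        linarith
    have l1 := (intervalIntegrable_iff_integrableOn_Ioc_of_le hab).2 k1
    have l2 := (intervalIntegrable_iff_integrableOn_Ioc_of_le hab).2 k2
    have l3 := (intervalIntegrable_iff_integrableOn_Ioc_of_le hab).2 k3
    rw [intervalIntegral.integral_sub (l1.add l2) l3, intervalIntegral.integral_add l1 l2] at h
    simp only [intervalIntegral.integral_const_mul] at h
    have : ∫ t in a..b, (∫ x, S.ux t x ^ 2) ≤ ∫ t in Ioi 0, ∫ x, S.ux t x ^ 2 := by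
      rw [intervalIntegral.integral_of_le hab]
      exact setIntegral_mono_set hZ (ae_of_all _ hZ0)
        (LE.le.eventuallyLE (hsub.trans Ioc_subset_Ioi_self))
    have := mul_le_mul_of_nonneg_left this hC
    linarith
  obtain ⟨t0, ht0, htail⟩ := tail_small hV S.V_nonneg (ε := 1 / (2 * (C + 1))) (by positivity)
  set Z := ∫ t in Ioi 0, ∫ x, S.ux t x ^ 2 with hZdef
  have hZ00 : 0 ≤ Z := integral_nonneg hZ0
  have hJ0 : ∀ t, 0 ≤ ∫ x, S.J t x := fun t => integral_nonneg fun x => S.J_nonneg t x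
  set N := 2 * (∫ x, S.J t0 x) + 1 + 2 * C * Z with hN
  have late : ∀ T, t0 ≤ T → ∫ x, S.J T x ≤ N := by
    intro T hT
    set A := Set.image (fun s => ∫ x, S.J s x) (Icc t0 T) with hA
    obtain ⟨L, hL⟩ := S.J_loc_bdd T
    have hbdd : BddAbove A := ⟨L, by
      rintro _ ⟨s, hs, rfl⟩; exact hL s ⟨ht0.trans hs.1, hs.2⟩⟩
    have hne : A.Nonempty := ⟨_, t0, ⟨le_rfl, hT⟩, rfl⟩
    have hmem : ∀ s ∈ Icc t0 T, ∫ x, S.J s x ≤ sSup A := fun s hs => le_csSup hbdd ⟨s, hs, rfl⟩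
    have hM0 : 0 ≤ sSup A := (hJ0 t0).trans (hmem t0 ⟨le_rfl, hT⟩)
    have hle : sSup A ≤ (∫ x, S.J t0 x) + (1 + sSup A) / 2 + C * Z := by
      refine csSup_le hne ?_
      rintro _ ⟨s, hs, rfl⟩
      have h1 := inc t0 s (sSup A) ht0 hs.1 fun t ht => hmem t ⟨ht.1, ht.2.trans hs.2⟩
      have h2 := htail t0 s le_rfl hs.1
      have h3 : 0 ≤ S.c0 * ∫ t in t0..s, S.Q t :=
        mul_nonneg hc0.le (intervalIntegral.integral_nonneg hs.1 fun t _ => S.Q_nonneg t)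
      have h4 : C * (1 + sSup A) * (∫ t in t0..s, S.V t) ≤ (1 + sSup A) / 2 := by
        calc _ ≤ C * (1 + sSup A) * (1 / (2 * (C + 1))) := by gcongr
          _ = (C / (C + 1)) * ((1 + sSup A) / 2) := by field_simp
          _ ≤ 1 * ((1 + sSup A) / 2) := by
              gcongr; rw [div_le_one (by positivity)]; linarith
          _ = _ := one_mul _
      simp only
      linarith
    have := hmem T ⟨hT, le_rfl⟩
    linarith
  obtain ⟨L, hL⟩ := S.J_loc_bdd t0
  have all : ∀ t, 0 ≤ t → ∫ x, S.J t x ≤ max N L := fun t ht => by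
    rcases le_total t t0 with h | h
    · exact (hL t ⟨ht, h⟩).trans (le_max_right _ _)
    · exact (late t h).trans (le_max_left _ _)
  have hM0 : 0 ≤ max N L := (hJ0 0).trans (all 0 le_rfl)
  refine ⟨max N L, hM0, all, ?_⟩
  refine integrableOn_Ioi_of_bdd (C := S.c0⁻¹ * ((∫ x, S.J 0 x)
      + C * (1 + max N L) * (∫ t in Ioi 0, S.V t) + C * Z)) S.Q_nonneg S.Q_int fun T hT => ?_
  rw [le_inv_mul_iff₀ hc0]
  have h1 := inc 0 T (max N L) le_rfl hT fun t ht => all t ht.1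
  have h2 : ∫ t in (0 : ℝ)..T, S.V t ≤ ∫ t in Ioi 0, S.V t := by
    rw [intervalIntegral.integral_of_le hT]
    exact setIntegral_mono_set hV (ae_of_all _ S.V_nonneg)
      (LE.le.eventuallyLE Ioc_subset_Ioi_self)
  have h3 : C * (1 + max N L) * (∫ t in (0 : ℝ)..T, S.V t)
    ≤ C * (1 + max N L) * (∫ t in Ioi 0, S.V t) := by gcongr
  linarith [hJ0 T]

/-- The temperature stays bounded in `L²` around its equilibrium. -/
lemma θ_L2_bdd : ∃ C, 0 ≤ C ∧ ∀ t, 0 ≤ t → ∫ x, (S.θ t x - 1) ^ 2 ≤ C := by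
  obtain ⟨C3, hC3, hsq⟩ := S.θ_sq_le
  obtain ⟨M, hM, hJ, -⟩ := S.J_bdd
  obtain ⟨E, hE, hb, -⟩ := S.basic_energy
  have hA := S.A_pos
  refine ⟨(C3 + 10) * M + (C3 + 10) * E, by positivity, fun t ht => ?_⟩
  have i1 := (S.int_J ht).const_mul (C3 + 10)
  have i2 := (S.int_ent_θ t).const_mul (C3 + 10)
  refine (integral_mono (S.lθ t).integrable_sq (i1.add i2) fun x => ?_).trans
    ((integral_add i1 i2).le.trans ?_)
  · have hθ := S.θ_pos t x
    have hent := ent_nonneg hθ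
    have hPh := Ph_nonneg (S.sp_nonneg t x)
    have hJP : Ph (S.sp t x) ≤ S.J t x := by
      have : 0 ≤ S.A / 4 * S.u t x ^ 4 := by positivity
      unfold J; linarith
    have k1 : (C3 + 10) * Ph (S.sp t x) ≤ (C3 + 10) * S.J t x := by gcongr
    have k2 : (S.θ t x - 1) ^ 2 ≤ (C3 + 10) * Ph (S.sp t x) + (C3 + 10) * ent (S.θ t x) := by
      rcases le_total (S.θ t x) 4 with h | h
      · have h1 := sq_sub_one_le_ent hθ
        have h2 : 2 * (S.θ t x + 1) * ent (S.θ t x) ≤ 10 * ent (S.θ t x) := by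
          gcongr; linarith
        have : 0 ≤ (C3 + 10) * Ph (S.sp t x) + C3 * ent (S.θ t x) := by positivity
        linarith
      · have := hsq t x h
        have : (S.θ t x - 1) ^ 2 ≤ S.θ t x ^ 2 := by gcongr <;> linarith
        linarith
    simp only [Pi.add_apply]
    linarith
  · simp only [integral_const_mul]
    have := (hb t ht).2.2
    have := hJ t ht
    gcongr

/-- The heat dissipation is integrable in time. -/
lemma θx_integrable : IntegrableOn (fun t => ∫ x, S.θx t x ^ 2) (Ioi 0) := by
  obtain ⟨M, hM, -, hQ⟩ := S.J_bdd
  obtain ⟨-, -, -, hV⟩ := S.basic_energy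
  have hcv := S.hcv
  set d := Ph'' (8 * S.cv) with hd
  have hd0 : 0 < d := Ph''_pos (by positivity)
  have hG : IntegrableOn (fun t => 256 * S.V t + d⁻¹ * S.Q t) (Ioi 0) :=
    (hV.const_mul 256).add (hQ.const_mul d⁻¹)
  have hle : ∀ t, 0 ≤ t → ∫ x, S.θx t x ^ 2 ≤ 256 * S.V t + d⁻¹ * S.Q t := fun t ht => by
    have i1 := (S.lV ht).integrable_sq.const_mul 256
    have i2 := (S.int_Q t).const_mul d⁻¹
    refine (integral_mono (S.lθx t).integrable_sq (i1.add i2) fun x => ?_).trans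
      ((integral_add i1 i2).le.trans (by simp only [integral_const_mul]; rfl))
    have hθ := S.θ_pos t x
    have hφ := Ph''_nonneg (S.sp_nonneg t x)
    simp only [Pi.add_apply]
    rcases le_total (S.θ t x) 16 with h | h
    · have h1 : S.θx t x ^ 2 ≤ 256 * ((S.θ t x)⁻¹ * S.θx t x) ^ 2 := by
        have : S.θx t x ^ 2 = S.θ t x ^ 2 * ((S.θ t x)⁻¹ * S.θx t x) ^ 2 := by field_simp
        rw [this, show (256 : ℝ) = 16 ^ 2 by norm_num]
        gcongr
      have : 0 ≤ d⁻¹ * (Ph'' (S.sp t x) * S.θx t x ^ 2) := by positivity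
      linarith
    · have h1 : 8 * S.cv ≤ S.sp t x := by
        refine le_trans ?_ (le_max_left _ _)
        nlinarith [sq_nonneg (S.u t x)]
      have h2 := Ph''_mono (by positivity) h1
      have h3 : S.θx t x ^ 2 ≤ d⁻¹ * (Ph'' (S.sp t x) * S.θx t x ^ 2) := by
        rw [le_inv_mul_iff₀ hd0]; gcongr
      have : 0 ≤ 256 * ((S.θ t x)⁻¹ * S.θx t x) ^ 2 := by positivity
      linarith
  have hX0 : ∀ t, 0 ≤ ∫ x, S.θx t x ^ 2 := fun t => integral_nonneg fun x => sq_nonneg _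
  refine integrableOn_Ioi_of_bdd (C := ∫ t in Ioi 0, (256 * S.V t + d⁻¹ * S.Q t)) hX0 S.X_int
    fun T hT => ?_
  rw [intervalIntegral.integral_of_le hT]
  have hpos : ∀ t, 0 ≤ 256 * S.V t + d⁻¹ * S.Q t := fun t => by
    have := S.V_nonneg t; have := S.Q_nonneg t; positivity
  refine (setIntegral_mono_on (S.X_int T) (hG.mono_set Ioc_subset_Ioi_self) measurableSet_Ioc
    fun t ht => hle t ht.1.le).trans ?_
  exact setIntegral_mono_set hG (ae_of_all _ hpos) (LE.le.eventuallyLE Ioc_subset_Ioi_self)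

end GasFlow

/-! ### Difference quotients on space-time slabs -/

/-- The vanishing sequence of increments used in all difference quotients. -/
noncomputable def hn (n : ℕ) : ℝ := 1 / ((n : ℝ) + 1)

lemma hn_pos (n : ℕ) : 0 < hn n := by unfold hn; positivity

lemma meas_dq {f : ℝ → ℝ → ℝ} (mf : Measurable (Function.uncurry f)) (h : ℝ) :
    Measurable (Function.uncurry fun t x => dq h (f t) x) := by
  have e1 : Measurable fun p : ℝ × ℝ => f p.1 (p.2 + h) :=
    mf.comp (measurable_fst.prodMk (measurable_snd.add_const h))
  have e2 : Measurable fun p : ℝ × ℝ => f p.1 p.2 := mf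
  exact (e1.sub e2).div_const h

/-- Integrals of slices of a square integrable function, as in Fubini's theorem. -/
lemma integral_strip_sq {T : ℝ} {f : ℝ → ℝ → ℝ} (hf : MemLp (Function.uncurry f) 2 (strip T)) :
    ∫ p, f p.1 p.2 ^ 2 ∂strip T = ∫ t in Ioc 0 T, ∫ x, f t x ^ 2 :=
  integral_prod _ hf.integrable_sq

lemma ae_memLp_of_strip {T : ℝ} {f : ℝ → ℝ → ℝ} (mf : Measurable (Function.uncurry f))
    (hf : MemLp (Function.uncurry f) 2 (strip T)) :
    ∀ᵐ t ∂volume.restrict (Ioc 0 T), MemLp (f t) 2 := by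
  filter_upwards [hf.integrable_sq.prod_right_ae] with t ht
  exact (memLp_two_iff_integrable_sq (mf.comp measurable_prodMk_left).aestronglyMeasurable).2 ht

/-- Slice-wise `L²` bounds and pointwise convergence give strong convergence on a strip. -/
lemma strip_strong {T : ℝ} {f : ℕ → ℝ → ℝ → ℝ} {g : ℝ → ℝ → ℝ}
    (mf : ∀ n, Measurable (Function.uncurry (f n))) (mg : Measurable (Function.uncurry g))
    (hg : MemLp (Function.uncurry g) 2 (strip T))
    (hs : ∀ n t, MemLp (g t) 2 → MemLp (f n t) 2 ∧ ∫ x, f n t x ^ 2 ≤ ∫ x, g t x ^ 2)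
    (hlim : ∀ t x, Tendsto (fun n => f n t x) atTop (nhds (g t x))) :
    (∀ n, MemLp (Function.uncurry (f n)) 2 (strip T)) ∧
      Tendsto (fun n => ∫ p, (Function.uncurry (f n) p - Function.uncurry g p) ^ 2 ∂strip T)
        atTop (nhds 0) := by
  have hG : IntegrableOn (fun t => ∫ x, g t x ^ 2) (Ioc 0 T) := hg.integrable_sq.integral_prod_left
  have hsl := ae_memLp_of_strip mg hg
  have h1 : ∀ n, MemLp (Function.uncurry (f n)) 2 (strip T) := fun n =>
    memLp_strip (mf n) hG (hsl.mono fun t ht => hs n t ht)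
  refine ⟨h1, tendsto_integral_sq_sub h1 hg (ae_of_all _ fun p => hlim p.1 p.2) fun n => ?_⟩
  refine (integral_strip_sq (h1 n)).le.trans (le_trans ?_ (integral_strip_sq hg).ge)
  exact integral_mono_ae (h1 n).integrable_sq.integral_prod_left hG
    (hsl.mono fun t ht => (hs n t ht).2)

lemma strip_dq {T : ℝ} {f f' : ℝ → ℝ → ℝ} (mf : Measurable (Function.uncurry f))
    (mf' : Measurable (Function.uncurry f')) (hd : ∀ t x, HasDerivAt (f t) (f' t x) x)
    (hc : ∀ t, Continuous (f' t)) (hf' : MemLp (Function.uncurry f') 2 (strip T)) :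
    (∀ n, MemLp (Function.uncurry fun t x => dq (hn n) (f t) x) 2 (strip T)) ∧
      Tendsto (fun n => ∫ p, ((Function.uncurry fun t x => dq (hn n) (f t) x) p
        - Function.uncurry f' p) ^ 2 ∂strip T) atTop (nhds 0) :=
  strip_strong (fun _ => meas_dq mf _) mf' hf'
    (fun n t ht => dq_memLp (hd t) (hc t) ht (hn_pos n)) fun t x => dq_tendsto (hd t x)

lemma tendsto_slab_of_strip {a b : ℝ} (ha : 0 ≤ a) {f : ℕ → ℝ × ℝ → ℝ} {g : ℝ × ℝ → ℝ}
    (hf : ∀ n, MemLp (f n) 2 (strip b)) (hg : MemLp g 2 (strip b))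
    (h : Tendsto (fun n => ∫ p, (f n p - g p) ^ 2 ∂strip b) atTop (nhds 0)) :
    Tendsto (fun n => ∫ p, (f n p - g p) ^ 2 ∂slab a b) atTop (nhds 0) :=
  squeeze_zero (fun _ => integral_nonneg fun _ => sq_nonneg _)
    (fun n => integral_mono_measure (slab_le ha) (ae_of_all _ fun _ => sq_nonneg _)
      ((hf n).sub hg).integrable_sq) h

lemma dq_strong {f f' : ℝ → ℝ} (hd : ∀ x, HasDerivAt f (f' x) x) (hc : Continuous f')
    (hf' : MemLp f' 2) :
    Tendsto (fun n => ∫ x, (dq (hn n) f x - f' x) ^ 2) atTop (nhds 0) :=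
  tendsto_integral_sq_sub (fun n => (dq_memLp hd hc hf' (hn_pos n)).1) hf'
    (ae_of_all _ fun x => dq_tendsto (hd x)) fun n => (dq_memLp hd hc hf' (hn_pos n)).2

lemma tendsto_sq_sub_const {α : Type*} [MeasurableSpace α] {ν : Measure α} (g : α → ℝ) :
    Tendsto (fun _ : ℕ => ∫ x, (g x - g x) ^ 2 ∂ν) atTop (nhds 0) := by simp

/-! ### The effective velocity and the bound for `v_x` -/

namespace GasFlow
variable (S : GasFlow)

/-- The potential `μ log v`, whose time derivative is the viscous stress. -/
noncomputable def z (t x : ℝ) : ℝ := S.μ * Real.log (S.v t x)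
/-- The spatial derivative of `z`. -/
noncomputable def zx (t x : ℝ) : ℝ := S.μ * (S.vx t x / S.v t x)
/-- The viscous stress. -/
noncomputable def a0 (t x : ℝ) : ℝ := S.μ * (S.ux t x / S.v t x)
/-- The spatial derivative of the viscous stress. -/
noncomputable def a0x (t x : ℝ) : ℝ :=
  S.μ * (S.uxx t x / S.v t x - S.ux t x * S.vx t x / S.v t x ^ 2)

@[fun_prop] lemma meas_z {α : Type*} [MeasurableSpace α] {f g : α → ℝ}
    (hf : Measurable f) (hg : Measurable g) : Measurable fun y => S.z (f y) (g y) := by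
  unfold z; fun_prop
@[fun_prop] lemma meas_zx {α : Type*} [MeasurableSpace α] {f g : α → ℝ}
    (hf : Measurable f) (hg : Measurable g) : Measurable fun y => S.zx (f y) (g y) := by
  unfold zx; fun_prop
@[fun_prop] lemma meas_a0 {α : Type*} [MeasurableSpace α] {f g : α → ℝ}
    (hf : Measurable f) (hg : Measurable g) : Measurable fun y => S.a0 (f y) (g y) := by
  unfold a0; fun_prop
@[fun_prop] lemma meas_a0x {α : Type*} [MeasurableSpace α] {f g : α → ℝ}
    (hf : Measurable f) (hg : Measurable g) : Measurable fun y => S.a0x (f y) (g y) := by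
  unfold a0x; fun_prop

lemma dz (t x : ℝ) : HasDerivAt (S.z t) (S.zx t x) x :=
  ((S.dv t x).log (S.v_pos t x).ne').const_mul S.μ

lemma da0 (t x : ℝ) : HasDerivAt (S.a0 t) (S.a0x t x) x := by
  have hv := (S.v_pos t x).ne'
  refine (((S.dux t x).div (S.dv t x) hv).const_mul S.μ).congr_deriv ?_
  unfold a0x; field_simp

lemma tz (x t : ℝ) (ht : 0 < t) : HasDerivAt (fun s => S.z s x) (S.a0 t x) t :=
  ((S.tv x t ht).log (S.v_pos t x).ne').const_mul S.μ

lemma cont_v (t : ℝ) : Continuous (S.v t) :=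
  continuous_iff_continuousAt.2 fun x => (S.dv t x).continuousAt
lemma cont_ux (t : ℝ) : Continuous (S.ux t) :=
  continuous_iff_continuousAt.2 fun x => (S.dux t x).continuousAt
lemma cont_θx (t : ℝ) : Continuous (S.θx t) :=
  continuous_iff_continuousAt.2 fun x => (S.dθx t x).continuousAt

lemma cont_zx (t : ℝ) : Continuous (S.zx t) :=
  continuous_const.mul ((S.cvx t).div (S.cont_v t) fun x => (S.v_pos t x).ne')

lemma cont_a0x (t : ℝ) : Continuous (S.a0x t) :=
  continuous_const.mul (((S.cuxx t).div (S.cont_v t) fun x => (S.v_pos t x).ne').sub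
    (((S.cont_ux t).mul (S.cvx t)).div ((S.cont_v t).pow 2) fun x =>
      pow_ne_zero 2 (S.v_pos t x).ne'))

lemma lzx (t : ℝ) : MemLp (S.zx t) 2 := by
  have mb : Measurable (fun x => (S.v t x)⁻¹) := by fun_prop
  refine ((memLp_bdd_mul' (S.lvx t) mb fun x => S.abs_inv_v_le t x).const_mul S.μ).ae_eq
    (ae_of_all _ fun x => ?_)
  simp only [zx]; ring

lemma la0 (t : ℝ) : MemLp (S.a0 t) 2 := by
  have mb : Measurable (fun x => (S.v t x)⁻¹) := by fun_prop
  refine ((memLp_bdd_mul' (S.lux t) mb fun x => S.abs_inv_v_le t x).const_mul S.μ).ae_eq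
    (ae_of_all _ fun x => ?_)
  simp only [a0]; ring

lemma a0x_aux {α : Type*} [MeasurableSpace α] {ν : Measure α} {f g : α → ℝ}
    (hf : Measurable f) (hg : Measurable g)
    (h1 : MemLp (fun a => S.uxx (f a) (g a)) 2 ν)
    (h2 : MemLp (fun a => S.ux (f a) (g a) * S.vx (f a) (g a)) 2 ν) :
    MemLp (fun a => S.a0x (f a) (g a)) 2 ν := by
  have mb : Measurable (fun a => (S.v (f a) (g a))⁻¹) := by fun_prop
  have hb : ∀ a, |(S.v (f a) (g a))⁻¹| ≤ S.K := fun a => S.abs_inv_v_le _ _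
  have e1 := memLp_bdd_mul' h1 mb hb
  have e2 := memLp_bdd_mul' (memLp_bdd_mul' h2 mb hb) mb hb
  refine ((e1.sub e2).const_mul S.μ).ae_eq (ae_of_all _ fun x => ?_)
  simp only [Pi.sub_apply, a0x]; field_simp

variable {S} in
lemma Good.la0x {t : ℝ} (h : S.Good t) : MemLp (S.a0x t) 2 :=
  S.a0x_aux (f := fun _ => t) (g := fun x => x) measurable_const measurable_id h.1
    (memLp_mul_of_deriv (S.dux t) (S.lux t) h.1 (S.lvx t)).1

lemma strip_a0x (T : ℝ) : MemLp (Function.uncurry S.a0x) 2 (strip T) :=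
  S.a0x_aux measurable_fst measurable_snd (S.suxx T) (S.strip_ux_vx T)

lemma strip_zx (T : ℝ) : MemLp (Function.uncurry S.zx) 2 (strip T) := by
  have mb : Measurable (fun p : ℝ × ℝ => (S.v p.1 p.2)⁻¹) := by fun_prop
  refine ((memLp_bdd_mul' (S.strip_vx T) mb fun x => S.abs_inv_v_le _ _).const_mul S.μ).ae_eq
    (ae_of_all _ fun x => ?_)
  simp only [Function.uncurry, zx]; ring

/-- The evolution of `½ ‖z_x‖² - ⟨u, z_x⟩`, obtained by differentiating with `z_x` replaced by
a difference quotient and passing to the limit; `v_x` itself need not be differentiable in time. -/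
lemma eff_identity {a b : ℝ} (ha : 0 ≤ a) (hab : a ≤ b) :
    ((∫ x, (S.zx b x * S.zx b x) * (1 / 2)) - ∫ x, S.u b x * S.zx b x)
      - ((∫ x, (S.zx a x * S.zx a x) * (1 / 2)) - ∫ x, S.u a x * S.zx a x)
    = (∫ p, S.zx p.1 p.2 * S.a0x p.1 p.2 ∂slab a b) - (∫ p, S.u p.1 p.2 * S.a0x p.1 p.2 ∂slab a b)
      - ∫ p, S.ut p.1 p.2 * S.zx p.1 p.2 ∂slab a b := by
  have mz : Measurable (Function.uncurry S.z) := by unfold Function.uncurry; fun_prop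
  have mzx : Measurable (Function.uncurry S.zx) := by unfold Function.uncurry; fun_prop
  have ma0 : Measurable (Function.uncurry S.a0) := by unfold Function.uncurry; fun_prop
  have ma0x : Measurable (Function.uncurry S.a0x) := by unfold Function.uncurry; fun_prop
  have le := slab_le (b := b) ha
  obtain ⟨z1, z2⟩ := strip_dq mz mzx S.dz S.cont_zx (S.strip_zx b)
  obtain ⟨w1, w2⟩ := strip_dq ma0 ma0x S.da0 S.cont_a0x (S.strip_a0x b)
  have z3 := tendsto_slab_of_strip ha z1 (S.strip_zx b) z2
  have w3 := tendsto_slab_of_strip ha w1 (S.strip_a0x b) w2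
  have z1' := fun n => (z1 n).mono_measure le
  have w1' := fun n => (w1 n).mono_measure le
  have hzx := (S.strip_zx b).mono_measure le
  have ha0x := (S.strip_a0x b).mono_measure le
  have hu := (S.strip_u b).mono_measure le
  have hut := (S.strip_ut b).mono_measure le
  have t1 := tendsto_integral_mul z1' hzx w1' ha0x z3 w3
  have t2 := tendsto_integral_mul (fun _ => hu) hu w1' ha0x (tendsto_sq_sub_const _) w3
  have t3 := tendsto_integral_mul (fun _ => hut) hut z1' hzx (tendsto_sq_sub_const _) z3
  have sl : ∀ t, Tendsto (fun n => (∫ x, (dq (hn n) (S.z t) x * dq (hn n) (S.z t) x) * (1 / 2))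
      - ∫ x, S.u t x * dq (hn n) (S.z t) x) atTop
      (nhds ((∫ x, (S.zx t x * S.zx t x) * (1 / 2)) - ∫ x, S.u t x * S.zx t x)) := fun t => by
    have d1 := dq_strong (S.dz t) (S.cont_zx t) (S.lzx t)
    have d2 := fun n => (dq_memLp (S.dz t) (S.cont_zx t) (S.lzx t) (hn_pos n)).1
    have s1 := tendsto_integral_mul d2 (S.lzx t) d2 (S.lzx t) d1 d1
    have s2 := tendsto_integral_mul (fun _ => S.lu t) (S.lu t) d2 (S.lzx t)
      (tendsto_sq_sub_const _) d1
    simp only [integral_mul_const]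
    exact (s1.mul_const _).sub s2
  refine tendsto_nhds_unique ((sl b).sub (sl a)) (((t1.sub t2).sub t3).congr fun n => ?_)
  set D := fun t x => dq (hn n) (S.z t) x with hD
  set E := fun t x => dq (hn n) (S.a0 t) x with hE
  have lD : ∀ t, MemLp (D t) 2 := fun t =>
    (dq_memLp (S.dz t) (S.cont_zx t) (S.lzx t) (hn_pos n)).1
  have cD : ∀ x, Continuous fun t => D t x := fun x => by
    have cz : ∀ x, Continuous fun t => S.z t x := fun x =>
      continuous_const.mul ((S.ctv x).log fun t => (S.v_pos t x).ne')
    exact ((cz (x + hn n)).sub (cz x)).div_const _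
  have tD : ∀ x t, 0 < t → HasDerivAt (fun s => D s x) (E t x) t := fun x t ht =>
    ((S.tz (x + hn n) t ht).sub (S.tz x t ht)).div_const _
  have k1 := integrable_mul_of_memLp (z1' n) (w1' n)
  have k2 := integrable_mul_of_memLp hu (w1' n)
  have k3 := integrable_mul_of_memLp hut (z1' n)
  have j1 : ∀ t, Integrable fun x => (D t x * D t x) * (1 / 2) := fun t =>
    (integrable_mul_of_memLp (lD t) (lD t)).mul_const _
  have j2 : ∀ t, Integrable fun x => S.u t x * D t x := fun t =>
    integrable_mul_of_memLp (S.lu t) (lD t)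
  have h := time_ftc (F := fun t x => (D t x * D t x) * (1 / 2) - S.u t x * D t x)
    (Ft := fun t x => D t x * E t x - S.u t x * E t x - S.ut t x * D t x) hab
    (fun x => (((cD x).mul (cD x)).mul continuous_const).sub ((S.ctu x).mul (cD x)))
    (fun x t ht => by
      have ht0 := ha.trans_lt ht.1
      refine ((((tD x t ht0).mul (tD x t ht0)).mul_const (1 / 2)).sub
        ((S.tu x t ht0).mul (tD x t ht0))).congr_deriv ?_
      simp only [ut]; ring)
    ((k1.sub k2).sub k3) ((j1 a).sub (j2 a)) ((j1 b).sub (j2 b))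
  rw [intervalIntegral.integral_of_le hab] at h
  have h2 := h.trans (integral_prod _ ((k1.sub k2).sub k3)).symm
  rw [integral_sub (j1 b) (j2 b), integral_sub (j1 a) (j2 a)] at h2
  have e1 := integral_sub (k1.sub k2) k3
  have e2 := integral_sub k1 k2
  exact (h2.trans (e1.trans (congrArg (· - _) e2))).symm

end GasFlow

namespace GasFlow
variable (S : GasFlow)

/-- The dissipation of the volume gradient produced by the pressure. -/
noncomputable def P (t : ℝ) : ℝ := ∫ x, S.θ t x * S.vx t x * S.vx t x

lemma P_nonneg (t : ℝ) : 0 ≤ S.P t := integral_nonneg fun x => by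
  simp only [Pi.zero_apply, mul_assoc]
  exact mul_nonneg (S.θ_pos t x).le (mul_self_nonneg _)

lemma int_P {t : ℝ} (ht : 0 ≤ t) : Integrable fun x => S.θ t x * S.vx t x * S.vx t x := by
  obtain ⟨B, -, hB⟩ := S.bdd t
  refine integrable_bdd_mul_mul (S.lvx t) (S.lvx t) (by fun_prop) (C := B) (ae_of_all _ fun x => ?_)
  rw [abs_of_pos (S.θ_pos t x)]
  exact (hB t ⟨ht, le_rfl⟩ x).2.1

lemma P_int (T : ℝ) : IntegrableOn S.P (Ioc 0 T) := by
  obtain ⟨B, -, hB⟩ := S.bdd T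
  have : Integrable (fun p : ℝ × ℝ => S.θ p.1 p.2 * S.vx p.1 p.2 * S.vx p.1 p.2) (strip T) := by
    refine integrable_bdd_mul_mul (S.strip_vx T) (S.strip_vx T) (by fun_prop) (C := B) ?_
    refine ae_strip (P := fun t x => |S.θ t x| ≤ B) fun t ht x => ?_
    rw [abs_of_pos (S.θ_pos t x)]
    exact (hB t ht x).2.1
  exact this.integral_prod_left

/-- The functional `½ ‖z_x‖² - ⟨u, z_x⟩`. -/
noncomputable def Y (t : ℝ) : ℝ := (∫ x, (S.zx t x * S.zx t x) * (1 / 2)) - ∫ x, S.u t x * S.zx t x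

lemma zx_mul_le (t x : ℝ) : S.zx t x * (S.a0x t x - S.ut t x) ≤
    S.μ * S.R * S.K / 2 * (((S.θ t x)⁻¹ * S.θx t x) ^ 2 + S.θx t x ^ 2)
      - S.μ * S.R / (2 * S.K ^ 3) * (S.θ t x * S.vx t x * S.vx t x) := by
  have hv := S.v_pos t x
  have hθ := S.θ_pos t x
  have hμ := S.hμ
  have hR := S.hR
  have hK := S.K_pos
  have w1 := S.inv_v_le t x
  have w2 := S.le_inv_v t x
  have e : S.zx t x * (S.a0x t x - S.ut t x) = S.μ * S.R *
      (S.vx t x * S.θx t x * (S.v t x)⁻¹ ^ 2 - S.θ t x * S.vx t x ^ 2 * (S.v t x)⁻¹ ^ 3) := by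
    simp only [zx, a0x, ut]; field_simp; ring
  rw [e]
  have hw : 0 < (S.v t x)⁻¹ := inv_pos.2 hv
  set w := (S.v t x)⁻¹
  set i := (S.θ t x)⁻¹ with hi
  have hi0 : 0 < i := inv_pos.2 hθ
  have hiθ : S.θ t x * i = 1 := mul_inv_cancel₀ hθ.ne'
  have s1 : S.vx t x * S.θx t x * w ^ 2 ≤ 1 / 2 * (S.θ t x * S.vx t x ^ 2 * w ^ 3)
      + 1 / 2 * (w * (i * S.θx t x ^ 2)) := by
    have h : 0 ≤ 1 / 2 * (S.θ t x * w) * (S.vx t x * w - i * S.θx t x) ^ 2 := by positivity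
    have h2 : 1 / 2 * (S.θ t x * w) * (S.vx t x * w - i * S.θx t x) ^ 2
      = 1 / 2 * (S.θ t x * S.vx t x ^ 2 * w ^ 3) - (S.θ t x * i) * (S.vx t x * S.θx t x * w ^ 2)
        + 1 / 2 * (w * ((S.θ t x * i) * i * S.θx t x ^ 2)) := by ring
    rw [h2, hiθ] at h
    linarith
  have s2 : w * (i * S.θx t x ^ 2) ≤ S.K * ((i * S.θx t x) ^ 2 + S.θx t x ^ 2) := by
    have h1 : i ≤ i ^ 2 + 1 := by nlinarith [sq_nonneg (i - 1)]
    calc w * (i * S.θx t x ^ 2) ≤ S.K * ((i ^ 2 + 1) * S.θx t x ^ 2) := by gcongr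
      _ = _ := by ring
  have s3 : S.θ t x * S.vx t x ^ 2 * S.K⁻¹ ^ 3 ≤ S.θ t x * S.vx t x ^ 2 * w ^ 3 := by gcongr
  have s4 : S.vx t x * S.θx t x * w ^ 2 - S.θ t x * S.vx t x ^ 2 * w ^ 3
      ≤ S.K / 2 * ((i * S.θx t x) ^ 2 + S.θx t x ^ 2)
        - 1 / 2 * (S.θ t x * S.vx t x ^ 2 * S.K⁻¹ ^ 3) := by linarith
  calc _ ≤ S.μ * S.R * (S.K / 2 * ((i * S.θx t x) ^ 2 + S.θx t x ^ 2)
        - 1 / 2 * (S.θ t x * S.vx t x ^ 2 * S.K⁻¹ ^ 3)) := by gcongr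
    _ = _ := by field_simp

/-- The dissipation inequality for the effective velocity. -/
lemma Y_increment {a b : ℝ} (ha : 0 ≤ a) (hab : a ≤ b) : S.Y b ≤ S.Y a + ∫ t in a..b,
    (S.μ * S.R * S.K / 2 * (S.V t + ∫ x, S.θx t x ^ 2) + S.μ * S.K * (∫ x, S.ux t x ^ 2)
      - S.μ * S.R / (2 * S.K ^ 3) * S.P t) := by
  have h := S.eff_identity ha hab
  have le := slab_le (b := b) ha
  have hzx := (S.strip_zx b).mono_measure le
  have ha0x := (S.strip_a0x b).mono_measure le
  have hu := (S.strip_u b).mono_measure le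
  have hut := (S.strip_ut b).mono_measure le
  have k1 := integrable_mul_of_memLp hzx ha0x
  have k2 := integrable_mul_of_memLp hu ha0x
  have k3 := integrable_mul_of_memLp hut hzx
  have sub : Ioc a b ⊆ Ioc 0 b := Ioc_subset_Ioc_left ha
  have hD : IntegrableOn (fun t => S.μ * S.R * S.K / 2 * (S.V t + ∫ x, S.θx t x ^ 2)
      + S.μ * S.K * (∫ x, S.ux t x ^ 2) - S.μ * S.R / (2 * S.K ^ 3) * S.P t) (Ioc a b) :=
    IntegrableOn.mono_set ((((IntegrableOn.add (S.V_int b) (S.X_int b)).const_mul _).add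
      ((S.Z_int b).const_mul _)).sub ((S.P_int b).const_mul _)) sub
  have e1 := integral_sub (k1.sub k2) k3
  have e2 := integral_sub k1 k2
  have e3 := e1.symm.trans (integral_prod _ ((k1.sub k2).sub k3))
  have hle : ∫ t in Ioc a b, (∫ x, (S.zx t x * S.a0x t x - S.u t x * S.a0x t x
      - S.ut t x * S.zx t x)) ≤ ∫ t in Ioc a b, (S.μ * S.R * S.K / 2 * (S.V t + ∫ x, S.θx t x ^ 2)
      + S.μ * S.K * (∫ x, S.ux t x ^ 2) - S.μ * S.R / (2 * S.K ^ 3) * S.P t) := by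
    refine integral_mono_ae ((k1.sub k2).sub k3).integral_prod_left hD ?_
    filter_upwards [S.ae_good_slab ha] with t ht
    have ht0 : 0 ≤ t := ha.trans ht.1.1.le
    have g := ht.2
    have i1 := integrable_mul_of_memLp (S.lzx t) g.la0x
    have i2 := integrable_mul_of_memLp (S.lu t) g.la0x
    have i3 := integrable_mul_of_memLp (g.lut ht0) (S.lzx t)
    have i4 := integrable_mul_of_memLp (S.lux t) (S.la0 t)
    have ibp := integral_mul_deriv_eq_deriv_mul_of_integrable (fun x _ => S.du t x)
      (fun x _ => S.da0 t x) i2 i4 (integrable_mul_of_memLp (S.lu t) (S.la0 t))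
    have j1 : Integrable fun x => S.zx t x * (S.a0x t x - S.ut t x) :=
      (i1.sub i3).congr (ae_of_all _ fun x => by simp only [Pi.sub_apply]; ring)
    have j12 : Integrable fun x => S.zx t x * S.a0x t x - S.u t x * S.a0x t x := i1.sub i2
    have r : (∫ x, (S.zx t x * S.a0x t x - S.u t x * S.a0x t x - S.ut t x * S.zx t x))
        = ∫ x, (S.zx t x * (S.a0x t x - S.ut t x) + S.ux t x * S.a0 t x) := by
      rw [integral_add j1 i4, integral_sub j12 i3, integral_sub i1 i2, ibp]
      have : (∫ x, S.zx t x * (S.a0x t x - S.ut t x))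
          = (∫ x, S.zx t x * S.a0x t x) - ∫ x, S.ut t x * S.zx t x := by
        rw [← integral_sub i1 i3]; congr 1; ext x; ring
      rw [this]; ring
    rw [r]
    have iV := (S.lV ht0).integrable_sq
    have iX := (S.lθx t).integrable_sq
    have iZ := (S.lux t).integrable_sq
    have l1 : Integrable fun x => S.μ * S.R * S.K / 2 * (((S.θ t x)⁻¹ * S.θx t x) ^ 2
      + S.θx t x ^ 2) := (iV.add iX).const_mul _
    have l2 : Integrable fun x => S.μ * S.K * S.ux t x ^ 2 := iZ.const_mul _
    have l3 := (S.int_P ht0).const_mul (S.μ * S.R / (2 * S.K ^ 3))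
    have l12 : Integrable fun x => S.μ * S.R * S.K / 2 * (((S.θ t x)⁻¹ * S.θx t x) ^ 2
      + S.θx t x ^ 2) + S.μ * S.K * S.ux t x ^ 2 := l1.add l2
    have e : S.μ * S.R * S.K / 2 * (S.V t + ∫ x, S.θx t x ^ 2)
      + S.μ * S.K * (∫ x, S.ux t x ^ 2) - S.μ * S.R / (2 * S.K ^ 3) * S.P t
      = ∫ x, (S.μ * S.R * S.K / 2 * (((S.θ t x)⁻¹ * S.θx t x) ^ 2
      + S.θx t x ^ 2) + S.μ * S.K * S.ux t x ^ 2
      - S.μ * S.R / (2 * S.K ^ 3) * (S.θ t x * S.vx t x * S.vx t x)) := by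
      rw [integral_sub l12 l3, integral_add l1 l2, integral_const_mul, integral_const_mul,
        integral_const_mul, integral_add iV iX]
      rfl
    rw [e]
    refine integral_mono (j1.add i4) (l12.sub l3) fun x => ?_
    have p1 := S.zx_mul_le t x
    have p2 : S.ux t x * S.a0 t x ≤ S.μ * S.K * S.ux t x ^ 2 := by
      have := S.inv_v_le t x
      have hμ := S.hμ
      calc S.ux t x * S.a0 t x = S.μ * (S.v t x)⁻¹ * S.ux t x ^ 2 := by simp only [a0]; ring
        _ ≤ _ := by gcongr
    simp only
    linarith
  rw [intervalIntegral.integral_of_le hab]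
  have h4 : S.Y b - S.Y a = ∫ t in Ioc a b, (∫ x, (S.zx t x * S.a0x t x - S.u t x * S.a0x t x
      - S.ut t x * S.zx t x)) := h.trans ((congrArg (· - _) e2.symm).trans e3)
  linarith

lemma Y_lower (t : ℝ) :
    S.μ ^ 2 / (4 * S.K ^ 2) * (∫ x, S.vx t x ^ 2) ≤ S.Y t + ∫ x, S.u t x ^ 2 := by
  have i1 : Integrable fun x => (S.zx t x * S.zx t x) * (1 / 2) :=
    (integrable_mul_of_memLp (S.lzx t) (S.lzx t)).mul_const _
  have i2 := integrable_mul_of_memLp (S.lu t) (S.lzx t)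
  have i3 := (S.lu t).integrable_sq
  have i12 : Integrable fun x => (S.zx t x * S.zx t x) * (1 / 2) - S.u t x * S.zx t x := i1.sub i2
  unfold Y
  rw [← integral_sub i1 i2, ← integral_add i12 i3, ← integral_const_mul]
  refine integral_mono ((S.lvx t).integrable_sq.const_mul _) (i12.add i3) fun x => ?_
  have hμ := S.hμ
  have hK := S.K_pos
  have w := S.le_inv_v t x
  simp only
  have h1 : S.μ ^ 2 / (4 * S.K ^ 2) * S.vx t x ^ 2 ≤ 1 / 4 * S.zx t x ^ 2 := by
    calc S.μ ^ 2 / (4 * S.K ^ 2) * S.vx t x ^ 2 = 1 / 4 * (S.μ ^ 2 * S.K⁻¹ ^ 2 * S.vx t x ^ 2) := by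
          field_simp
      _ ≤ 1 / 4 * (S.μ ^ 2 * (S.v t x)⁻¹ ^ 2 * S.vx t x ^ 2) := by gcongr
      _ = _ := by simp only [zx]; ring
  linarith [sq_nonneg (S.zx t x / 2 - S.u t x)]

/-- The uniform bound for `v_x` in `L²` and the global integrability of its dissipation. -/
lemma vx_bdd : (∃ C, 0 ≤ C ∧ ∀ t, 0 ≤ t → ∫ x, S.vx t x ^ 2 ≤ C) ∧ IntegrableOn S.P (Ioi 0) := by
  obtain ⟨C, hC, hE, hV⟩ := S.basic_energy
  have hμ := S.hμ
  have hR := S.hR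
  have hK := S.K_pos
  set c := S.μ * S.R / (2 * S.K ^ 3) with hc
  have hc0 : 0 < c := by positivity
  set G := fun t => S.μ * S.R * S.K / 2 * (S.V t + ∫ x, S.θx t x ^ 2)
    + S.μ * S.K * (∫ x, S.ux t x ^ 2) with hG
  have iG : IntegrableOn G (Ioi 0) :=
    ((hV.add S.θx_integrable).const_mul _).add (S.ux_integrable.const_mul _)
  have G0 : ∀ t, 0 ≤ G t := fun t => by
    have h1 := S.V_nonneg t
    have h2 : 0 ≤ ∫ x, S.θx t x ^ 2 := integral_nonneg fun x => sq_nonneg _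
    have h3 : 0 ≤ ∫ x, S.ux t x ^ 2 := integral_nonneg fun x => sq_nonneg _
    simp only [hG]; positivity
  have key : ∀ T, 0 ≤ T → S.Y T + c * (∫ t in (0 : ℝ)..T, S.P t) ≤ S.Y 0 + ∫ t in Ioi 0, G t :=
    fun T hT => by
      have h := S.Y_increment le_rfl hT
      have iGT : IntervalIntegrable G volume 0 T :=
        (intervalIntegrable_iff_integrableOn_Ioc_of_le hT).2 (iG.mono_set Ioc_subset_Ioi_self)
      have iPT : IntervalIntegrable S.P volume 0 T :=
        (intervalIntegrable_iff_integrableOn_Ioc_of_le hT).2 (S.P_int T)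
      have e : (∫ t in (0 : ℝ)..T, (G t - c * S.P t))
          = (∫ t in (0 : ℝ)..T, G t) - c * ∫ t in (0 : ℝ)..T, S.P t := by
        rw [intervalIntegral.integral_sub iGT (iPT.const_mul c), intervalIntegral.integral_const_mul]
      have h2 : (∫ t in (0 : ℝ)..T, G t) ≤ ∫ t in Ioi 0, G t := by
        rw [intervalIntegral.integral_of_le hT]
        exact setIntegral_mono_set iG (ae_of_all _ G0) (ae_of_all _ Ioc_subset_Ioi_self)
      have h' : S.Y T ≤ S.Y 0 + ∫ t in (0 : ℝ)..T, (G t - c * S.P t) := h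
      rw [e] at h'
      linarith
  set M := S.Y 0 + ∫ t in Ioi 0, G t with hM
  have Ylow : ∀ T, 0 ≤ T → -C ≤ S.Y T := fun T hT => by
    have h := S.Y_lower T
    have h2 : 0 ≤ S.μ ^ 2 / (4 * S.K ^ 2) * (∫ x, S.vx T x ^ 2) :=
      mul_nonneg (by positivity) (integral_nonneg fun x => sq_nonneg _)
    linarith [(hE T hT).1]
  have hMC : 0 ≤ M + C := by
    have h1 := key 0 le_rfl
    have h2 := Ylow 0 le_rfl
    rw [intervalIntegral.integral_same, mul_zero] at h1
    linarith
  constructor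
  · refine ⟨(M + C) * (4 * S.K ^ 2 / S.μ ^ 2), by positivity, fun t ht => ?_⟩
    have h := S.Y_lower t
    have h1 := key t ht
    have h2 : 0 ≤ ∫ s in (0 : ℝ)..t, S.P s :=
      intervalIntegral.integral_nonneg ht fun s _ => S.P_nonneg s
    have h3 : 0 ≤ c * ∫ s in (0 : ℝ)..t, S.P s := by positivity
    calc (∫ x, S.vx t x ^ 2)
        = (S.μ ^ 2 / (4 * S.K ^ 2) * ∫ x, S.vx t x ^ 2) * (4 * S.K ^ 2 / S.μ ^ 2) := by field_simp
      _ ≤ (M + C) * (4 * S.K ^ 2 / S.μ ^ 2) := by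
        refine mul_le_mul_of_nonneg_right ?_ (by positivity)
        linarith [(hE t ht).1]
  · refine integrableOn_Ioi_of_bdd (C := c⁻¹ * (M + C)) S.P_nonneg S.P_int fun T hT => ?_
    have h1 := key T hT
    have h2 := Ylow T hT
    rw [inv_mul_eq_div, le_div_iff₀ hc0]
    linarith

end GasFlow

/-! ### The energy identity for gradients -/

lemma dq_mvt {f f' : ℝ → ℝ} (hd : ∀ x, HasDerivAt f (f' x) x) {h : ℝ} (hh : 0 < h) (x : ℝ) :
    ∃ y ∈ Ioo x (x + h), dq h f x = f' y := by
  obtain ⟨y, hy, e⟩ := exists_hasDerivAt_eq_slope f f' (show x < x + h by linarith)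
    (fun y _ => (hd y).continuousAt.continuousWithinAt) fun y _ => hd y
  refine ⟨y, hy, ?_⟩
  rw [e, dq, add_sub_cancel_left]

lemma hasDerivAt_dq {f f' : ℝ → ℝ} (hd : ∀ x, HasDerivAt f (f' x) x) (h x : ℝ) :
    HasDerivAt (dq h f) (dq h f' x) x :=
  (((hd (x + h)).comp_add_const x h).sub (hd x)).div_const h

/-- The centred second difference quotient. -/
noncomputable def dq2 (h : ℝ) (f : ℝ → ℝ) (x : ℝ) : ℝ := dq h (dq h f) (x - h)

lemma dq2_tendsto {f f' f'' : ℝ → ℝ} (h1 : ∀ x, HasDerivAt f (f' x) x)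
    (h2 : ∀ x, HasDerivAt f' (f'' x) x) (hc : Continuous f'') (x : ℝ) :
    Tendsto (fun n => dq2 (hn n) f x) atTop (nhds (f'' x)) := by
  have key : ∀ n, ∃ y, x - hn n ≤ y ∧ y ≤ x + hn n ∧ dq2 (hn n) f x = f'' y := fun n => by
    obtain ⟨y, hy, e⟩ := dq_mvt (hasDerivAt_dq h1 (hn n)) (hn_pos n) (x - hn n)
    obtain ⟨z, hz, e'⟩ := dq_mvt h2 (hn_pos n) y
    refine ⟨z, by linarith [hy.1, hz.1], by linarith [hy.2, hz.2], ?_⟩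
    rw [dq2, e, e']
  choose y y1 y2 y3 using key
  have h0 : Tendsto hn atTop (nhds 0) := tendsto_one_div_add_atTop_nhds_zero_nat
  have l1 : Tendsto (fun n => x - hn n) atTop (nhds x) := by
    simpa using tendsto_const_nhds.sub h0
  have l2 : Tendsto (fun n => x + hn n) atTop (nhds x) := by
    simpa using tendsto_const_nhds.add h0
  have ly := tendsto_of_tendsto_of_tendsto_of_le_of_le l1 l2 y1 y2
  simp only [y3]
  exact (hc.tendsto x).comp ly

lemma dq2_memLp {f f' f'' : ℝ → ℝ} (h1 : ∀ x, HasDerivAt f (f' x) x)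
    (h2 : ∀ x, HasDerivAt f' (f'' x) x) (hc : Continuous f'') (hf : MemLp f'' 2) {h : ℝ}
    (hh : 0 < h) : MemLp (dq2 h f) 2 ∧ ∫ x, dq2 h f x ^ 2 ≤ ∫ x, f'' x ^ 2 := by
  have hc' : Continuous f' := continuous_iff_continuousAt.2 fun x => (h2 x).continuousAt
  have hc1 : Continuous (dq h f') := by unfold dq; fun_prop
  obtain ⟨a1, a2⟩ := dq_memLp h2 hc hf hh
  obtain ⟨b1, b2⟩ := dq_memLp (hasDerivAt_dq h1 h) hc1 a1 hh
  refine ⟨b1.comp_measurePreserving (measurePreserving_sub_right volume h), ?_⟩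
  calc (∫ x, dq2 h f x ^ 2) = ∫ x, dq h (dq h f) x ^ 2 :=
        integral_sub_right_eq_self (fun x => dq h (dq h f) x ^ 2) h
    _ ≤ _ := b2.trans a2

/-- Discrete integration by parts. -/
lemma integral_dq_mul_dq {f g : ℝ → ℝ} {h : ℝ} (hf : MemLp (dq h f) 2) (hg : MemLp g 2) :
    ∫ x, dq h f x * dq h g x = -∫ x, dq2 h f x * g x := by
  have hf' : MemLp (fun x => dq h f (x - h)) 2 :=
    hf.comp_measurePreserving (measurePreserving_sub_right volume h)
  have hg' : MemLp (fun x => g (x + h)) 2 :=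
    hg.comp_measurePreserving (measurePreserving_add_right volume h)
  have i1 := (integrable_mul_of_memLp hf hg').div_const h
  have i2 := (integrable_mul_of_memLp hf hg).div_const h
  have i3 := (integrable_mul_of_memLp hf' hg).div_const h
  have e1 : (∫ x, dq h f x * dq h g x)
      = (∫ x, dq h f x * g (x + h) / h) - ∫ x, dq h f x * g x / h := by
    rw [← integral_sub i1 i2]; congr 1; ext x; rw [dq.eq_1 h g]; ring
  have e2 : (∫ x, dq2 h f x * g x)
      = (∫ x, dq h f x * g x / h) - ∫ x, dq h f (x - h) * g x / h := by
    rw [← integral_sub i2 i3]; congr 1; ext x; rw [dq2, dq.eq_1 h (dq h f), sub_add_cancel]; ring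
  have e3 : (∫ x, dq h f x * g (x + h) / h) = ∫ x, dq h f (x - h) * g x / h := by
    rw [← integral_sub_right_eq_self (fun x => dq h f x * g (x + h) / h) h]
    simp only [sub_add_cancel]
  rw [e1, e2, e3]; ring

/-- The evolution of `‖f_x‖²`, by passing to the limit in difference quotients. -/
lemma grad_identity {a b : ℝ} (ha : 0 ≤ a) (hab : a ≤ b) {f fx fxx ft : ℝ → ℝ → ℝ}
    (mf : Measurable (Function.uncurry f)) (mfxx : Measurable (Function.uncurry fxx))
    (mft : Measurable (Function.uncurry ft))
    (mfx : Measurable (Function.uncurry fx))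
    (d1 : ∀ t x, HasDerivAt (f t) (fx t x) x) (d2 : ∀ t x, HasDerivAt (fx t) (fxx t x) x)
    (cxx : ∀ t, Continuous (fxx t)) (ct : ∀ x, Continuous fun t => f t x)
    (tf : ∀ x t, 0 < t → HasDerivAt (fun s => f s x) (ft t x) t)
    (lfx : ∀ t, MemLp (fx t) 2) (sfx : MemLp (Function.uncurry fx) 2 (strip b))
    (sfxx : MemLp (Function.uncurry fxx) 2 (strip b))
    (sft : MemLp (Function.uncurry ft) 2 (strip b)) :
    (∫ x, fx b x * fx b x) - (∫ x, fx a x * fx a x)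
      = -(2 * ∫ p, Function.uncurry fxx p * Function.uncurry ft p ∂slab a b) := by
  have le := slab_le (b := b) ha
  have cfx : ∀ t, Continuous (fx t) := fun t =>
    continuous_iff_continuousAt.2 fun x => (d2 t x).continuousAt
  have m2 : ∀ n, Measurable (Function.uncurry fun t x => dq2 (hn n) (f t) x) := fun n =>
    (meas_dq (meas_dq mf (hn n)) (hn n)).comp
      (measurable_fst.prodMk (measurable_snd.sub_const (hn n)))
  obtain ⟨z1, z2⟩ := strip_strong (g := fxx) (f := fun n t x => dq2 (hn n) (f t) x) m2 mfxx sfxx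
    (fun n t ht => dq2_memLp (d1 t) (d2 t) (cxx t) ht (hn_pos n))
    fun t x => dq2_tendsto (d1 t) (d2 t) (cxx t) x
  have z3 := tendsto_slab_of_strip ha z1 sfxx z2
  have z1' := fun n => (z1 n).mono_measure le
  have sxx' := sfxx.mono_measure le
  have sft' := sft.mono_measure le
  have t1 := tendsto_integral_mul z1' sxx' (fun _ => sft') sft' z3 (tendsto_sq_sub_const _)
  have lD : ∀ n t, MemLp (dq (hn n) (f t)) 2 := fun n t =>
    (dq_memLp (d1 t) (cfx t) (lfx t) (hn_pos n)).1
  have sl : ∀ t, Tendsto (fun n => ∫ x, dq (hn n) (f t) x * dq (hn n) (f t) x) atTop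
      (nhds (∫ x, fx t x * fx t x)) := fun t => by
    have s1 := dq_strong (d1 t) (cfx t) (lfx t)
    exact tendsto_integral_mul (fun n => lD n t) (lfx t) (fun n => lD n t) (lfx t) s1 s1
  refine tendsto_nhds_unique ((sl b).sub (sl a)) (((t1.const_mul 2).neg).congr fun n => ?_)
  obtain ⟨w1, -⟩ := strip_dq mf mfx d1 cfx sfx
  have sE : MemLp (Function.uncurry fun t x => dq (hn n) (ft t) x) 2 (strip b) := by
    have mp : MeasurePreserving (Prod.map id (· + hn n)) (strip b) (strip b) :=
      (MeasurePreserving.id _).prod (measurePreserving_add_right volume (hn n))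
    have h1 := sft.comp_measurePreserving mp
    refine ((h1.sub sft).const_mul (hn n)⁻¹).ae_eq (ae_of_all _ fun p => ?_)
    simp only [Function.uncurry, dq, Pi.sub_apply, Function.comp, Prod.map, id]
    ring
  have k1 := integrable_mul_of_memLp ((w1 n).mono_measure le) (sE.mono_measure le)
  have k2 := k1.const_mul 2
  have h := time_ftc (F := fun t x => dq (hn n) (f t) x * dq (hn n) (f t) x)
    (Ft := fun t x => 2 * (dq (hn n) (f t) x * dq (hn n) (ft t) x)) hab
    (fun x => by unfold dq; have := ct x; have := ct (x + hn n); fun_prop)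
    (fun x t ht => by
      have ht0 := ha.trans_lt ht.1
      have tD : HasDerivAt (fun s => dq (hn n) (f s) x) (dq (hn n) (ft t) x) t :=
        ((tf (x + hn n) t ht0).sub (tf x t ht0)).div_const _
      refine (tD.mul tD).congr_deriv ?_
      ring)
    k2 (integrable_mul_of_memLp (lD n a) (lD n a)) (integrable_mul_of_memLp (lD n b) (lD n b))
  rw [h, intervalIntegral.integral_of_le hab]
  have e : (∫ p, Function.uncurry (fun t x => dq2 (hn n) (f t) x) p * Function.uncurry ft p
      ∂slab a b) = ∫ t in Ioc a b, ∫ x, dq2 (hn n) (f t) x * ft t x :=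
    integral_prod _ (integrable_mul_of_memLp (z1' n) sft')
  refine (congrArg (fun r => -(2 * r)) e).trans ?_
  rw [← integral_const_mul, ← integral_neg]
  refine setIntegral_congr_ae measurableSet_Ioc ?_
  rw [← ae_restrict_iff' measurableSet_Ioc]
  filter_upwards [sft'.integrable_sq.prod_right_ae] with t ht
  have lt : MemLp (ft t) 2 :=
    (memLp_two_iff_integrable_sq (mft.comp measurable_prodMk_left).aestronglyMeasurable).2 ht
  rw [integral_const_mul, integral_dq_mul_dq (lD n t) lt]
  ring

/-! ### Decay of the gradients -/

lemma integral_mul_sq_le {f f' g : ℝ → ℝ} (hd : ∀ x, HasDerivAt f (f' x) x)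
    (hf : MemLp f 2) (hf' : MemLp f' 2) (hg : MemLp g 2) {ε : ℝ} (hε : 0 < ε) :
    ∫ x, (f x * g x) ^ 2 ≤ (ε * (∫ x, f' x ^ 2) + ε⁻¹ * ∫ x, f x ^ 2) * ∫ x, g x ^ 2 := by
  rw [← integral_const_mul]
  refine integral_mono (memLp_mul_of_deriv hd hf hf' hg).1.integrable_sq
    (hg.integrable_sq.const_mul _) fun x => ?_
  simp only [mul_pow]
  exact mul_le_mul_of_nonneg_right (sq_le_of_agmon hd hf hf' hε x) (sq_nonneg _)

lemma lin_comb_sq_le {α β γ a b c M : ℝ} (h1 : |α| ≤ M) (h2 : |β| ≤ M) (h3 : |γ| ≤ M) :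
    (α * a + β * b + γ * c) ^ 2 ≤ 3 * M ^ 2 * (a ^ 2 + b ^ 2 + c ^ 2) := by
  have e : ∀ {r s : ℝ}, |r| ≤ M → (r * s) ^ 2 ≤ M ^ 2 * s ^ 2 := fun {r s} h => by
    rw [mul_pow, ← sq_abs r]; gcongr
  have e1 := e (s := a) h1
  have e2 := e (s := b) h2
  have e3 := e (s := c) h3
  linarith [sq_nonneg (α * a - β * b), sq_nonneg (β * b - γ * c), sq_nonneg (α * a - γ * c)]

/-- The parabolic term absorbs half of the products with the remaining terms. -/
lemma neg_two_mul_le {k K w p s : ℝ} (hk : 0 < k) (hK : 0 < K) (hw : K⁻¹ ≤ w) :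
    -(2 * (p * (k * w * p + s))) ≤ -(k / K * p ^ 2) + K / k * s ^ 2 := by
  have h1 : k * K⁻¹ * p ^ 2 ≤ k * w * p ^ 2 := by gcongr
  have h2 : 0 ≤ (k / K) * (p + K / k * s) ^ 2 := by positivity
  have h3 : (k / K) * (p + K / k * s) ^ 2 = k / K * p ^ 2 + 2 * (p * s) + K / k * s ^ 2 := by
    field_simp; ring
  rw [h3] at h2
  have h4 : k * K⁻¹ = k / K := rfl
  rw [h4] at h1
  linarith

namespace GasFlow
variable (S : GasFlow)

/-- The form of the energy identity for gradients used for `u` and `θ`. -/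
lemma grad_increment {f fx fxx ft : ℝ → ℝ → ℝ} {D : ℝ → ℝ} {a b : ℝ} (ha : 0 ≤ a) (hab : a ≤ b)
    (mf : Measurable (Function.uncurry f)) (mfxx : Measurable (Function.uncurry fxx))
    (mft : Measurable (Function.uncurry ft)) (mfx : Measurable (Function.uncurry fx))
    (d1 : ∀ t x, HasDerivAt (f t) (fx t x) x) (d2 : ∀ t x, HasDerivAt (fx t) (fxx t x) x)
    (cxx : ∀ t, Continuous (fxx t)) (ct : ∀ x, Continuous fun t => f t x)
    (tf : ∀ x t, 0 < t → HasDerivAt (fun s => f s x) (ft t x) t)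
    (lfx : ∀ t, MemLp (fx t) 2) (sfx : MemLp (Function.uncurry fx) 2 (strip b))
    (sfxx : MemLp (Function.uncurry fxx) 2 (strip b))
    (sft : MemLp (Function.uncurry ft) 2 (strip b)) (hD : IntegrableOn D (Ioc 0 b))
    (hle : ∀ t, 0 < t → S.Good t → -(2 * ∫ x, fxx t x * ft t x) ≤ D t) :
    ∫ x, fx b x ^ 2 ≤ (∫ x, fx a x ^ 2) + ∫ t in a..b, D t := by
  have h := grad_identity ha hab mf mfxx mft mfx d1 d2 cxx ct tf lfx sfx sfxx sft
  have le := slab_le (b := b) ha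
  have k := integrable_mul_of_memLp (sfxx.mono_measure le) (sft.mono_measure le)
  have e : (∫ p, Function.uncurry fxx p * Function.uncurry ft p ∂slab a b)
      = ∫ t in Ioc a b, ∫ x, fxx t x * ft t x := integral_prod _ k
  rw [e, ← integral_const_mul, ← integral_neg] at h
  have h2 : ∫ t in Ioc a b, -(2 * ∫ x, fxx t x * ft t x) ≤ ∫ t in Ioc a b, D t := by
    refine integral_mono_ae (k.integral_prod_left.const_mul 2).neg
      (hD.mono_set (Ioc_subset_Ioc_left ha)) ?_
    filter_upwards [S.ae_good_slab ha] with t ht using hle t (ha.trans_lt ht.1.1) ht.2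
  rw [intervalIntegral.integral_of_le hab]
  simp only [pow_two]
  linarith

lemma lθvx {t : ℝ} (ht : 0 ≤ t) : MemLp (fun x => S.θ t x * S.vx t x) 2 := by
  obtain ⟨B, -, hB⟩ := S.bdd t
  refine memLp_bdd_mul' (S.lvx t) (C := B) (by fun_prop) fun x => ?_
  rw [abs_of_pos (S.θ_pos t x)]
  exact (hB t ⟨ht, le_rfl⟩ x).2.1

lemma lθux {t : ℝ} (ht : 0 ≤ t) : MemLp (fun x => S.θ t x * S.ux t x) 2 := by
  obtain ⟨B, -, hB⟩ := S.bdd t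
  refine memLp_bdd_mul' (S.lux t) (C := B) (by fun_prop) fun x => ?_
  rw [abs_of_pos (S.θ_pos t x)]
  exact (hB t ⟨ht, le_rfl⟩ x).2.1

/-- The constant in front of the lower order terms for `u_x`. -/
noncomputable def Lu : ℝ := S.K / S.μ * (3 * ((S.μ + S.R) * S.K ^ 2) ^ 2)
/-- The constant in front of the lower order terms for `θ_x`. -/
noncomputable def Lθ : ℝ :=
  S.K / (S.κ / S.cv) * (3 * ((S.κ + S.μ + S.R) / S.cv * S.K ^ 2) ^ 2)

lemma Lu_nonneg : 0 ≤ S.Lu := by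
  have := S.K_pos; have := S.hμ; unfold Lu; positivity
lemma Lθ_nonneg : 0 ≤ S.Lθ := by
  have := S.K_pos; have := S.hκ; have := S.hcv; unfold Lθ; positivity

lemma uxx_ut_le (t x : ℝ) : -(2 * (S.uxx t x * S.ut t x)) ≤ -(S.μ / S.K * S.uxx t x ^ 2)
    + S.Lu * ((S.ux t x * S.vx t x) ^ 2 + S.θx t x ^ 2 + (S.θ t x * S.vx t x) ^ 2) := by
  have hv := S.v_pos t x
  have hμ := S.hμ
  have hR := S.hR
  have hK := S.K_pos
  have hK1 := S.hK
  have w1 := S.inv_v_le t x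
  have w2 := S.le_inv_v t x
  have hw : 0 < (S.v t x)⁻¹ := inv_pos.2 hv
  have e : S.ut t x = S.μ * (S.v t x)⁻¹ * S.uxx t x
      + (-(S.μ * (S.v t x)⁻¹ ^ 2) * (S.ux t x * S.vx t x)
        + -(S.R * (S.v t x)⁻¹) * S.θx t x + (S.R * (S.v t x)⁻¹ ^ 2) * (S.θ t x * S.vx t x)) := by
    simp only [ut]; field_simp; ring
  rw [e]
  refine (neg_two_mul_le hμ hK w2).trans ?_
  set w := (S.v t x)⁻¹
  have hw2 : w ^ 2 ≤ S.K ^ 2 := by gcongr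
  have hw1 : w ≤ S.K ^ 2 := w1.trans (by nlinarith)
  have b1 : |-(S.μ * w ^ 2)| ≤ (S.μ + S.R) * S.K ^ 2 := by
    rw [abs_neg, abs_of_pos (by positivity)]; gcongr; linarith
  have b2 : |-(S.R * w)| ≤ (S.μ + S.R) * S.K ^ 2 := by
    rw [abs_neg, abs_of_pos (by positivity)]; gcongr; linarith
  have b3 : |S.R * w ^ 2| ≤ (S.μ + S.R) * S.K ^ 2 := by
    rw [abs_of_pos (by positivity)]; gcongr; linarith
  have h := lin_comb_sq_le (a := S.ux t x * S.vx t x) (b := S.θx t x) (c := S.θ t x * S.vx t x)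
    b1 b2 b3
  have h2 := mul_le_mul_of_nonneg_left h (show 0 ≤ S.K / S.μ by positivity)
  rw [← mul_assoc] at h2
  unfold Lu
  linarith

lemma θxx_θt_le (t x : ℝ) :
    -(2 * (S.θxx t x * S.θt t x)) ≤ -(S.κ / S.cv / S.K * S.θxx t x ^ 2)
    + S.Lθ * ((S.θx t x * S.vx t x) ^ 2 + (S.ux t x * S.ux t x) ^ 2 + (S.θ t x * S.ux t x) ^ 2) := by
  have hv := S.v_pos t x
  have hμ := S.hμ
  have hκ := S.hκ
  have hR := S.hR
  have hcv := S.hcv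
  have hK := S.K_pos
  have hK1 := S.hK
  have w1 := S.inv_v_le t x
  have w2 := S.le_inv_v t x
  have hw : 0 < (S.v t x)⁻¹ := inv_pos.2 hv
  have e : S.θt t x = S.κ / S.cv * (S.v t x)⁻¹ * S.θxx t x
      + (-(S.κ / S.cv * (S.v t x)⁻¹ ^ 2) * (S.θx t x * S.vx t x)
        + (S.μ / S.cv * (S.v t x)⁻¹) * (S.ux t x * S.ux t x)
        + -(S.R / S.cv * (S.v t x)⁻¹) * (S.θ t x * S.ux t x)) := by
    simp only [θt]; field_simp; ring
  rw [e]
  refine (neg_two_mul_le (div_pos hκ hcv) hK w2).trans ?_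
  set w := (S.v t x)⁻¹
  have hw2 : w ^ 2 ≤ S.K ^ 2 := by gcongr
  have hw1 : w ≤ S.K ^ 2 := w1.trans (by nlinarith)
  have b1 : |-(S.κ / S.cv * w ^ 2)| ≤ (S.κ + S.μ + S.R) / S.cv * S.K ^ 2 := by
    rw [abs_neg, abs_of_pos (by positivity)]; gcongr; linarith
  have b2 : |S.μ / S.cv * w| ≤ (S.κ + S.μ + S.R) / S.cv * S.K ^ 2 := by
    rw [abs_of_pos (by positivity)]; gcongr; linarith
  have b3 : |-(S.R / S.cv * w)| ≤ (S.κ + S.μ + S.R) / S.cv * S.K ^ 2 := by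
    rw [abs_neg, abs_of_pos (by positivity)]; gcongr; linarith
  have h := lin_comb_sq_le (a := S.θx t x * S.vx t x) (b := S.ux t x * S.ux t x)
    (c := S.θ t x * S.ux t x) b1 b2 b3
  have h2 := mul_le_mul_of_nonneg_left h (show 0 ≤ S.K / (S.κ / S.cv) by positivity)
  rw [← mul_assoc] at h2
  unfold Lθ
  linarith

/-- Integration of a pointwise bound of the above type. -/
lemma integral_bound {p s a b c : ℝ → ℝ} {k L : ℝ} (hp : MemLp p 2) (hs : MemLp s 2)
    (ha : MemLp a 2) (hb : MemLp b 2) (hc : MemLp c 2)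
    (h : ∀ x, -(2 * (p x * s x)) ≤ -(k * p x ^ 2) + L * (a x ^ 2 + b x ^ 2 + c x ^ 2)) :
    -(2 * ∫ x, p x * s x) ≤ -(k * ∫ x, p x ^ 2)
      + L * ((∫ x, a x ^ 2) + (∫ x, b x ^ 2) + ∫ x, c x ^ 2) := by
  have i1 : Integrable fun x => -(k * p x ^ 2) := (hp.integrable_sq.const_mul k).neg
  have i2 : Integrable fun x => a x ^ 2 + b x ^ 2 := ha.integrable_sq.add hb.integrable_sq
  have i3 : Integrable fun x => a x ^ 2 + b x ^ 2 + c x ^ 2 := i2.add hc.integrable_sq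
  rw [← integral_const_mul, ← integral_neg, ← integral_const_mul, ← integral_neg,
    ← integral_add ha.integrable_sq hb.integrable_sq, ← integral_add i2 hc.integrable_sq,
    ← integral_const_mul L, ← integral_add i1 (i3.const_mul L)]
  exact integral_mono ((integrable_mul_of_memLp hp hs).const_mul 2).neg (i1.add (i3.const_mul L)) h

lemma θvx_le : ∃ C, 0 ≤ C ∧ ∀ t, 0 ≤ t →
    ∫ x, (S.θ t x * S.vx t x) ^ 2 ≤ 4 * S.P t + C * ∫ x, S.θx t x ^ 2 := by
  obtain ⟨⟨A, hA, hvx⟩, -⟩ := S.vx_bdd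
  obtain ⟨B, hB, hθ⟩ := S.θ_L2_bdd
  refine ⟨4 * B * A, by positivity, fun t ht => ?_⟩
  set X := ∫ x, S.θx t x ^ 2 with hX
  have hX0 : 0 ≤ X := integral_nonneg fun x => sq_nonneg _
  have i1 := (S.int_P ht).const_mul 4
  have i2 := (S.lvx t).integrable_sq.const_mul (4 * B * X)
  calc ∫ x, (S.θ t x * S.vx t x) ^ 2
      ≤ ∫ x, (4 * (S.θ t x * S.vx t x * S.vx t x) + 4 * B * X * S.vx t x ^ 2) := by
        refine integral_mono (S.lθvx ht).integrable_sq (i1.add i2) fun x => ?_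
        have h := agmon (fun x => (S.dθ t x).sub_const 1) (S.lθ t) (S.lθx t) x
        have h2 : (S.θ t x - 1) ^ 4 ≤ 4 * B * X := h.trans (by
          have := hθ t ht
          gcongr)
        have hp := S.θ_pos t x
        have h3 : S.θ t x ^ 2 ≤ 4 * S.θ t x + (S.θ t x - 1) ^ 4 := by
          rcases le_total (S.θ t x) 4 with h4 | h4
          · have : 0 ≤ (S.θ t x - 1) ^ 4 := by positivity
            nlinarith
          · have h5 : S.θ t x ≤ (S.θ t x - 1) ^ 2 := by nlinarith
            have h6 : S.θ t x ^ 2 ≤ ((S.θ t x - 1) ^ 2) ^ 2 := by gcongr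
            linarith [show ((S.θ t x - 1) ^ 2) ^ 2 = (S.θ t x - 1) ^ 4 by ring]
        have h7 : S.θ t x ^ 2 * S.vx t x ^ 2 ≤ (4 * S.θ t x + 4 * B * X) * S.vx t x ^ 2 := by
          gcongr; linarith
        simp only
        linarith [show (S.θ t x * S.vx t x) ^ 2 = S.θ t x ^ 2 * S.vx t x ^ 2 by ring]
    _ = 4 * S.P t + 4 * B * X * ∫ x, S.vx t x ^ 2 := by
        rw [integral_add i1 i2, integral_const_mul, integral_const_mul]; rfl
    _ ≤ 4 * S.P t + 4 * B * X * A := by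
        have := hvx t ht
        gcongr
    _ = _ := by ring

lemma W_int (T : ℝ) : IntegrableOn (fun t => ∫ x, S.uxx t x ^ 2) (Ioc 0 T) :=
  (S.suxx T).integrable_sq.integral_prod_left

/-- Dissipation inequality for `‖u_x‖²`, with a globally integrable source. -/
lemma ux_increment : ∃ G : ℝ → ℝ, (∀ t, 0 ≤ G t) ∧ IntegrableOn G (Ioi 0) ∧
    ∀ a b, 0 ≤ a → a ≤ b → ∫ x, S.ux b x ^ 2 ≤ (∫ x, S.ux a x ^ 2) +
      ∫ t in a..b, (G t - S.μ / (2 * S.K) * ∫ x, S.uxx t x ^ 2) := by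
  obtain ⟨⟨A, hA, hvx⟩, hP⟩ := S.vx_bdd
  obtain ⟨C, hC, hθvx⟩ := S.θvx_le
  have hμ := S.hμ
  have hK := S.K_pos
  have hL := S.Lu_nonneg
  -- the weight in Agmon's inequality is small enough for `u_xx` to be absorbed
  set ε := S.μ / (2 * S.K) / (S.Lu * A + 1) with hε
  have hε0 : 0 < ε := by positivity
  have hεL : S.Lu * (ε * A) ≤ S.μ / (2 * S.K) := by
    have h1 : ε * (S.Lu * A + 1) = S.μ / (2 * S.K) := div_mul_cancel₀ _ (by positivity)
    linarith
  set G := fun t => S.Lu * (ε⁻¹ * A * (∫ x, S.ux t x ^ 2) + (1 + C) * (∫ x, S.θx t x ^ 2)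
    + 4 * S.P t) with hG
  have iG : IntegrableOn G (Ioi 0) :=
    (((S.ux_integrable.const_mul _).add (S.θx_integrable.const_mul _)).add
      (hP.const_mul _)).const_mul _
  refine ⟨G, fun t => ?_, iG, fun a b ha hab => ?_⟩
  · have h1 := S.P_nonneg t
    have h2 : 0 ≤ ∫ x, S.θx t x ^ 2 := integral_nonneg fun x => sq_nonneg _
    have h3 : 0 ≤ ∫ x, S.ux t x ^ 2 := integral_nonneg fun x => sq_nonneg _
    simp only [hG]; positivity
  · refine S.grad_increment (f := S.u) (fxx := S.uxx) (ft := S.ut) ha hab S.mu S.muxx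
      (by unfold Function.uncurry; fun_prop) S.mux S.du S.dux S.cuxx S.ctu
      (fun x t ht => S.tu x t ht) S.lux (S.strip_ux b) (S.suxx b) (S.strip_ut b)
      ((iG.mono_set Ioc_subset_Ioi_self).sub ((S.W_int b).const_mul _)) fun t ht g => ?_
    have h := integral_bound g.1 (g.lut ht.le)
      (memLp_mul_of_deriv (S.dux t) (S.lux t) g.1 (S.lvx t)).1 (S.lθx t) (S.lθvx ht.le)
      (S.uxx_ut_le t)
    have h1 := integral_mul_sq_le (S.dux t) (S.lux t) g.1 (S.lvx t) hε0
    have h2 := hθvx t ht.le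
    have hW : 0 ≤ ∫ x, S.uxx t x ^ 2 := integral_nonneg fun x => sq_nonneg _
    have hZ : 0 ≤ ∫ x, S.ux t x ^ 2 := integral_nonneg fun x => sq_nonneg _
    have h3 : (ε * (∫ x, S.uxx t x ^ 2) + ε⁻¹ * ∫ x, S.ux t x ^ 2) * (∫ x, S.vx t x ^ 2)
        ≤ (ε * (∫ x, S.uxx t x ^ 2) + ε⁻¹ * ∫ x, S.ux t x ^ 2) * A :=
      mul_le_mul_of_nonneg_left (hvx t ht.le) (by positivity)
    have h4 := mul_le_mul_of_nonneg_left (add_le_add (add_le_add (h1.trans h3)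
      (le_refl (∫ x, S.θx t x ^ 2))) h2) hL
    have h5 := mul_le_mul_of_nonneg_right hεL hW
    have h6 : S.μ / S.K * (∫ x, S.uxx t x ^ 2) = 2 * (S.μ / (2 * S.K) * ∫ x, S.uxx t x ^ 2) := by
      field_simp
    simp only [hG]
    linarith

/-- Decay of `‖u_x‖²`, with its uniform bound and the space-time integrability of `u_xx²`. -/
lemma ux_decay : Tendsto (fun t => ∫ x, S.ux t x ^ 2) atTop (nhds 0) ∧
    (∃ C, 0 ≤ C ∧ ∀ t, 0 ≤ t → ∫ x, S.ux t x ^ 2 ≤ C) ∧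
    IntegrableOn (fun t => ∫ x, S.uxx t x ^ 2) (Ioi 0) := by
  obtain ⟨G, G0, iG, hinc⟩ := S.ux_increment
  have hμ := S.hμ
  have hK := S.K_pos
  set c := S.μ / (2 * S.K)
  have hc : 0 < c := by positivity
  have n1 : ∀ t, 0 ≤ ∫ x, S.ux t x ^ 2 := fun t => integral_nonneg fun x => sq_nonneg _
  have n2 : ∀ t, 0 ≤ ∫ x, S.uxx t x ^ 2 := fun t => integral_nonneg fun x => sq_nonneg _
  have key : ∀ a b, 0 ≤ a → a ≤ b → (∫ x, S.ux b x ^ 2) + c * (∫ t in a..b, ∫ x, S.uxx t x ^ 2)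
      ≤ (∫ x, S.ux a x ^ 2) + ∫ t in a..b, G t := fun a b ha hab => by
    have h := hinc a b ha hab
    have i1 : IntervalIntegrable G volume a b :=
      (intervalIntegrable_iff_integrableOn_Ioc_of_le hab).2
        (iG.mono_set (Ioc_subset_Ioi_self.trans (Ioi_subset_Ioi ha)))
    have i2 : IntervalIntegrable (fun t => ∫ x, S.uxx t x ^ 2) volume a b :=
      (intervalIntegrable_iff_integrableOn_Ioc_of_le hab).2
        ((S.W_int b).mono_set (Ioc_subset_Ioc_left ha))
    rw [intervalIntegral.integral_sub i1 (i2.const_mul c),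
      intervalIntegral.integral_const_mul] at h
    linarith
  have n3 : ∀ a b, a ≤ b → 0 ≤ c * ∫ t in a..b, ∫ x, S.uxx t x ^ 2 := fun a b hab =>
    mul_nonneg hc.le (intervalIntegral.integral_nonneg hab fun t _ => n2 t)
  have hT : ∀ T, 0 ≤ T → (∫ t in (0 : ℝ)..T, G t) ≤ ∫ t in Ioi 0, G t := fun T hT => by
    rw [intervalIntegral.integral_of_le hT]
    exact setIntegral_mono_set iG (ae_of_all _ G0) (ae_of_all _ Ioc_subset_Ioi_self)
  have nG : 0 ≤ ∫ t in Ioi 0, G t := integral_nonneg G0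
  refine ⟨decay_of_increment n1 S.ux_integrable iG G0 fun a b ha hab => ?_,
    ⟨(∫ x, S.ux 0 x ^ 2) + ∫ t in Ioi 0, G t, add_nonneg (n1 0) nG, fun t ht => ?_⟩,
    integrableOn_Ioi_of_bdd (C := c⁻¹ * ((∫ x, S.ux 0 x ^ 2) + ∫ t in Ioi 0, G t)) n2 S.W_int
      fun T hT0 => ?_⟩
  · linarith [key a b ha hab, n3 a b hab]
  · linarith [key 0 t le_rfl ht, n3 0 t ht, hT t ht]
  · rw [inv_mul_eq_div, le_div_iff₀ hc]
    linarith [key 0 T le_rfl hT0, hT T hT0, n1 T]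

/-- Decay of `‖θ_x‖²`. It uses the bounds for `u_x` and `u_xx` obtained in `ux_decay`, since
`u_x²` is a source in the energy equation. -/
lemma θx_decay : Tendsto (fun t => ∫ x, S.θx t x ^ 2) atTop (nhds 0) := by
  obtain ⟨⟨A, hA, hvx⟩, -⟩ := S.vx_bdd
  obtain ⟨B, hB, hθ⟩ := S.θ_L2_bdd
  obtain ⟨-, ⟨Z, hZ, hux⟩, hW⟩ := S.ux_decay
  have hκ := S.hκ
  have hcv := S.hcv
  have hK := S.K_pos
  have hL := S.Lθ_nonneg
  set k := S.κ / S.cv / S.K with hk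
  have hk0 : 0 < k := by positivity
  -- the weight in Agmon's inequality is small enough for `θ_xx` to be absorbed
  set ε := k / (S.Lθ * A + 1) with hε
  have hε0 : 0 < ε := by positivity
  have hεL : S.Lθ * (ε * A) ≤ k := by
    have h1 : ε * (S.Lθ * A + 1) = k := div_mul_cancel₀ _ (by positivity)
    linarith
  set G := fun t => S.Lθ * ((ε⁻¹ * A + 2 * Z) * (∫ x, S.θx t x ^ 2) + Z * (∫ x, S.uxx t x ^ 2)
    + (Z + 2 + 2 * B) * (∫ x, S.ux t x ^ 2)) with hG
  have iG : IntegrableOn G (Ioi 0) :=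
    (((S.θx_integrable.const_mul _).add (hW.const_mul _)).add
      (S.ux_integrable.const_mul _)).const_mul _
  have n1 : ∀ t, 0 ≤ ∫ x, S.ux t x ^ 2 := fun t => integral_nonneg fun x => sq_nonneg _
  have n2 : ∀ t, 0 ≤ ∫ x, S.uxx t x ^ 2 := fun t => integral_nonneg fun x => sq_nonneg _
  have n3 : ∀ t, 0 ≤ ∫ x, S.θx t x ^ 2 := fun t => integral_nonneg fun x => sq_nonneg _
  have n4 : ∀ t, 0 ≤ ∫ x, S.θxx t x ^ 2 := fun t => integral_nonneg fun x => sq_nonneg _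
  have G0 : ∀ t, 0 ≤ G t := fun t => by
    have := n1 t; have := n2 t; have := n3 t
    simp only [hG]; positivity
  refine decay_of_increment n3 S.θx_integrable iG G0 fun a b ha hab => ?_
  refine S.grad_increment (f := S.θ) (fxx := S.θxx) (ft := S.θt) ha hab S.mθ S.mθxx
    (by unfold Function.uncurry; fun_prop) S.mθx S.dθ S.dθx S.cθxx S.ctθ
    (fun x t ht => S.tθ x t ht) S.lθx (S.strip_θx b) (S.sθxx b) (S.strip_θt b)
    (iG.mono_set Ioc_subset_Ioi_self) fun t ht g => ?_
  have h := integral_bound g.2 (g.lθt ht.le)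
    (memLp_mul_of_deriv (S.dθx t) (S.lθx t) g.2 (S.lvx t)).1
    (memLp_mul_of_deriv (S.dux t) (S.lux t) g.1 (S.lux t)).1 (S.lθux ht.le) (S.θxx_θt_le t)
  have m1 := n1 t
  have m2 := n2 t
  have m3 := n3 t
  have m4 := n4 t
  have h1 := integral_mul_sq_le (S.dθx t) (S.lθx t) g.2 (S.lvx t) hε0
  have h1' : (ε * (∫ x, S.θxx t x ^ 2) + ε⁻¹ * ∫ x, S.θx t x ^ 2) * (∫ x, S.vx t x ^ 2)
      ≤ (ε * (∫ x, S.θxx t x ^ 2) + ε⁻¹ * ∫ x, S.θx t x ^ 2) * A :=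
    mul_le_mul_of_nonneg_left (hvx t ht.le) (by positivity)
  have h2 := (memLp_mul_of_deriv (S.dux t) (S.lux t) g.1 (S.lux t)).2
  have h2' : ((∫ x, S.uxx t x ^ 2) + ∫ x, S.ux t x ^ 2) * (∫ x, S.ux t x ^ 2)
      ≤ ((∫ x, S.uxx t x ^ 2) + ∫ x, S.ux t x ^ 2) * Z :=
    mul_le_mul_of_nonneg_left (hux t ht.le) (by positivity)
  have h3 : ∫ x, (S.θ t x * S.ux t x) ^ 2
      ≤ 2 * (∫ x, S.ux t x ^ 2) + 2 * (Z * (∫ x, S.θx t x ^ 2) + B * ∫ x, S.ux t x ^ 2) := by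
    obtain ⟨l1, l2⟩ := memLp_mul_of_deriv (fun x => (S.dθ t x).sub_const 1) (S.lθ t) (S.lθx t)
      (S.lux t)
    have i1 := (S.lux t).integrable_sq.const_mul 2
    have i2 := l1.integrable_sq.const_mul 2
    have s1 : ∫ x, (S.θ t x * S.ux t x) ^ 2
        ≤ ∫ x, (2 * S.ux t x ^ 2 + 2 * ((S.θ t x - 1) * S.ux t x) ^ 2) := by
      refine integral_mono (S.lθux ht.le).integrable_sq (i1.add i2) fun x => ?_
      have := mul_nonneg (sq_nonneg (S.θ t x - 2)) (sq_nonneg (S.ux t x))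
      simp only
      linarith
    rw [integral_add i1 i2, integral_const_mul, integral_const_mul] at s1
    have s2 := mul_le_mul_of_nonneg_left (hux t ht.le) m3
    have s3 := mul_le_mul_of_nonneg_right (hθ t ht.le) m1
    linarith
  have h4 := mul_le_mul_of_nonneg_left (add_le_add (add_le_add (h1.trans h1') (h2.trans h2')) h3) hL
  have h5 := mul_le_mul_of_nonneg_right hεL m4
  simp only [hG]
  linarith

end GasFlow

/-! ### From classical solutions to `GasFlow` -/

lemma eLpNorm_two_eq {f : ℝ → ℝ} (hf : MemLp f 2) :
    eLpNorm f 2 = ENNReal.ofReal √(∫ x, f x ^ 2) := by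
  rw [hf.eLpNorm_eq_integral_rpow_norm (by norm_num) (by norm_num), Real.sqrt_eq_rpow]
  norm_num

lemma integral_sq_le_of_eLpNorm_le {f : ℝ → ℝ} {B : ℝ} (hf : MemLp f 2)
    (h : eLpNorm f 2 ≤ ENNReal.ofReal B) : ∫ x, f x ^ 2 ≤ B ^ 2 := by
  rw [eLpNorm_two_eq hf] at h
  have n : 0 ≤ ∫ x, f x ^ 2 := integral_nonneg fun x => sq_nonneg _
  rcases le_total B 0 with hB | hB
  · rw [ENNReal.ofReal_of_nonpos hB, nonpos_iff_eq_zero, ENNReal.ofReal_eq_zero,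
      Real.sqrt_le_iff] at h
    nlinarith [sq_nonneg B]
  · exact (Real.sqrt_le_left hB).1 ((ENNReal.ofReal_le_ofReal_iff hB).1 h)

lemma sq_eLpNorm_two {α : Type*} [MeasurableSpace α] {ν : Measure α} (f : α → ℝ) :
    eLpNorm f 2 ν ^ 2 = ∫⁻ x, ‖f x‖ₑ ^ 2 ∂ν := by
  have h := eLpNorm_nnreal_pow_eq_lintegral (f := f) (μ := ν) (p := 2) (by norm_num)
  simpa using h

/-- Tonelli: square integrability on a strip from time integrability of the squared norms. -/
lemma memLp_strip_of_lintegral {T : ℝ} {f : ℝ → ℝ → ℝ} (hm : Measurable (Function.uncurry f))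
    (h : ∫⁻ t in Ioc 0 T, eLpNorm (f t) 2 ^ 2 < ⊤) : MemLp (Function.uncurry f) 2 (strip T) := by
  refine ⟨hm.aestronglyMeasurable, ?_⟩
  have e : eLpNorm (Function.uncurry f) 2 (strip T) ^ 2 < ⊤ := by
    rw [sq_eLpNorm_two, lintegral_prod _ (hm.enorm.pow_const 2).aemeasurable]
    simpa only [sq_eLpNorm_two, Function.uncurry_apply_pair] using h
  by_contra hc
  rw [not_lt, top_le_iff] at hc
  rw [hc] at e
  simp at e

lemma meas_of_deriv {f f' : ℝ → ℝ → ℝ} (mf : Measurable (Function.uncurry f))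
    (hd : ∀ t x, HasDerivAt (f t) (f' t x) x) : Measurable (Function.uncurry f') :=
  measurable_of_tendsto_metrizable (fun n => meas_dq mf (hn n))
    (tendsto_pi_nhds.2 fun p => dq_tendsto (hd p.1 p.2))

lemma contDiff_two {f : ℝ → ℝ} (h : ContDiff ℝ 2 f) : (∀ x, HasDerivAt f (deriv f x) x) ∧
    (∀ x, HasDerivAt (deriv f) (deriv (deriv f) x) x) ∧ Continuous (deriv f) ∧
    Continuous (deriv (deriv f)) := by
  have h1 : ContDiff ℝ (0 + 1) (deriv f) := by
    have : ContDiff ℝ (1 + 1) f := by norm_num; exact h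
    simpa using this.deriv'
  exact ⟨fun x => (h.differentiable (by norm_num) x).hasDerivAt,
    fun x => (h1.differentiable (by norm_num) x).hasDerivAt, h1.continuous, h1.deriv'.continuous⟩

/-- A positive continuous function with limit `1` at infinity is bounded below. -/
lemma exists_lower_bound {f : ℝ → ℝ} (hc : Continuous f) (hp : ∀ x, 0 < f x)
    (hl : Tendsto f (cocompact ℝ) (nhds 1)) : ∃ c, 0 < c ∧ ∀ x, c ≤ f x := by
  have h1 : ∀ᶠ x in cocompact ℝ, 1 / 2 < f x := hl.eventually (lt_mem_nhds (by norm_num))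
  obtain ⟨s, hs, hsub⟩ := mem_cocompact.1 h1
  rcases s.eq_empty_or_nonempty with rfl | hne
  · refine ⟨1 / 2, by norm_num, fun x => ?_⟩
    have : x ∈ {x | 1 / 2 < f x} := hsub (by simp)
    exact le_of_lt this
  · obtain ⟨y, -, hmin⟩ := hs.exists_isMinOn hne hc.continuousOn
    refine ⟨min (f y) (1 / 2), lt_min (hp y) (by norm_num), fun x => ?_⟩
    by_cases hx : x ∈ s
    · exact (min_le_left _ _).trans (hmin hx)
    · have : x ∈ {x | 1 / 2 < f x} := hsub hx
      exact (min_le_right _ _).trans (le_of_lt this)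

lemma continuous_extend {g : ℝ → ℝ} (h : ∀ t, 0 ≤ t → DifferentiableAt ℝ g t) :
    Continuous fun t => g (max t 0) := by
  refine continuous_iff_continuousAt.2 fun t => ?_
  exact ContinuousAt.comp (f := fun t : ℝ => max t 0) (g := g)
    (h _ (le_max_right _ _)).continuousAt (by fun_prop)

lemma hasDerivAt_extend {g : ℝ → ℝ} {g' t : ℝ} (ht : 0 < t) (h : DifferentiableAt ℝ g t)
    (hg : deriv g t = g') : HasDerivAt (fun s => g (max s 0)) g' t := by
  rw [← hg]
  refine h.hasDerivAt.congr_of_eventuallyEq ?_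
  filter_upwards [lt_mem_nhds ht] with s hs
  rw [max_eq_left hs.le]

lemma le_tsum_helper {a b c d e f B : ENNReal} (h : a + b + (c + d) + (e + f) ≤ B) :
    a ≤ B ∧ b ≤ B ∧ c ≤ B ∧ d ≤ B ∧ e ≤ B ∧ f ≤ B := by
  refine ⟨?_, ?_, ?_, ?_, ?_, ?_⟩ <;> refine le_trans ?_ h
  · exact (le_self_add.trans le_self_add).trans le_self_add
  · exact (le_add_self.trans le_self_add).trans le_self_add
  · exact (le_self_add.trans le_add_self).trans le_self_add
  · exact (le_add_self.trans le_add_self).trans le_self_add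
  · exact le_self_add.trans le_add_self
  · exact le_add_self.trans le_add_self

section conversion
variable {μ κ R cv K : ℝ} {v u θ : ℝ → ℝ → ℝ}

lemma solution_H1 (hsol : IsClassicalSolution μ κ R cv v u θ) {T : ℝ} (hT : 0 ≤ T) :
    ∃ B, ∀ t ∈ Icc 0 T, eLpNorm (fun x => v x t - 1) 2 ≤ ENNReal.ofReal B ∧
      eLpNorm (deriv fun x => v x t) 2 ≤ ENNReal.ofReal B ∧
      eLpNorm (fun x => u x t) 2 ≤ ENNReal.ofReal B ∧
      eLpNorm (deriv fun x => u x t) 2 ≤ ENNReal.ofReal B ∧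
      eLpNorm (fun x => θ x t - 1) 2 ≤ ENNReal.ofReal B ∧
      eLpNorm (deriv fun x => θ x t) 2 ≤ ENNReal.ofReal B := by
  obtain ⟨B, hB⟩ := hsol.reg_H1 T hT
  refine ⟨B, fun t ht => ?_⟩
  have h := hB t ht
  simp only [H1, L2, deriv_sub_const_fun] at h
  exact le_tsum_helper h

lemma solution_memLp {f : ℝ → ℝ} {B : ℝ} (hc : Continuous f)
    (h : eLpNorm f 2 ≤ ENNReal.ofReal B) : MemLp f 2 :=
  ⟨hc.aestronglyMeasurable, h.trans_lt ENNReal.ofReal_lt_top⟩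

lemma solution_uxx (hsol : IsClassicalSolution μ κ R cv v u θ)
    (mm : Measurable (Function.uncurry fun t => deriv (deriv fun x => u x (max t 0)))) (T : ℝ) :
    MemLp (Function.uncurry fun t => deriv (deriv fun x => u x (max t 0))) 2 (strip T) := by
  refine memLp_strip_of_lintegral mm ?_
  rcases le_or_gt T 0 with hT | hT
  · rw [Ioc_eq_empty_of_le hT, setLIntegral_empty]
    exact ENNReal.zero_lt_top
  · refine lt_of_le_of_lt ?_ (hsol.reg_H2 T hT)
    refine le_trans ?_ (lintegral_mono_set Ioc_subset_Icc_self)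
    refine setLIntegral_mono' measurableSet_Ioc fun t ht => ?_
    rw [max_eq_left ht.1.le]
    have e : eLpNorm (deriv (deriv fun x => u x t)) 2 ≤ H2 fun x => u x t := by
      unfold H2 L2
      exact le_add_self
    exact (pow_le_pow_left' e 2).trans le_self_add

lemma solution_θxx (hsol : IsClassicalSolution μ κ R cv v u θ)
    (mm : Measurable (Function.uncurry fun t => deriv (deriv fun x => θ x (max t 0)))) (T : ℝ) :
    MemLp (Function.uncurry fun t => deriv (deriv fun x => θ x (max t 0))) 2 (strip T) := by
  refine memLp_strip_of_lintegral mm ?_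
  rcases le_or_gt T 0 with hT | hT
  · rw [Ioc_eq_empty_of_le hT, setLIntegral_empty]
    exact ENNReal.zero_lt_top
  · refine lt_of_le_of_lt ?_ (hsol.reg_H2 T hT)
    refine le_trans ?_ (lintegral_mono_set Ioc_subset_Icc_self)
    refine setLIntegral_mono' measurableSet_Ioc fun t ht => ?_
    rw [max_eq_left ht.1.le]
    have e : eLpNorm (deriv (deriv fun x => θ x t)) 2 ≤ H2 fun x => θ x t - 1 := by
      simp only [H2, L2, deriv_sub_const_fun]
      exact le_add_self
    exact (pow_le_pow_left' e 2).trans le_add_self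

/-- The momentum equation with the spatial derivatives of the quotients expanded. -/
lemma solution_ut (hsol : IsClassicalSolution μ κ R cv v u θ) (x : ℝ) {t : ℝ} (ht : 0 ≤ t) :
    deriv (fun s => u x s) t =
      μ * (deriv (deriv fun y => u y t) x / v x t
          - deriv (fun y => u y t) x * deriv (fun y => v y t) x / v x t ^ 2)
        - R * (deriv (fun y => θ y t) x / v x t
          - θ x t * deriv (fun y => v y t) x / v x t ^ 2) := by
  have a1 := contDiff_two (hsol.smooth_x_v t ht)
  have a2 := contDiff_two (hsol.smooth_x_u t ht)
  have a3 := contDiff_two (hsol.smooth_x_θ t ht)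
  have hv := (hsol.v_pos x t ht).ne'
  have h := hsol.eq_momentum x t ht
  have e1 : pdx (fun y s => R * θ y s / v y s) x t = _ :=
    (((a3.1 x).const_mul R).div (a1.1 x) hv).deriv
  have e2 : pdx (fun y s => pdx u y s / v y s) x t = _ :=
    ((a2.2.1 x).div (a1.1 x) hv).deriv
  rw [e1, e2, pdt] at h
  rw [eq_sub_of_add_eq h]
  field_simp

/-- The energy equation with the spatial derivative of the heat flux expanded. -/
lemma solution_θt (hcv : 0 < cv) (hsol : IsClassicalSolution μ κ R cv v u θ) (x : ℝ) {t : ℝ}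
    (ht : 0 ≤ t) :
    deriv (fun s => θ x s) t =
      (κ * (deriv (deriv fun y => θ y t) x / v x t
          - deriv (fun y => θ y t) x * deriv (fun y => v y t) x / v x t ^ 2)
        + μ * deriv (fun y => u y t) x ^ 2 / v x t
        - R * θ x t / v x t * deriv (fun y => u y t) x) / cv := by
  have a1 := contDiff_two (hsol.smooth_x_v t ht)
  have a3 := contDiff_two (hsol.smooth_x_θ t ht)
  have hv := (hsol.v_pos x t ht).ne'
  have h := hsol.eq_energy x t ht
  have e2 : pdx (fun y s => pdx θ y s / v y s) x t = _ :=
    ((a3.2.1 x).div (a1.1 x) hv).deriv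
  rw [e2, pdt, pdx] at h
  rw [eq_div_iff hcv.ne', mul_comm, eq_sub_of_add_eq h]
  field_simp

/-- Every classical solution with bounded volume, frozen at its initial data for negative times,
is a `GasFlow`. -/
lemma exists_gasFlow (hμ : 0 < μ) (hκ : 0 < κ) (hR : 0 < R) (hcv : 0 < cv) (hK : 1 ≤ K)
    (hsol : IsClassicalSolution μ κ R cv v u θ) (hvol : VolBounded K v) :
    ∃ S : GasFlow, ∀ t, 0 ≤ t → S.ux t = (fun x => pdx u x t) ∧ S.θx t = fun x => pdx θ x t := by
  have τ0 : ∀ t : ℝ, 0 ≤ max t 0 := fun t => le_max_right _ _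
  have cv' := fun t => contDiff_two (hsol.smooth_x_v _ (τ0 t))
  have cu' := fun t => contDiff_two (hsol.smooth_x_u _ (τ0 t))
  have cθ' := fun t => contDiff_two (hsol.smooth_x_θ _ (τ0 t))
  have ctv := fun x => continuous_extend (hsol.smooth_t_v x)
  have ctu := fun x => continuous_extend (hsol.smooth_t_u x)
  have ctθ := fun x => continuous_extend (hsol.smooth_t_θ x)
  have mv : Measurable (Function.uncurry fun t x => v x (max t 0)) :=
    measurable_uncurry_of_continuous_of_measurable ctv
      fun t => (hsol.smooth_x_v _ (τ0 t)).continuous.measurable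
  have mu : Measurable (Function.uncurry fun t x => u x (max t 0)) :=
    measurable_uncurry_of_continuous_of_measurable ctu
      fun t => (hsol.smooth_x_u _ (τ0 t)).continuous.measurable
  have mθ : Measurable (Function.uncurry fun t x => θ x (max t 0)) :=
    measurable_uncurry_of_continuous_of_measurable ctθ
      fun t => (hsol.smooth_x_θ _ (τ0 t)).continuous.measurable
  have mvx := meas_of_deriv mv fun t => (cv' t).1
  have mux := meas_of_deriv mu fun t => (cu' t).1
  have mθx := meas_of_deriv mθ fun t => (cθ' t).1
  have muxx := meas_of_deriv mux fun t => (cu' t).2.1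
  have mθxx := meas_of_deriv mθx fun t => (cθ' t).2.1
  have bd : ∀ t : ℝ, _ := fun t => (solution_H1 hsol (τ0 t)).imp fun B h => h (max t 0) ⟨τ0 t, le_rfl⟩
  have lv : ∀ t, MemLp (fun x => v x (max t 0) - 1) 2 := fun t => by
    obtain ⟨B, h⟩ := bd t
    exact solution_memLp ((hsol.smooth_x_v _ (τ0 t)).continuous.sub continuous_const) h.1
  have lvx : ∀ t, MemLp (deriv fun x => v x (max t 0)) 2 := fun t => by
    obtain ⟨B, h⟩ := bd t
    exact solution_memLp (cv' t).2.2.1 h.2.1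
  have lu : ∀ t, MemLp (fun x => u x (max t 0)) 2 := fun t => by
    obtain ⟨B, h⟩ := bd t
    exact solution_memLp (hsol.smooth_x_u _ (τ0 t)).continuous h.2.2.1
  have lux : ∀ t, MemLp (deriv fun x => u x (max t 0)) 2 := fun t => by
    obtain ⟨B, h⟩ := bd t
    exact solution_memLp (cu' t).2.2.1 h.2.2.2.1
  have lθ : ∀ t, MemLp (fun x => θ x (max t 0) - 1) 2 := fun t => by
    obtain ⟨B, h⟩ := bd t
    exact solution_memLp ((hsol.smooth_x_θ _ (τ0 t)).continuous.sub continuous_const) h.2.2.2.2.1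
  have lθx : ∀ t, MemLp (deriv fun x => θ x (max t 0)) 2 := fun t => by
    obtain ⟨B, h⟩ := bd t
    exact solution_memLp (cθ' t).2.2.1 h.2.2.2.2.2
  let S : GasFlow :=
    { μ := μ, κ := κ, R := R, cv := cv, K := K
      v := fun t x => v x (max t 0), u := fun t x => u x (max t 0), θ := fun t x => θ x (max t 0)
      vx := fun t => deriv fun x => v x (max t 0)
      ux := fun t => deriv fun x => u x (max t 0)
      θx := fun t => deriv fun x => θ x (max t 0)
      uxx := fun t => deriv (deriv fun x => u x (max t 0))
      θxx := fun t => deriv (deriv fun x => θ x (max t 0))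
      hμ := hμ, hκ := hκ, hR := hR, hcv := hcv, hK := hK
      v_lb := fun t x => (hvol x _ (τ0 t)).1
      v_ub := fun t x => (hvol x _ (τ0 t)).2
      θ_pos := fun t x => hsol.θ_pos x _ (τ0 t)
      θ_lb := fun t => exists_lower_bound (hsol.smooth_x_θ _ (τ0 t)).continuous
        (fun x => hsol.θ_pos x _ (τ0 t)) (hsol.farfield_θ _ (τ0 t))
      dv := fun t => (cv' t).1, du := fun t => (cu' t).1, dθ := fun t => (cθ' t).1
      dux := fun t => (cu' t).2.1, dθx := fun t => (cθ' t).2.1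
      cvx := fun t => (cv' t).2.2.1, cuxx := fun t => (cu' t).2.2.2, cθxx := fun t => (cθ' t).2.2.2
      ctv := ctv, ctu := ctu, ctθ := ctθ
      tv := fun x t ht => by
        refine hasDerivAt_extend ht (hsol.smooth_t_v x t ht.le) ?_
        rw [max_eq_left ht.le]
        exact hsol.eq_mass x t ht.le
      tu := fun x t ht => by
        refine hasDerivAt_extend ht (hsol.smooth_t_u x t ht.le) ?_
        rw [max_eq_left ht.le]
        exact solution_ut hsol x ht.le
      tθ := fun x t ht => by
        refine hasDerivAt_extend ht (hsol.smooth_t_θ x t ht.le) ?_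
        rw [max_eq_left ht.le]
        exact solution_θt hcv hsol x ht.le
      mv := mv, mu := mu, mθ := mθ, mvx := mvx, mux := mux, mθx := mθx, muxx := muxx
      mθxx := mθxx
      lv := lv, lu := lu, lθ := lθ, lvx := lvx, lux := lux, lθx := lθx
      h1 := fun T => by
        obtain ⟨B, hB⟩ := solution_H1 hsol (τ0 T)
        refine ⟨B ^ 2, fun t ht => ?_⟩
        obtain ⟨b1, b2, b3, b4, b5, b6⟩ := hB (max t 0) ⟨τ0 t, max_le_max ht.2 le_rfl⟩
        exact ⟨integral_sq_le_of_eLpNorm_le (lv t) b1, integral_sq_le_of_eLpNorm_le (lu t) b3,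
          integral_sq_le_of_eLpNorm_le (lθ t) b5, integral_sq_le_of_eLpNorm_le (lvx t) b2,
          integral_sq_le_of_eLpNorm_le (lux t) b4, integral_sq_le_of_eLpNorm_le (lθx t) b6⟩
      suxx := solution_uxx hsol muxx
      sθxx := solution_θxx hsol mθxx }
  refine ⟨S, fun t ht => ⟨?_, ?_⟩⟩
  · change (deriv fun x => u x (max t 0)) = _
    rw [max_eq_left ht]; rfl
  · change (deriv fun x => θ x (max t 0)) = _
    rw [max_eq_left ht]; rfl

end conversion

lemma tendsto_eLpNorm {f : ℝ → ℝ → ℝ} (hf : ∀ t, MemLp (f t) 2)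
    (h : Tendsto (fun t => ∫ x, f t x ^ 2) atTop (nhds 0)) :
    Tendsto (fun t => eLpNorm (f t) 2) atTop (nhds 0) := by
  simp only [eLpNorm_two_eq (hf _)]
  have h2 := ENNReal.tendsto_ofReal ((Real.continuous_sqrt.tendsto 0).comp h)
  simpa using h2

/-- decay of `‖u_x‖_{L²} + ‖θ_x‖_{L²}` as `t → ∞`. -/
theorem ux_thetax_decay
    (μ κ R cv M m K : ℝ) (hμ : 0 < μ) (hκ : 0 < κ) (hR : 0 < R) (hcv : 0 < cv)
    (hM : 0 < M) (hm : 0 < m) (hK : 1 ≤ K)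
    (v u θ : ℝ → ℝ → ℝ)
    (hsol : IsClassicalSolution μ κ R cv v u θ)
    (hinit : InitBounded M m v u θ)
    (hvol : VolBounded K v) :
    Tendsto (fun t => L2 (fun x => pdx u x t) + L2 (fun x => pdx θ x t))
      atTop (nhds 0) := by
  obtain ⟨S, hS⟩ := exists_gasFlow hμ hκ hR hcv hK hsol hvol
  have h := (tendsto_eLpNorm S.lux S.ux_decay.1).add (tendsto_eLpNorm S.lθx S.θx_decay)
  rw [add_zero] at h
  refine h.congr' ?_
  filter_upwards [eventually_ge_atTop 0] with t ht
  rw [(hS t ht).1, (hS t ht).2, L2, L2]
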